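/- Let m ∈ ℝ, t ∈ [0,1] and ℏ ∈ (0,1]. For every amplitude a ∈ BS^m_{f,t}(ℝ^{3n}) there exists a symbol b^t ∈ S^m_f(ℝ^{2n}) such that Op_ℏ(a)u = Op^t_ℏ(b^t)u for every u ∈ C_c^∞(ℝⁿ). Moreover, the map a ↦ b^t is linear and continuous: for every N ∈ ℕ there exist C > 0 and N' ∈ ℕ, independent of a and of ℏ ∈ (0,1], such that |b^t|_{S^m_f, N} ≤ C |a|_{BS^m_{f,t}, N'}. -/

import Mathlib

open MeasureTheory Finset

noncomputable section

/-- Points of `ℝⁿ` (with `n = d + 1`) split as `q = (r, θ) ∈ ℝ × ℝ^d`. -/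
abbrev Q (d : ℕ) : Type := ℝ × (Fin d → ℝ)

/-- The coordinate direction `∂_r`. -/
def eR (d : ℕ) : Q d := ((1 : ℝ), 0)

/-- The coordinate direction `∂_{θ_i}`. -/
def eTh (d : ℕ) (i : Fin d) : Q d := ((0 : ℝ), Pi.single i 1)

/-- Directional derivative of a complex-valued function. -/
def dirD {E : Type*} [NormedAddCommGroup E] [NormedSpace ℝ E]
    (v : E) (g : E → ℂ) : E → ℂ :=
  fun x => fderiv ℝ g x v

/-- Multiindices `α = (α₀, α')` split as in the paper. -/
abbrev MIdx (d : ℕ) : Type := ℕ × (Fin d → ℕ)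

/-- `|α| = α₀ + |α'|`. -/
def deg {d : ℕ} (α : MIdx d) : ℕ := α.1 + ∑ i, α.2 i

/-- `|α'|`, the angular part of a multiindex. -/
def degA {d : ℕ} (α : MIdx d) : ℕ := ∑ i, α.2 i

/-- `∂_q^α` acting on functions on `ℝⁿ = ℝ × ℝ^d`. -/
def mderiv1 {d : ℕ} (α : MIdx d) (g : Q d → ℂ) : Q d → ℂ :=
  (dirD (eR d))^[α.1] <|
    (List.finRange d).foldr (fun i h => (dirD (eTh d i))^[α.2 i] h) g

/-- `∂_q^α ∂_p^β` acting on functions on phase space. -/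
def mderiv2 {d : ℕ} (α β : MIdx d) (g : Q d × Q d → ℂ) : Q d × Q d → ℂ :=
  (dirD ((eR d, 0) : Q d × Q d))^[α.1] <|
  (List.finRange d).foldr (fun i h => (dirD ((eTh d i, 0) : Q d × Q d))^[α.2 i] h) <|
  (dirD (((0 : Q d), eR d) : Q d × Q d))^[β.1] <|
  (List.finRange d).foldr (fun i h => (dirD (((0 : Q d), eTh d i) : Q d × Q d))^[β.2 i] h) g

/-- `∂_q^α ∂_p^β ∂_{q'}^γ` acting on amplitudes `a(q, p, q')`. -/
def mderiv3 {d : ℕ} (α β γ : MIdx d) (g : Q d × Q d × Q d → ℂ) : Q d × Q d × Q d → ℂ :=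
  (dirD ((eR d, 0, 0) : Q d × Q d × Q d))^[α.1] <|
  (List.finRange d).foldr (fun i h => (dirD ((eTh d i, 0, 0) : Q d × Q d × Q d))^[α.2 i] h) <|
  (dirD (((0 : Q d), eR d, 0) : Q d × Q d × Q d))^[β.1] <|
  (List.finRange d).foldr (fun i h => (dirD (((0 : Q d), eTh d i, 0) : Q d × Q d × Q d))^[β.2 i] h) <|
  (dirD (((0 : Q d), (0 : Q d), eR d) : Q d × Q d × Q d))^[γ.1] <|
  (List.finRange d).foldr (fun i h => (dirD (((0 : Q d), (0 : Q d), eTh d i) : Q d × Q d × Q d))^[γ.2 i] h) g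

/-- `⟨p⟩ = (1 + ρ² + |η|²)^{1/2}`. -/
def brP {d : ℕ} (p : Q d) : ℝ := Real.sqrt (1 + p.1 ^ 2 + ∑ i, (p.2 i) ^ 2)

/-- `⟨ρ ⊕ f(r)⁻¹ η⟩` evaluated at a phase-space point. -/
def brF {d : ℕ} (f : ℝ → ℝ) (x : Q d × Q d) : ℝ :=
  Real.sqrt (1 + x.2.1 ^ 2 + ∑ i, (x.2.2 i / f x.1.1) ^ 2)

/-- The standing assumption on `f : ℝ → [1, ∞)`: smooth, `f ≥ 1`, and all derivatives
of `log f` of order `≥ 1` are bounded. -/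
def GoodF (f : ℝ → ℝ) : Prop :=
  ContDiff ℝ (⊤ : ℕ∞) f ∧ (∀ r, 1 ≤ f r) ∧
    ∀ j : ℕ, 1 ≤ j → ∃ C : ℝ, ∀ r, |iteratedDeriv j (fun s => Real.log (f s)) r| ≤ C

/-- Membership in the symbol class `S^m_f(ℝ^{2n})`. -/
def IsSymbol {d : ℕ} (f : ℝ → ℝ) (m : ℝ) (a : Q d × Q d → ℂ) : Prop :=
  ContDiff ℝ (⊤ : ℕ∞) a ∧
    ∀ α β : MIdx d, ∃ C : ℝ, ∀ x : Q d × Q d,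
      ‖mderiv2 α β a x‖ ≤ C * f x.1.1 ^ ((degA α : ℝ) - (degA β : ℝ)) * brF f x ^ (m - (deg β : ℝ))

/-- The finite set of multiindices of length `≤ N`. -/
def idxSet (d N : ℕ) : Finset (MIdx d) :=
  ((Finset.range (N + 1)) ×ˢ Fintype.piFinset fun _ : Fin d => Finset.range (N + 1)).filter
    fun α => deg α ≤ N

/-- The seminorm `|a|_{S^m_f, N}`. -/
def symNorm {d : ℕ} (f : ℝ → ℝ) (m : ℝ) (N : ℕ) (a : Q d × Q d → ℂ) : ℝ :=
  ∑ α ∈ idxSet d N, ∑ β ∈ idxSet d N,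
    if deg α + deg β ≤ N then
      ⨆ x : Q d × Q d,
        f x.1.1 ^ (-(degA α : ℝ) + (degA β : ℝ)) * brF f x ^ (-m + (deg β : ℝ)) *
          ‖mderiv2 α β a x‖
    else 0

/-- `p · q`. -/
def qdot {d : ℕ} (p q : Q d) : ℝ := p.1 * q.1 + ∑ i, p.2 i * q.2 i

/-- The oscillating factor `e^{i p · v / ℏ}`. -/
def ephase {d : ℕ} (ℏ : ℝ) (p v : Q d) : ℂ :=
  Complex.exp (Complex.I * Complex.ofReal (qdot p v) / Complex.ofReal ℏ)

/-- The quantization `Op^t_ℏ(a)` of a symbol, acting on functions (trivialized half-densities). -/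
def Op {d : ℕ} (ℏ t : ℝ) (a : Q d × Q d → ℂ) (u : Q d → ℂ) : Q d → ℂ :=
  fun q => ((2 * Real.pi * ℏ) ^ (d + 1) : ℝ)⁻¹ •
    ∫ p : Q d, ∫ q' : Q d,
      a (t • q + (1 - t) • q', p) * ephase ℏ p (q - q') * u q'

/-- Membership in `C_c^∞(ℝⁿ)`. -/
def IsCc {d : ℕ} (u : Q d → ℂ) : Prop := ContDiff ℝ (⊤ : ℕ∞) u ∧ HasCompactSupport u

/-- The `L²` inner product `⟨w, v⟩ = ∫ w \bar v`. -/
def l2inner {d : ℕ} (w v : Q d → ℂ) : ℂ := ∫ q : Q d, w q * (starRingEnd ℂ) (v q)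

/-- The `L²` norm. -/
def l2norm {d : ℕ} (u : Q d → ℂ) : ℝ := (∫ q : Q d, ‖u q‖ ^ 2) ^ (1 / 2 : ℝ)

/-- `Σ_{|β| ≤ N} sup |∂^β u|`. -/
def ckNorm {d : ℕ} (N : ℕ) (u : Q d → ℂ) : ℝ :=
  ∑ β ∈ idxSet d N, ⨆ q : Q d, ‖mderiv1 β u q‖

/-- `⟨ρ ⊕ f(tr + (1-t)r')⁻¹ η⟩` evaluated at a point `(q, p, q')`. -/
def brFA {d : ℕ} (f : ℝ → ℝ) (t : ℝ) (x : Q d × Q d × Q d) : ℝ :=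
  Real.sqrt (1 + x.2.1.1 ^ 2 + ∑ i, (x.2.1.2 i / f (t * x.1.1 + (1 - t) * x.2.2.1)) ^ 2)

/-- Membership in the amplitude class `BS^m_{f,t}(ℝ^{3n})`. -/
def IsAmp {d : ℕ} (f : ℝ → ℝ) (m t : ℝ) (a : Q d × Q d × Q d → ℂ) : Prop :=
  ContDiff ℝ (⊤ : ℕ∞) a ∧
    ∀ α β γ : MIdx d, ∃ C : ℝ, ∀ x : Q d × Q d × Q d,
      ‖mderiv3 α β γ a x‖ ≤
        C * f (t * x.1.1 + (1 - t) * x.2.2.1) ^ ((degA α : ℝ) - (degA β : ℝ) + (degA γ : ℝ)) *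
          brFA f t x ^ (m - (deg β : ℝ))

/-- The seminorm `|a|_{BS^m_{f,t}, N}`. -/
def ampNorm {d : ℕ} (f : ℝ → ℝ) (m t : ℝ) (N : ℕ) (a : Q d × Q d × Q d → ℂ) : ℝ :=
  ∑ α ∈ idxSet d N, ∑ β ∈ idxSet d N, ∑ γ ∈ idxSet d N,
    if deg α + deg β + deg γ ≤ N then
      ⨆ x : Q d × Q d × Q d,
        f (t * x.1.1 + (1 - t) * x.2.2.1) ^ (-(degA α : ℝ) + (degA β : ℝ) - (degA γ : ℝ)) *
          brFA f t x ^ (-m + (deg β : ℝ)) * ‖mderiv3 α β γ a x‖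
    else 0

/-- The quantization of an amplitude `a(q, p, q')`. -/
def OpAmp {d : ℕ} (ℏ : ℝ) (a : Q d × Q d × Q d → ℂ) (u : Q d → ℂ) : Q d → ℂ :=
  fun q => ((2 * Real.pi * ℏ) ^ (d + 1) : ℝ)⁻¹ •
    ∫ p : Q d, ∫ q' : Q d, a (q, p, q') * ephase ℏ p (q - q') * u q'


section gen
variable {E : Type*} [NormedAddCommGroup E] [NormedSpace ℝ E]
variable {F : Type*} [NormedAddCommGroup F] [NormedSpace ℝ F]

abbrev Sm {E : Type*} [NormedAddCommGroup E] [NormedSpace ℝ E] (g : E → ℂ) : Prop :=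
  ContDiff ℝ (⊤ : ℕ∞) g

lemma Sm.diff {g : E → ℂ} (hg : Sm g) : Differentiable ℝ g :=
  ContDiff.differentiable hg (by simp)

lemma Sm.dirD {g : E → ℂ} (hg : Sm g) (v : E) : Sm (dirD v g) := by
  have h : ContDiff ℝ (⊤ : ℕ∞) (fderiv ℝ g) := ContDiff.fderiv_right hg (by simp)
  exact h.clm_apply contDiff_const

lemma dirD_add_fun {g h : E → ℂ} (hg : Sm g) (hh : Sm h) (v : E) :
    dirD v (g + h) = dirD v g + dirD v h := by
  funext x
  simp [dirD, fderiv_add (hg.diff x) (hh.diff x)]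

lemma dirD_sub_fun {g h : E → ℂ} (hg : Sm g) (hh : Sm h) (v : E) :
    dirD v (g - h) = dirD v g - dirD v h := by
  funext x
  simp [dirD, fderiv_sub (hg.diff x) (hh.diff x)]

lemma dirD_mul_fun {g h : E → ℂ} (hg : Sm g) (hh : Sm h) (v : E) :
    dirD v (g * h) = dirD v g * h + g * dirD v h := by
  funext x
  simp [dirD, fderiv_mul (hg.diff x) (hh.diff x)]
  ring

lemma dirD_smul_fun {g : E → ℂ} (hg : Sm g) (c : ℂ) (v : E) :
    dirD v (c • g) = c • dirD v g := by
  funext x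
  simp [dirD, fderiv_const_smul (hg.diff x)]

lemma dirD_comm {g : E → ℂ} (hg : Sm g) (v w : E) :
    dirD v (dirD w g) = dirD w (dirD v g) := by
  funext x
  have h2 : ContDiff ℝ (⊤ : ℕ∞) (fderiv ℝ g) := ContDiff.fderiv_right hg (by simp)
  have h3 : DifferentiableAt ℝ (fderiv ℝ g) x := (h2.differentiable (by simp)) x
  have hs : IsSymmSndFDerivAt ℝ g x :=
    (hg.contDiffAt).isSymmSndFDerivAt (by simp only [minSmoothness_of_isRCLikeNormedField]; exact WithTop.coe_le_coe.2 (le_top : (2 : ℕ∞) ≤ ⊤))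
  have key : ∀ a b : E, fderiv ℝ (fun y => fderiv ℝ g y a) x b = fderiv ℝ (fderiv ℝ g) x b a := by
    intro a b
    have := fderiv_clm_apply (𝕜 := ℝ) h3 (differentiableAt_const (x := x) a)
    rw [this]; simp
  show fderiv ℝ (fun y => fderiv ℝ g y w) x v = fderiv ℝ (fun y => fderiv ℝ g y v) x w
  rw [key, key]
  exact hs v w

lemma dirD_add_vec (g : E → ℂ) (v w : E) : dirD (v + w) g = dirD v g + dirD w g := by
  funext x; simp [dirD]

lemma dirD_smul_vec (g : E → ℂ) (c : ℝ) (v : E) : dirD (c • v) g = (c : ℂ) • dirD v g := by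
  funext x; simp [dirD]

lemma dirD_sum_vec {K : Type*} (s : Finset K) (g : E → ℂ) (c : K → ℝ) (v : K → E) :
    dirD (∑ k ∈ s, c k • v k) g = ∑ k ∈ s, (c k : ℂ) • dirD (v k) g := by
  funext x; simp [dirD]

lemma dirD_comp {g : F → ℂ} (hg : Sm g) (L : E →L[ℝ] F) (y : F) (v : E) :
    dirD v (fun x => g (y + L x)) = fun x => dirD (L v) g (y + L x) := by
  funext x
  have h1 : HasFDerivAt (fun x => y + L x) L x := L.hasFDerivAt.const_add y
  have h2 := ((hg.diff (y + L x)).hasFDerivAt).comp x h1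
  have h3 : fderiv ℝ (fun x => g (y + L x)) x = (fderiv ℝ g (y + L x)).comp L := h2.fderiv
  simp [dirD, h3]

lemma Sm.comp_aff {g : F → ℂ} (hg : Sm g) (L : E →L[ℝ] F) (y : F) :
    Sm (fun x => g (y + L x)) :=
  ContDiff.comp hg (contDiff_const.add L.contDiff)

lemma Sm.mul' {g h : E → ℂ} (hg : Sm g) (hh : Sm h) : Sm (g * h) := ContDiff.mul hg hh
lemma Sm.add' {g h : E → ℂ} (hg : Sm g) (hh : Sm h) : Sm (g + h) := ContDiff.add hg hh
lemma Sm.sub' {g h : E → ℂ} (hg : Sm g) (hh : Sm h) : Sm (g - h) := ContDiff.sub hg hh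
lemma Sm.smul' {g : E → ℂ} (hg : Sm g) (c : ℂ) : Sm (c • g) := ContDiff.const_smul c hg

lemma dirD_congr {g h : E → ℂ} {x : E} (e : g =ᶠ[nhds x] h) (v : E) :
    dirD v g =ᶠ[nhds x] dirD v h := by
  filter_upwards [e.fderiv (𝕜 := ℝ)] with y hy
  simp [dirD, hy]

lemma dirD_tsupport (g : E → ℂ) (v : E) : tsupport (dirD v g) ⊆ tsupport g := by
  refine closure_minimal ?_ isClosed_closure
  intro x hx
  have : fderiv ℝ g x ≠ 0 := by
    intro h0; apply hx; simp [dirD, h0]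
  exact (support_fderiv_subset ℝ) this

/-- recursive bounds -/
def Bd {J : Type*} (D : J → E) (ω : E → ℝ) : ℕ → ℝ → (E → ℂ) → Prop
  | 0, C, G => ∀ x, ‖G x‖ ≤ C * ω x
  | (N+1), C, G => (∀ x, ‖G x‖ ≤ C * ω x) ∧ ∀ j, Bd D ω N C (dirD (D j) G)

variable {J : Type*} {D : J → E} {ω : E → ℝ}

lemma Bd.pt {N : ℕ} {C : ℝ} {G : E → ℂ} (h : Bd D ω N C G) (x : E) : ‖G x‖ ≤ C * ω x := by
  cases N with
  | zero => exact h x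
  | succ N => exact h.1 x

lemma Bd.zero {N : ℕ} {C : ℝ} {G : E → ℂ} (h : Bd D ω N C G) : Bd D ω 0 C G := h.pt

lemma Bd.step {N : ℕ} {C : ℝ} {G : E → ℂ} (h : Bd D ω (N+1) C G) (j : J) :
    Bd D ω N C (_root_.dirD (D j) G) := h.2 j

lemma Bd.pred {N : ℕ} : ∀ {C : ℝ} {G : E → ℂ}, Bd D ω (N+1) C G → Bd D ω N C G := by
  induction N with
  | zero => intro C G h; exact h.1
  | succ N ih => intro C G h; exact ⟨h.1, fun j => ih (h.2 j)⟩

lemma Bd.mono_N {N M : ℕ} {C : ℝ} {G : E → ℂ} (h : Bd D ω N C G) (hM : M ≤ N) :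
    Bd D ω M C G := by
  induction N, hM using Nat.le_induction with
  | base => exact h
  | succ n hn ih => exact ih h.pred

lemma Bd.mono {N : ℕ} {ω' : E → ℝ} : ∀ {C C' : ℝ} {G : E → ℂ}, Bd D ω N C G →
    (∀ x, C * ω x ≤ C' * ω' x) → Bd D ω' N C' G := by
  induction N with
  | zero => intro C C' G h hw x; exact (h x).trans (hw x)
  | succ N ih => intro C C' G h hw; exact ⟨fun x => (h.1 x).trans (hw x), fun j => ih (h.2 j) hw⟩

lemma Bd.mono_C {N : ℕ} {C C' : ℝ} {G : E → ℂ} (h : Bd D ω N C G) (hC : C ≤ C')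
    (hω : ∀ x, 0 ≤ ω x) : Bd D ω N C' G :=
  h.mono fun x => mul_le_mul_of_nonneg_right hC (hω x)

lemma Bd.add {N : ℕ} : ∀ {C C' : ℝ} {G H : E → ℂ}, Sm G → Sm H → Bd D ω N C G →
    Bd D ω N C' H → Bd D ω N (C + C') (G + H) := by
  have base : ∀ {C C' : ℝ} {G H : E → ℂ}, (∀ x, ‖G x‖ ≤ C * ω x) → (∀ x, ‖H x‖ ≤ C' * ω x) →
      ∀ x, ‖(G + H) x‖ ≤ (C + C') * ω x := by
    intro C C' G H h1 h2 x
    calc ‖(G + H) x‖ ≤ ‖G x‖ + ‖H x‖ := norm_add_le _ _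
      _ ≤ _ := by linarith [h1 x, h2 x]
  induction N with
  | zero => intro C C' G H _ _ h1 h2; exact base h1 h2
  | succ N ih =>
    intro C C' G H hG hH h1 h2
    refine ⟨base h1.1 h2.1, fun j => ?_⟩
    rw [dirD_add_fun hG hH]
    exact ih (hG.dirD _) (hH.dirD _) (h1.2 j) (h2.2 j)

lemma Bd.smul {N : ℕ} (c : ℂ) : ∀ {C : ℝ} {G : E → ℂ}, Sm G → Bd D ω N C G →
    Bd D ω N (‖c‖ * C) (c • G) := by
  have base : ∀ {C : ℝ} {G : E → ℂ}, (∀ x, ‖G x‖ ≤ C * ω x) →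
      ∀ x, ‖(c • G) x‖ ≤ (‖c‖ * C) * ω x := by
    intro C G h1 x
    rw [Pi.smul_apply, norm_smul, mul_assoc]
    exact mul_le_mul_of_nonneg_left (h1 x) (norm_nonneg _)
  induction N with
  | zero => intro C G _ h1; exact base h1
  | succ N ih =>
    intro C G hG h1
    refine ⟨base h1.1, fun j => ?_⟩
    rw [dirD_smul_fun hG]
    exact ih (hG.dirD _) (h1.2 j)

lemma Bd.sub {N : ℕ} {C C' : ℝ} {G H : E → ℂ} (hG : Sm G) (hH : Sm H) (h1 : Bd D ω N C G)
    (h2 : Bd D ω N C' H) : Bd D ω N (C + C') (G - H) := by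
  have h3 := h2.smul (-1) hH
  have := h1.add hG (hH.smul' (-1)) h3
  simpa [sub_eq_add_neg] using this

lemma Bd.zero_fun {N : ℕ} {C : ℝ} (h : ∀ x, 0 ≤ C * ω x) : Bd D ω N C 0 := by
  induction N with
  | zero => intro x; simpa using h x
  | succ N ih =>
    refine ⟨fun x => by simpa using h x, fun j => ?_⟩
    have : _root_.dirD (D j) (0 : E → ℂ) = 0 := by funext x; simp [_root_.dirD]
    rw [this]; exact ih

lemma Bd.sum {N : ℕ} {K : Type*} (s : Finset K) {C : K → ℝ} {G : K → E → ℂ}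
    (hG : ∀ k ∈ s, Sm (G k)) (h : ∀ k ∈ s, Bd D ω N (C k) (G k)) :
    Bd D ω N (∑ k ∈ s, C k) (∑ k ∈ s, G k) := by
  classical
  induction s using Finset.induction_on with
  | empty => simp only [Finset.sum_empty]; exact Bd.zero_fun (by simp)
  | insert a s ha ih =>
    rw [Finset.sum_insert ha, Finset.sum_insert ha]
    refine Bd.add (hG a (by simp)) ?_ (h a (by simp)) (ih (fun k hk => hG k (by simp [hk]))
      (fun k hk => h k (by simp [hk])))
    have := ContDiff.sum (𝕜 := ℝ) (n := ((⊤ : ℕ∞) : WithTop ℕ∞)) (f := G) (s := s)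
      (fun k hk => hG k (by simp [hk]))
    convert this using 1
    funext x; simp

lemma Bd.mul {N : ℕ} {ω' : E → ℝ} : ∀ {C C' : ℝ} {G H : E → ℂ}, Sm G → Sm H → Bd D ω N C G →
    Bd D ω' N C' H → Bd D (fun x => ω x * ω' x) N (2 ^ N * (C * C')) (G * H) := by
  have base : ∀ {C C' : ℝ} {G H : E → ℂ}, (∀ x, ‖G x‖ ≤ C * ω x) → (∀ x, ‖H x‖ ≤ C' * ω' x) →
      ∀ x, ‖(G * H) x‖ ≤ (C * C') * (ω x * ω' x) := by
    intro C C' G H h1 h2 x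
    rw [Pi.mul_apply, norm_mul]
    calc ‖G x‖ * ‖H x‖ ≤ (C * ω x) * (C' * ω' x) :=
          mul_le_mul (h1 x) (h2 x) (norm_nonneg _) ((norm_nonneg _).trans (h1 x))
      _ = _ := by ring
  induction N with
  | zero => intro C C' G H _ _ h1 h2 x; simpa using base h1 h2 x
  | succ N ih =>
    intro C C' G H hG hH h1 h2
    have b := base h1.1 h2.1
    refine ⟨fun x => (b x).trans ?_, fun j => ?_⟩
    · have h0 : 0 ≤ (C * C') * (ω x * ω' x) := (norm_nonneg _).trans (b x)
      have : (1 : ℝ) ≤ 2 ^ (N+1) := one_le_pow₀ (by norm_num)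
      nlinarith
    · rw [dirD_mul_fun hG hH]
      have e1 := ih (hG.dirD _) hH (h1.2 j) h2.pred
      have e2 := ih hG (hH.dirD _) h1.pred (h2.2 j)
      have := e1.add ((hG.dirD _).mul' hH) (hG.mul' (hH.dirD _)) e2
      convert this using 1
      ring

lemma Bd.comp {J' : Type*} [Fintype J'] {D' : J' → F} {ω' : F → ℝ} {N : ℕ} (L : E →L[ℝ] F) (y : F)
    (mt : J → J' → ℝ) (hL : ∀ j, L (D j) = ∑ k, mt j k • D' k) (K : ℝ) (hK1 : 1 ≤ K)
    (hK : ∀ j, ∑ k, |mt j k| ≤ K) :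
    ∀ {C : ℝ} {H : F → ℂ}, Sm H → Bd D' ω' N C H →
      Bd D (fun x => ω' (y + L x)) N (K ^ N * C) (fun x => H (y + L x)) := by
  induction N with
  | zero => intro C H _ h x; simpa using h (y + L x)
  | succ N ih =>
    intro C H hH h
    refine ⟨fun x => (h.1 _).trans ?_, fun j => ?_⟩
    · have h0 : 0 ≤ C * ω' (y + L x) := (norm_nonneg _).trans (h.1 _)
      have : (1 : ℝ) ≤ K ^ (N+1) := one_le_pow₀ hK1
      nlinarith
    · rw [dirD_comp hH, hL, dirD_sum_vec]
      have e := Bd.sum (D := D) (ω := fun x => ω' (y + L x)) (N := N) Finset.univ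
        (C := fun k => |mt j k| * (K ^ N * C))
        (G := fun k => ((mt j k : ℝ) : ℂ) • fun x => _root_.dirD (D' k) H (y + L x))
        (fun k _ => ((hH.dirD _).comp_aff L y).smul' _)
        (fun k _ => by
          have := (ih (hH.dirD _) (h.2 k)).smul ((mt j k : ℝ) : ℂ) ((hH.dirD _).comp_aff L y)
          simpa using this)
      have e' := e.mono (ω' := fun x => ω' (y + L x)) (C' := K ^ (N+1) * C) (fun x => by
        rw [← Finset.sum_mul]
        have h0 : 0 ≤ C * ω' (y + L x) := (norm_nonneg _).trans (h.1 _)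
        have hp : 0 ≤ K ^ N * (C * ω' (y + L x)) := by positivity
        calc (∑ k, |mt j k|) * (K ^ N * C) * ω' (y + L x)
            = (∑ k, |mt j k|) * (K ^ N * (C * ω' (y + L x))) := by ring
          _ ≤ K * (K ^ N * (C * ω' (y + L x))) := mul_le_mul_of_nonneg_right (hK j) hp
          _ = _ := by ring)
      convert e' using 1
      funext x
      simp [Finset.sum_apply]

end gen

section gen2
variable {E : Type*} [NormedAddCommGroup E] [NormedSpace ℝ E]
variable {X : Type*} [NormedAddCommGroup X] [NormedSpace ℝ X]

/-- one integration by parts -/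
def Lop (c : (E → ℂ) × E) (G : E → ℂ) : E → ℂ := c.1 * (G - dirD c.2 G)

/-- iterated -/
def Pop (l : List ((E → ℂ) × E)) (G : E → ℂ) : E → ℂ := l.foldr Lop G

@[simp] lemma Pop_nil (G : E → ℂ) : Pop [] G = G := rfl
@[simp] lemma Pop_cons (c : (E → ℂ) × E) (l : List ((E → ℂ) × E)) (G : E → ℂ) :
    Pop (c :: l) G = Lop c (Pop l G) := rfl

lemma Lop_sm {c : (E → ℂ) × E} (hc : Sm c.1) {G : E → ℂ} (hG : Sm G) : Sm (Lop c G) :=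
  hc.mul' (hG.sub' (hG.dirD _))

lemma Pop_sm {l : List ((E → ℂ) × E)} (hl : ∀ c ∈ l, Sm c.1) {G : E → ℂ} (hG : Sm G) :
    Sm (Pop l G) := by
  induction l with
  | nil => exact hG
  | cons c l ih =>
    exact Lop_sm (hl c (by simp)) (ih fun c hc => hl c (by simp [hc]))

lemma Pop_add {l : List ((E → ℂ) × E)} (hl : ∀ c ∈ l, Sm c.1) {G H : E → ℂ} (hG : Sm G)
    (hH : Sm H) : Pop l (G + H) = Pop l G + Pop l H := by
  induction l with
  | nil => rfl
  | cons c l ih =>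
    have hl' : ∀ c ∈ l, Sm c.1 := fun c hc => hl c (by simp [hc])
    rw [Pop_cons, Pop_cons, Pop_cons, ih hl', Lop, dirD_add_fun (Pop_sm hl' hG) (Pop_sm hl' hH)]
    simp only [Lop]; ring

lemma Pop_smul {l : List ((E → ℂ) × E)} (hl : ∀ c ∈ l, Sm c.1) (k : ℂ) {G : E → ℂ} (hG : Sm G) :
    Pop l (k • G) = k • Pop l G := by
  induction l with
  | nil => rfl
  | cons c l ih =>
    have hl' : ∀ c ∈ l, Sm c.1 := fun c hc => hl c (by simp [hc])
    rw [Pop_cons, Pop_cons, ih hl', Lop, dirD_smul_fun (Pop_sm hl' hG)]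
    funext x
    simp [Lop]; ring

lemma Pop_congr {l : List ((E → ℂ) × E)} {G H : E → ℂ} {x : E} (h : G =ᶠ[nhds x] H) :
    Pop l G =ᶠ[nhds x] Pop l H := by
  induction l with
  | nil => exact h
  | cons c l ih =>
    filter_upwards [ih, dirD_congr ih c.2] with y h1 h2
    simp [Lop, h1, h2]

lemma Pop_tsupport (l : List ((E → ℂ) × E)) (G : E → ℂ) : tsupport (Pop l G) ⊆ tsupport G := by
  induction l with
  | nil => exact subset_rfl
  | cons c l ih =>
    refine closure_minimal ?_ isClosed_closure
    intro x hx
    apply ih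
    by_contra hn
    apply hx
    have h1 : Pop l G x = 0 := image_eq_zero_of_notMem_tsupport hn
    have h2 : dirD c.2 (Pop l G) x = 0 :=
      image_eq_zero_of_notMem_tsupport fun h => hn (dirD_tsupport _ _ h)
    simp [Lop, h1, h2]

lemma Pop_dirD {l : List ((E → ℂ) × E)} (hl : ∀ c ∈ l, Sm c.1) (v : E)
    (hv : ∀ c ∈ l, dirD v c.1 = 0) {G : E → ℂ} (hG : Sm G) :
    dirD v (Pop l G) = Pop l (dirD v G) := by
  induction l with
  | nil => rfl
  | cons c l ih =>
    have hl' : ∀ c ∈ l, Sm c.1 := fun c hc => hl c (by simp [hc])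
    have hp := Pop_sm hl' hG
    rw [Pop_cons, Pop_cons, Lop, dirD_mul_fun (hl c (by simp)) (hp.sub' (hp.dirD _)),
      hv c (by simp), dirD_sub_fun hp (hp.dirD _), dirD_comm hp, ih hl' fun c hc => hv c (by simp [hc])]
    simp [Lop]

/-- lift of an operator list to a product -/
def liftl (X : Type*) [NormedAddCommGroup X] (l : List ((E → ℂ) × E)) :
    List ((X × E → ℂ) × (X × E)) :=
  l.map fun c => (fun z => c.1 z.2, (0, c.2))

lemma dirD_slice {G : X × E → ℂ} (hG : Sm G) (x : X) (v : E) (y : E) :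
    dirD v (fun y => G (x, y)) y = dirD ((0 : X), v) G (x, y) := by
  have := congrFun (dirD_comp hG (ContinuousLinearMap.inr ℝ X E) (x, 0) v) y
  simpa using this

lemma dirD_slice_left {G : X × E → ℂ} (hG : Sm G) (x : X) (v : X) (y : E) :
    dirD v (fun x => G (x, y)) x = dirD (v, (0 : E)) G (x, y) := by
  have := congrFun (dirD_comp hG (ContinuousLinearMap.inl ℝ X E) (0, y) v) x
  simpa using this

lemma Sm.slice {G : X × E → ℂ} (hG : Sm G) (x : X) : Sm (fun y => G (x, y)) :=
  ContDiff.comp hG (contDiff_const.prodMk contDiff_id)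

lemma liftl_sm {l : List ((E → ℂ) × E)} (hl : ∀ c ∈ l, Sm c.1) : ∀ c ∈ liftl X l, Sm c.1 := by
  intro c hc
  obtain ⟨c', hc', rfl⟩ := List.mem_map.1 hc
  have := hl c' hc'
  exact ContDiff.comp (g := c'.1) this contDiff_snd

lemma Pop_slice {l : List ((E → ℂ) × E)} (hl : ∀ c ∈ l, Sm c.1) {G : X × E → ℂ} (hG : Sm G)
    (x : X) : Pop l (fun y => G (x, y)) = fun y => Pop (liftl X l) G (x, y) := by
  induction l with
  | nil => rfl
  | cons c l ih =>
    have hl' : ∀ c ∈ l, Sm c.1 := fun c hc => hl c (by simp [hc])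
    rw [Pop_cons, ih hl']
    funext y
    have := dirD_slice (Pop_sm (liftl_sm (X := X) hl') hG) x c.2 y
    simp only [Lop, Pi.mul_apply, Pi.sub_apply, this]
    rfl

/-- admissible operator list for a family of directions -/
def Adm {J : Type*} (D : J → E) (l : List ((E → ℂ) × E)) : Prop :=
  ∀ c ∈ l, Sm c.1 ∧ (∃ j, D j = c.2) ∧ ∀ N, ∃ K, 0 ≤ K ∧ Bd D (fun x => ‖c.1 x‖) N K c.1

lemma Pop_bd {J : Type*} {D : J → E} {l : List ((E → ℂ) × E)} (hl : Adm D l) : ∀ N,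
    ∃ K, 0 ≤ K ∧ ∀ (ω : E → ℝ) (C : ℝ) (G : E → ℂ), Sm G → Bd D ω (N + l.length) C G →
      Bd D (fun x => (l.map fun c => ‖c.1 x‖).prod * ω x) N (K * C) (Pop l G) := by
  induction l with
  | nil =>
    intro N
    refine ⟨1, zero_le_one, fun ω C G _ h => ?_⟩
    simpa using h
  | cons c l ih =>
    intro N
    have hl' : Adm D l := fun c hc => hl c (by simp [hc])
    obtain ⟨K1, hK1, h1⟩ := ih hl' (N + 1)
    obtain ⟨hs, ⟨j, hj⟩, hb⟩ := hl c (by simp)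
    obtain ⟨K2, hK2, h2⟩ := hb N
    refine ⟨2 ^ N * (K2 * (K1 + K1)), by positivity, fun ω C G hG h => ?_⟩
    have hp : Sm (Pop l G) := Pop_sm (fun c hc => (hl' c hc).1) hG
    have e1 := h1 ω C G hG (by convert h using 1; simp; ring)
    have e2 := e1.pred.sub hp (hp.dirD _) (e1.step j)
    have e3 := h2.mul hs (hp.sub' (hp.dirD (D j))) e2
    rw [Pop_cons, Lop, ← hj]
    convert e3 using 1
    · funext x; simp; ring
    · ring

section integ
variable [MeasureSpace E] [BorelSpace E] [FiniteDimensional ℝ E]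
  [Measure.IsAddHaarMeasure (volume : Measure E)]

lemma Sm.integrable_cs {G : E → ℂ} (hG : Sm G) (h : HasCompactSupport G) : Integrable G :=
  hG.continuous.integrable_of_hasCompactSupport h

lemma Pop_ibp {l : List ((E → ℂ) × E)} (hl : ∀ c ∈ l, Sm c.1) {e : E → ℂ} (he : Sm e)
    (h1 : ∀ c ∈ l, dirD c.2 c.1 = 0) (h2 : ∀ c ∈ l, c.1 * (e + dirD c.2 e) = e)
    {G : E → ℂ} (hG : Sm G) (hs : HasCompactSupport G) :
    ∫ x, e x * G x = ∫ x, e x * Pop l G x := by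
  induction l with
  | nil => rfl
  | cons c l ih =>
    have hl' : ∀ c ∈ l, Sm c.1 := fun c hc => hl c (by simp [hc])
    rw [ih hl' (fun c hc => h1 c (by simp [hc])) (fun c hc => h2 c (by simp [hc]))]
    have hp := Pop_sm hl' hG
    have hps : HasCompactSupport (Pop l G) := hs.of_isClosed_subset isClosed_closure (Pop_tsupport l G)
    set P := Pop l G with hP
    have hc := hl c (by simp)
    have hds : HasCompactSupport (dirD c.2 P) :=
      hps.of_isClosed_subset isClosed_closure (dirD_tsupport _ _)
    set g := c.1 * P with hg
    have hgs : Sm g := hc.mul' hp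
    have hgc : HasCompactSupport g := hps.mul_left
    have hdg : dirD c.2 g = c.1 * dirD c.2 P := by
      rw [hg, dirD_mul_fun hc hp, h1 c (by simp)]; simp
    have hdgc : HasCompactSupport (dirD c.2 g) :=
      hgc.of_isClosed_subset isClosed_closure (dirD_tsupport _ _)
    have i1 : Integrable (fun x => fderiv ℝ g x c.2 * e x) :=
      Sm.integrable_cs ((hgs.dirD c.2).mul' he) hdgc.mul_right
    have i2 : Integrable (fun x => g x * fderiv ℝ e x c.2) :=
      Sm.integrable_cs (hgs.mul' (he.dirD c.2)) hgc.mul_right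
    have i3 : Integrable (fun x => g x * e x) :=
      Sm.integrable_cs (hgs.mul' he) hgc.mul_right
    have key := integral_mul_fderiv_eq_neg_fderiv_mul_of_integrable (𝕜 := ℂ) i1 i2 i3
      (fun x _ => hgs.diff x) (fun x _ => he.diff x)
    have l1 : ∀ x, e x * P x = g x * e x + g x * fderiv ℝ e x c.2 := by
      intro x
      have := congrFun (h2 c (by simp)) x
      simp only [Pi.mul_apply, Pi.add_apply, dirD] at this
      calc e x * P x = (c.1 x * (e x + fderiv ℝ e x c.2)) * P x := by rw [this]
        _ = _ := by simp only [hg, Pi.mul_apply]; ring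
    have l2 : ∀ x, e x * Lop c P x = g x * e x - fderiv ℝ g x c.2 * e x := by
      intro x
      have : fderiv ℝ g x c.2 = c.1 x * dirD c.2 P x := congrFun hdg x
      rw [this]
      simp only [Lop, hg, Pi.mul_apply, Pi.sub_apply]; ring
    rw [Pop_cons]
    rw [integral_congr_ae (Filter.Eventually.of_forall l1),
      integral_congr_ae (Filter.Eventually.of_forall l2), integral_add i3 i2, integral_sub i3 i1, key]
    ring

end integ
end gen2

instance instHaarQ (d : ℕ) : Measure.IsAddHaarMeasure (volume : Measure (Q d)) := by
  have : (volume : Measure (Q d)) = (volume : Measure ℝ).prod (volume : Measure (Fin d → ℝ)) := rfl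
  rw [this]; infer_instance
instance instHaarE (d : ℕ) : Measure.IsAddHaarMeasure (volume : Measure (Q d × Q d)) := by
  have : (volume : Measure (Q d × Q d)) =
    (volume : Measure (Q d)).prod (volume : Measure (Q d)) := rfl
  rw [this]; exact Measure.prod.instIsAddHaarMeasure _ _

section mus
variable {E : Type*} [NormedAddCommGroup E] [NormedSpace ℝ E]

/-- the multiplier -/
def mu (ℓ : E →L[ℝ] ℝ) : E → ℂ := fun x => (1 + Complex.I * (ℓ x : ℂ))⁻¹

lemma one_add_ne (s : ℝ) : (1 + Complex.I * (s : ℂ)) ≠ 0 := by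
  intro h
  have := congrArg Complex.re h
  simp at this

lemma norm_one_add (s : ℝ) : ‖(1 + Complex.I * (s : ℂ))‖ = Real.sqrt (1 + s ^ 2) := by
  rw [Complex.norm_def, Complex.normSq_apply]
  simp [sq]

lemma one_le_norm (s : ℝ) : 1 ≤ ‖(1 + Complex.I * (s : ℂ))‖ := by
  rw [norm_one_add]
  exact Real.one_le_sqrt.2 (by nlinarith [sq_nonneg s])

lemma mu_sm (ℓ : E →L[ℝ] ℝ) : Sm (mu ℓ) := by
  refine ContDiff.inv ?_ (fun x => one_add_ne _)
  exact contDiff_const.add (contDiff_const.mul (Complex.ofRealCLM.contDiff.comp ℓ.contDiff))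

lemma mu_norm_le (ℓ : E →L[ℝ] ℝ) (x : E) : ‖mu ℓ x‖ ≤ 1 := by
  rw [mu, norm_inv]
  exact inv_le_one_of_one_le₀ (one_le_norm _)

lemma mu_hasFDerivAt (ℓ : E →L[ℝ] ℝ) (x : E) (v : E) :
    dirD v (mu ℓ) x = -Complex.I * (ℓ v : ℂ) * mu ℓ x ^ 2 := by
  have h1 : HasFDerivAt (fun y => 1 + Complex.I * (ℓ y : ℂ))
      (Complex.I • (Complex.ofRealCLM.comp ℓ)) x := by
    have := ((Complex.ofRealCLM.comp ℓ).hasFDerivAt (x := x)).const_mul Complex.I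
    exact this.const_add 1
  have h2 : dirD v (fun y => 1 + Complex.I * (ℓ y : ℂ)) x = Complex.I * (ℓ v : ℂ) := by
    rw [dirD, h1.fderiv]; simp
  have hs : Sm (fun y => 1 + Complex.I * (ℓ y : ℂ)) :=
    contDiff_const.add (contDiff_const.mul (Complex.ofRealCLM.contDiff.comp ℓ.contDiff))
  have h3 := congrFun (dirD_mul_fun (mu_sm ℓ) hs v) x
  have h4 : mu ℓ * (fun y => 1 + Complex.I * (ℓ y : ℂ)) = fun _ => 1 := by
    funext y; simp [mu, inv_mul_cancel₀ (one_add_ne (ℓ y))]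
  have h5 : dirD v (fun _ : E => (1 : ℂ)) x = 0 := by simp [dirD]
  rw [h4, h5] at h3
  simp only [Pi.add_apply, Pi.mul_apply, h2] at h3
  have h6 : mu ℓ x * (1 + Complex.I * (ℓ x : ℂ)) = 1 := inv_mul_cancel₀ (one_add_ne (ℓ x))
  linear_combination (-mu ℓ x) * h3 - dirD v (mu ℓ) x * h6

lemma mu_dir (ℓ : E →L[ℝ] ℝ) (v : E) : dirD v (mu ℓ) = (-Complex.I * (ℓ v : ℂ)) • (mu ℓ * mu ℓ) := by
  funext x
  rw [mu_hasFDerivAt]; simp [sq]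

lemma mu_dir0 (ℓ : E →L[ℝ] ℝ) (v : E) (h : ℓ v = 0) : dirD v (mu ℓ) = 0 := by
  rw [mu_dir, h]; simp

lemma mu_bd {J : Type*} {D : J → E} (ℓ : E →L[ℝ] ℝ) (hD : ∀ j, |ℓ (D j)| ≤ 1) : ∀ N,
    ∃ K, 0 ≤ K ∧ Bd D (fun x => ‖mu ℓ x‖) N K (mu ℓ) := by
  intro N
  induction N with
  | zero => exact ⟨1, zero_le_one, fun x => by simp⟩
  | succ N ih =>
    obtain ⟨K, hK, h⟩ := ih
    refine ⟨max 1 (2 ^ N * (K * K)), by positivity, fun x => ?_, fun j => ?_⟩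
    · exact le_mul_of_one_le_left (norm_nonneg _) (le_max_left _ _)
    · rw [mu_dir]
      have e := (h.mul (mu_sm ℓ) (mu_sm ℓ) h).smul (-Complex.I * (ℓ (D j) : ℂ))
        ((mu_sm ℓ).mul' (mu_sm ℓ))
      refine e.mono fun x => ?_
      have a1 : ‖-Complex.I * (ℓ (D j) : ℂ)‖ ≤ 1 := by
        rw [norm_mul]; simpa using hD j
      have a2 := mu_norm_le ℓ x
      have a3 := norm_nonneg (mu ℓ x)
      calc ‖-Complex.I * (ℓ (D j) : ℂ)‖ * (2 ^ N * (K * K)) * (‖mu ℓ x‖ * ‖mu ℓ x‖)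
          ≤ 1 * (2 ^ N * (K * K)) * (‖mu ℓ x‖ * 1) := by gcongr
        _ ≤ _ := by
          rw [one_mul, mul_one]
          exact mul_le_mul_of_nonneg_right (le_max_right _ _) a3
end mus

section conc
variable {d : ℕ}

/-- coordinate directions -/
def ev (d : ℕ) : Option (Fin d) → Q d
  | none => eR d
  | some i => eTh d i

/-- coordinates -/
def co (d : ℕ) : Option (Fin d) → (Q d →L[ℝ] ℝ)
  | none => ContinuousLinearMap.fst ℝ ℝ (Fin d → ℝ)
  | some i => (ContinuousLinearMap.proj i).comp (ContinuousLinearMap.snd ℝ ℝ (Fin d → ℝ))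

@[simp] lemma co_none (q : Q d) : co d none q = q.1 := rfl
@[simp] lemma co_some (i : Fin d) (q : Q d) : co d (some i) q = q.2 i := rfl

lemma co_ev (j k : Option (Fin d)) : co d j (ev d k) = if j = k then 1 else 0 := by
  cases j <;> cases k <;> simp [ev, eR, eTh, Pi.single_apply]

lemma co_ev_abs (j k : Option (Fin d)) : |co d j (ev d k)| ≤ 1 := by
  rw [co_ev]; split_ifs <;> simp

lemma q_repr (q : Q d) : q = ∑ j, co d j q • ev d j := by
  rw [Fintype.sum_option]
  ext i
  · simp [ev, eR, eTh, Prod.fst_sum]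
  · simp [ev, eR, eTh, Prod.snd_sum, Pi.single_apply]

lemma qdot_eq (p q : Q d) : qdot p q = ∑ j, co d j p * co d j q := by
  rw [Fintype.sum_option]; simp [qdot]

/-- directions on phase space -/
def D2 (d : ℕ) : Option (Fin d) ⊕ Option (Fin d) → Q d × Q d
  | .inl j => (ev d j, 0)
  | .inr j => (0, ev d j)

/-- dual coordinates -/
def el (d : ℕ) : Option (Fin d) ⊕ Option (Fin d) → (Q d × Q d →L[ℝ] ℝ)
  | .inl j => (co d j).comp (ContinuousLinearMap.snd ℝ (Q d) (Q d))
  | .inr j => (co d j).comp (ContinuousLinearMap.fst ℝ (Q d) (Q d))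

lemma el_D2 (c c' : Option (Fin d) ⊕ Option (Fin d)) : |el d c (D2 d c')| ≤ 1 := by
  cases c <;> cases c' <;> simp [el, D2, co_ev_abs]

lemma el_D2_self (c : Option (Fin d) ⊕ Option (Fin d)) : el d c (D2 d c) = 0 := by
  cases c <;> simp [el, D2]

/-- operator attached to an index -/
def opc (d : ℕ) (c : Option (Fin d) ⊕ Option (Fin d)) : (Q d × Q d → ℂ) × (Q d × Q d) :=
  (mu (el d c), D2 d c)

/-- the phase -/
def ee (x : Q d × Q d) : ℂ := Complex.exp (Complex.I * (qdot x.2 x.1 : ℂ))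

lemma ee_norm (x : Q d × Q d) : ‖ee x‖ = 1 := by
  rw [ee, mul_comm]; exact Complex.norm_exp_ofReal_mul_I _

lemma ee_aux (x : Q d × Q d) : HasFDerivAt (fun y : Q d × Q d => qdot y.2 y.1)
    (∑ j, (co d j x.2 • (el d (.inr j)) + co d j x.1 • (el d (.inl j)))) x := by
  have : (fun y : Q d × Q d => qdot y.2 y.1) =
      fun y => ∑ j, el d (.inl j) y * el d (.inr j) y := by
    funext y; rw [qdot_eq]; rfl
  rw [this]
  refine HasFDerivAt.fun_sum fun j _ => ?_
  have := ((el d (.inl j)).hasFDerivAt (x := x)).mul ((el d (.inr j)).hasFDerivAt (x := x))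
  exact this

lemma ee_sm : Sm (ee : Q d × Q d → ℂ) := by
  have : (fun y : Q d × Q d => qdot y.2 y.1) =
      fun y => ∑ j, el d (.inl j) y * el d (.inr j) y := by
    funext y; rw [qdot_eq]; rfl
  have h : ContDiff ℝ (⊤ : ℕ∞) (fun y : Q d × Q d => qdot y.2 y.1) := by
    rw [this]
    exact ContDiff.sum fun j _ => (el d (.inl j)).contDiff.mul (el d (.inr j)).contDiff
  exact (contDiff_const.mul (Complex.ofRealCLM.contDiff.comp h)).cexp

lemma ee_dir (c : Option (Fin d) ⊕ Option (Fin d)) (x : Q d × Q d) :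
    dirD (D2 d c) ee x = Complex.I * (el d c x : ℂ) * ee x := by
  have h1 : HasFDerivAt (fun y : Q d × Q d => Complex.I * (qdot y.2 y.1 : ℂ)) _ x :=
    ((Complex.ofRealCLM.hasFDerivAt).comp x (ee_aux x)).const_mul Complex.I
  have h2 := h1.cexp
  have h3 : fderiv ℝ ee x = _ := h2.fderiv
  rw [dirD, h3]
  have : (∑ j, (co d j x.2 • (el d (.inr j)) + co d j x.1 • (el d (.inl j)))) (D2 d c) = el d c x := by
    cases c with
    | inl k => cases k <;> simp [el, D2, co_ev]
    | inr k => cases k <;> simp [el, D2, co_ev]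
  rw [_root_.smul_apply, _root_.smul_apply, ContinuousLinearMap.comp_apply,
    this]
  simp [ee]; ring

lemma opc_ibp (c : Option (Fin d) ⊕ Option (Fin d)) :
    (opc d c).1 * (ee + dirD (opc d c).2 ee) = ee := by
  funext x
  simp only [opc, Pi.mul_apply, Pi.add_apply, ee_dir, mu]
  have := one_add_ne (el d c x)
  field_simp

/-- list of operators -/
def lk (d k : ℕ) : List ((Q d × Q d → ℂ) × (Q d × Q d)) :=
  (List.replicate k ((univ : Finset (Option (Fin d))).toList.map fun j => opc d (.inl j))).flatten ++
  (List.replicate 2 ((univ : Finset (Option (Fin d))).toList.map fun j => opc d (.inr j))).flatten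

lemma lk_mem {k : ℕ} {c} (h : c ∈ lk d k) : ∃ j, c = opc d j := by
  simp only [lk, List.mem_append, List.mem_flatten, List.mem_replicate] at h
  rcases h with ⟨l, ⟨_, rfl⟩, h⟩ | ⟨l, ⟨_, rfl⟩, h⟩
  · obtain ⟨j, _, rfl⟩ := List.mem_map.1 h; exact ⟨_, rfl⟩
  · obtain ⟨j, _, rfl⟩ := List.mem_map.1 h; exact ⟨_, rfl⟩

lemma lk_adm (k : ℕ) : Adm (D2 d) (lk d k) := by
  intro c hc
  obtain ⟨j, rfl⟩ := lk_mem hc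
  exact ⟨mu_sm _, ⟨j, rfl⟩, mu_bd _ fun i => el_D2 _ _⟩

lemma lk_sm (k : ℕ) : ∀ c ∈ lk d k, Sm c.1 := fun c hc => (lk_adm k c hc).1

lemma lk_ibp (k : ℕ) {G : Q d × Q d → ℂ} (hG : Sm G) (hs : HasCompactSupport G) :
    ∫ x, ee x * G x = ∫ x, ee x * Pop (lk d k) G x := by
  refine Pop_ibp (lk_sm k) ee_sm ?_ ?_ hG hs
  · intro c hc
    obtain ⟨j, rfl⟩ := lk_mem hc
    exact mu_dir0 _ _ (el_D2_self j)
  · intro c hc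
    obtain ⟨j, rfl⟩ := lk_mem hc
    exact opc_ibp j

/-- product bracket -/
def jb (p : Q d) : ℝ := ∏ j, ‖(1 + Complex.I * (co d j p : ℂ))‖

lemma one_le_jb (p : Q d) : 1 ≤ jb p := Finset.one_le_prod fun j _ => one_le_norm _

lemma jb_pos (p : Q d) : 0 < jb p := zero_lt_one.trans_le (one_le_jb p)

lemma jb_cont : Continuous (jb : Q d → ℝ) := by
  unfold jb
  fun_prop

/-- integrable weight -/
def gw (x : Q d × Q d) : ℝ := (jb x.1 ^ 2)⁻¹ * (jb x.2 ^ 2)⁻¹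

lemma gw_nonneg (x : Q d × Q d) : 0 ≤ gw x := by
  have := jb_pos x.1; have := jb_pos x.2; unfold gw; positivity

lemma jb_int : Integrable (fun p : Q d => (jb p ^ 2)⁻¹) := by
  have h1 : ∀ p : Q d, (jb p ^ 2)⁻¹ = (1 + p.1 ^ 2)⁻¹ * ∏ i, (1 + p.2 i ^ 2)⁻¹ := by
    intro p
    have : ∀ s : ℝ, ‖(1 + Complex.I * (s : ℂ))‖ ^ 2 = 1 + s ^ 2 := by
      intro s; rw [norm_one_add, Real.sq_sqrt (by positivity)]
    rw [jb, ← Finset.prod_pow, Fintype.prod_option]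
    simp only [this, co_none, co_some, mul_inv, Finset.prod_inv_distrib]
  simp_rw [h1]
  have h2 : Integrable (fun θ : Fin d → ℝ => ∏ i, (1 + θ i ^ 2)⁻¹) :=
    Integrable.fintype_prod (f := fun _ (s : ℝ) => (1 + s ^ 2)⁻¹) fun i => integrable_inv_one_add_sq
  exact Integrable.mul_prod (f := fun s : ℝ => (1 + s ^ 2)⁻¹) integrable_inv_one_add_sq h2

lemma gw_int : Integrable (gw : Q d × Q d → ℝ) :=
  Integrable.mul_prod (f := fun p : Q d => (jb p ^ 2)⁻¹) jb_int jb_int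

lemma lk_prod (k : ℕ) (x : Q d × Q d) :
    ((lk d k).map fun c => ‖c.1 x‖).prod = (jb x.2 ^ k)⁻¹ * (jb x.1 ^ 2)⁻¹ := by
  have h1 : ∀ (y : Q d), (List.map (fun j => ‖(1 + Complex.I * (co d j y : ℂ))⁻¹‖)
      (univ : Finset (Option (Fin d))).toList).prod = (jb y)⁻¹ := by
    intro y
    rw [Finset.prod_map_toList]
    simp [jb, Finset.prod_inv_distrib]
  have a := h1 x.1
  have b := h1 x.2
  simp only [lk, List.map_append, List.prod_append, List.map_flatten, List.map_replicate,
    List.prod_flatten, List.prod_replicate, List.map_map]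
  have e1 : (fun c : (Q d × Q d → ℂ) × (Q d × Q d) => ‖c.1 x‖) ∘ (fun j => opc d (.inl j)) =
      fun j => ‖(1 + Complex.I * (co d j x.2 : ℂ))⁻¹‖ := rfl
  have e2 : (fun c : (Q d × Q d → ℂ) × (Q d × Q d) => ‖c.1 x‖) ∘ (fun j => opc d (.inr j)) =
      fun j => ‖(1 + Complex.I * (co d j x.1 : ℂ))⁻¹‖ := rfl
  rw [e1, e2, a, b, inv_pow, inv_pow]

/-- number of derivatives used -/
def NN (d k : ℕ) : ℕ := (lk d k).length

lemma Pop_gw (M k : ℕ) (hk : M + 2 ≤ k) (N : ℕ) : ∃ K, 0 ≤ K ∧ ∀ (C : ℝ) (G : Q d × Q d → ℂ),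
    0 ≤ C → Sm G → Bd (D2 d) (fun x => jb x.2 ^ M) (N + NN d k) C G →
      ∀ x, ‖Pop (lk d k) G x‖ ≤ K * C * gw x := by
  obtain ⟨K, hK, h⟩ := Pop_bd (lk_adm (d := d) k) N
  refine ⟨K, hK, fun C G hC hG hb x => ?_⟩
  refine ((h _ C G hG hb).pt x).trans ?_
  rw [lk_prod]
  refine mul_le_mul_of_nonneg_left ?_ (by positivity)
  have h1 := one_le_jb x.2
  have h2 := jb_pos x.1
  have h3 := jb_pos x.2
  have : (jb x.2 ^ k)⁻¹ * jb x.2 ^ M ≤ (jb x.2 ^ 2)⁻¹ := by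
    rw [inv_mul_le_iff₀ (by positivity), ← div_eq_mul_inv, le_div_iff₀ (by positivity), ← pow_add]
    exact pow_le_pow_right₀ h1 hk
  calc (jb x.2 ^ k)⁻¹ * (jb x.1 ^ 2)⁻¹ * jb x.2 ^ M
      = (jb x.1 ^ 2)⁻¹ * ((jb x.2 ^ k)⁻¹ * jb x.2 ^ M) := by ring
    _ ≤ (jb x.1 ^ 2)⁻¹ * (jb x.2 ^ 2)⁻¹ := by gcongr
    _ = gw x := rfl

end conc

section cutoff
variable {E : Type*} [NormedAddCommGroup E] [NormedSpace ℝ E]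

lemma cut_bd {J : Type*} [Fintype J] (D : J → E) : ∀ (N : ℕ) {g : E → ℂ}, Sm g → HasCompactSupport g →
    ∃ K, 0 ≤ K ∧ ∀ s ∈ Set.Icc (0 : ℝ) 1, Bd D (fun _ => 1) N K (fun x => g (s • x)) := by
  have base : ∀ {g : E → ℂ}, Sm g → HasCompactSupport g → ∃ K, 0 ≤ K ∧ ∀ x, ‖g x‖ ≤ K := by
    intro g hg hs
    obtain ⟨K, hK⟩ := hs.exists_bound_of_continuous hg.continuous
    exact ⟨max K 0, le_max_right _ _, fun x => (hK x).trans (le_max_left _ _)⟩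
  intro N
  induction N with
  | zero =>
    intro g hg hs
    obtain ⟨K, h0, hK⟩ := base hg hs
    exact ⟨K, h0, fun s _ x => by simpa using hK _⟩
  | succ N ih =>
    intro g hg hs
    obtain ⟨K, h0, hK⟩ := base hg hs
    have := fun j => ih (hg.dirD (D j)) (hs.of_isClosed_subset (isClosed_tsupport _) (dirD_tsupport g (D j)))
    choose K' h0' hK' using this
    refine ⟨K + ∑ j, K' j, add_nonneg h0 (sum_nonneg fun j _ => h0' j), fun s hs => ⟨fun x => ?_, fun j => ?_⟩⟩
    · have : 0 ≤ ∑ j, K' j := sum_nonneg fun j _ => h0' j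
      have := hK (s • x)
      simp only [mul_one]; linarith
    · have e1 : dirD (D j) (fun x => g (s • x)) = (s : ℂ) • fun x => dirD (D j) g (s • x) := by
        have := dirD_comp hg (s • ContinuousLinearMap.id ℝ E) 0 (D j)
        simp only [zero_add, _root_.smul_apply, ContinuousLinearMap.id_apply] at this
        rw [this, dirD_smul_vec]; rfl
      have hsm : Sm (fun x => dirD (D j) g (s • x)) := by
        have := (hg.dirD (D j)).comp_aff (s • ContinuousLinearMap.id ℝ E) 0
        simpa using this
      rw [e1]
      refine ((hK' j s hs).smul (s : ℂ) hsm).mono_C ?_ (fun _ => zero_le_one)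
      have h1 : ‖(s : ℂ)‖ ≤ 1 := by
        rw [Complex.norm_real, Real.norm_eq_abs, abs_of_nonneg hs.1]; exact hs.2
      have h2 : K' j ≤ ∑ j, K' j := single_le_sum (f := K') (fun j _ => h0' j) (mem_univ j)
      have := h0' j
      nlinarith

variable [FiniteDimensional ℝ E]

/-- fixed bump -/
def bmp (E : Type*) [NormedAddCommGroup E] [NormedSpace ℝ E] [FiniteDimensional ℝ E] : ContDiffBump (0 : E) :=
  ⟨1, 2, one_pos, one_lt_two⟩

/-- cutoff sequence -/
def cut (n : ℕ) (x : E) : ℂ := ((bmp E (((n : ℝ) + 1)⁻¹ • x) : ℝ) : ℂ)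

lemma bmp_sm : Sm (fun x : E => ((bmp E x : ℝ) : ℂ)) :=
  Complex.ofRealCLM.contDiff.comp (bmp E).contDiff

lemma bmp_cs : HasCompactSupport (fun x : E => ((bmp E x : ℝ) : ℂ)) :=
  (bmp E).hasCompactSupport.comp_left (g := fun s : ℝ => (s : ℂ)) (by simp)

lemma cut_sm (n : ℕ) : Sm (cut n : E → ℂ) :=
  ContDiff.comp (g := fun x : E => ((bmp E x : ℝ) : ℂ)) bmp_sm (contDiff_const_smul (((n : ℝ) + 1)⁻¹))

lemma cut_cs (n : ℕ) : HasCompactSupport (cut n : E → ℂ) :=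
  (bmp_cs (E := E)).comp_homeomorph (Homeomorph.smulOfNeZero (((n : ℝ) + 1)⁻¹) (by positivity))

lemma cut_unif {J : Type*} [Fintype J] (D : J → E) (N : ℕ) :
    ∃ K, 0 ≤ K ∧ ∀ n, Bd D (fun _ => 1) N K (cut n : E → ℂ) := by
  obtain ⟨K, h0, h⟩ := cut_bd D N (bmp_sm (E := E)) bmp_cs
  refine ⟨K, h0, fun n => h _ ⟨by positivity, inv_le_one_of_one_le₀ ?_⟩⟩
  have : (0 : ℝ) ≤ n := Nat.cast_nonneg n
  linarith

lemma cut_one (x : E) : ∀ᶠ n : ℕ in Filter.atTop, ∀ᶠ y in nhds x, cut n y = 1 := by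
  obtain ⟨n0, hn0⟩ := exists_nat_ge (‖x‖ + 1)
  filter_upwards [Filter.eventually_ge_atTop n0] with n hn
  filter_upwards [Metric.ball_mem_nhds x one_pos] with y hy
  have h1 : ‖y‖ ≤ n := by
    have : ‖y‖ ≤ ‖x‖ + ‖y - x‖ := by
      have := norm_add_le x (y - x); simpa using this
    rw [mem_ball_iff_norm] at hy
    have : (n0 : ℝ) ≤ n := by exact_mod_cast hn
    linarith
  rw [cut, (bmp E).one_of_mem_closedBall]
  · simp
  · rw [mem_closedBall_zero_iff, norm_smul, norm_inv, Real.norm_eq_abs, abs_of_pos (by positivity)]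
    change _ ≤ (1 : ℝ)
    rw [inv_mul_le_iff₀ (by positivity)]
    linarith
end cutoff

section osc
variable {d : ℕ}

/-- oscillatory integral -/
def Osc (d k : ℕ) (G : Q d × Q d → ℂ) : ℂ := ∫ x, ee x * Pop (lk d k) G x

/-- total mass -/
def gI (d : ℕ) : ℝ := ∫ x : Q d × Q d, gw x

lemma gI_nonneg : 0 ≤ gI d := integral_nonneg gw_nonneg

lemma Pop_gw0 (M k : ℕ) (hk : M + 2 ≤ k) : ∃ K, 0 ≤ K ∧ ∀ (C : ℝ) (G : Q d × Q d → ℂ),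
    0 ≤ C → Sm G → Bd (D2 d) (fun x => jb x.2 ^ M) (NN d k) C G →
      ∀ x, ‖Pop (lk d k) G x‖ ≤ K * C * gw x := by
  obtain ⟨K, h0, h⟩ := Pop_gw (d := d) M k hk 0
  exact ⟨K, h0, fun C G hC hG hb => h C G hC hG (by simpa using hb)⟩

lemma eePop_cont (k : ℕ) {G : Q d × Q d → ℂ} (hG : Sm G) :
    Continuous fun x => ee x * Pop (lk d k) G x :=
  ee_sm.continuous.mul (Pop_sm (lk_sm k) hG).continuous

lemma osc_integrable {M k : ℕ} (hk : M + 2 ≤ k) {C : ℝ} (hC : 0 ≤ C) {G : Q d × Q d → ℂ} (hG : Sm G)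
    (hb : Bd (D2 d) (fun x => jb x.2 ^ M) (NN d k) C G) :
    Integrable fun x => ee x * Pop (lk d k) G x := by
  obtain ⟨K, h0, h⟩ := Pop_gw0 (d := d) M k hk
  refine (gw_int.const_mul (K * C)).mono' (eePop_cont k hG).aestronglyMeasurable ?_
  refine Filter.Eventually.of_forall fun x => ?_
  rw [norm_mul, ee_norm, one_mul]
  exact h C G hC hG hb x

lemma osc_bound (M k : ℕ) (hk : M + 2 ≤ k) : ∃ K, 0 ≤ K ∧ ∀ (C : ℝ) (G : Q d × Q d → ℂ),
    0 ≤ C → Sm G → Bd (D2 d) (fun x => jb x.2 ^ M) (NN d k) C G → ‖Osc d k G‖ ≤ K * C := by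
  obtain ⟨K, h0, h⟩ := Pop_gw0 (d := d) M k hk
  refine ⟨K * gI d, mul_nonneg h0 gI_nonneg, fun C G hC hG hb => ?_⟩
  have : ‖Osc d k G‖ ≤ ∫ x : Q d × Q d, K * C * gw x := by
    refine norm_integral_le_of_norm_le (gw_int.const_mul (K * C)) (Filter.Eventually.of_forall fun x => ?_)
    rw [norm_mul, ee_norm, one_mul]
    exact h C G hC hG hb x
  rw [integral_const_mul] at this
  calc _ ≤ _ := this
    _ = _ := by rw [gI]; ring

lemma osc_lim {M k : ℕ} (hk : M + 2 ≤ k) {C : ℝ} (hC : 0 ≤ C) {Gs : ℕ → Q d × Q d → ℂ}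
    {G : Q d × Q d → ℂ} (hG : ∀ n, Sm (Gs n))
    (hb : ∀ n, Bd (D2 d) (fun x => jb x.2 ^ M) (NN d k) C (Gs n))
    (hl : ∀ x, ∀ᶠ n in Filter.atTop, Gs n =ᶠ[nhds x] G) :
    Filter.Tendsto (fun n => Osc d k (Gs n)) Filter.atTop (nhds (Osc d k G)) := by
  obtain ⟨K, h0, h⟩ := Pop_gw0 (d := d) M k hk
  refine tendsto_integral_of_dominated_convergence (fun x => K * C * gw x)
    (fun n => (eePop_cont k (hG n)).aestronglyMeasurable) (gw_int.const_mul (K * C)) ?_ ?_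
  · intro n
    refine Filter.Eventually.of_forall fun x => ?_
    rw [norm_mul, ee_norm, one_mul]
    exact h C _ hC (hG n) (hb n) x
  · refine Filter.Eventually.of_forall fun x => ?_
    refine tendsto_const_nhds.congr' ?_
    filter_upwards [hl x] with n hn
    rw [(Pop_congr hn).eq_of_nhds]

/-- truncation -/
lemma osc_cut {M k : ℕ} (hk : M + 2 ≤ k) {C : ℝ} (hC : 0 ≤ C)
    {G : Q d × Q d → ℂ} (hG : Sm G) (hb : Bd (D2 d) (fun x => jb x.2 ^ M) (NN d k) C G) :
    Filter.Tendsto (fun n => ∫ x : Q d × Q d, ee x * ((cut n : Q d × Q d → ℂ) * G) x) Filter.atTop (nhds (Osc d k G)) := by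
  obtain ⟨K, h0, h⟩ := cut_unif (D2 d) (NN d k)
  have hs : ∀ n, Sm (cut n * G) := fun n => (cut_sm n).mul' hG
  have : ∀ n, ∫ x : Q d × Q d, ee x * ((cut n : Q d × Q d → ℂ) * G) x = Osc d k (cut n * G) := fun n =>
    lk_ibp k (hs n) ((cut_cs n).mul_right)
  simp_rw [this]
  refine osc_lim hk (C := 2 ^ (NN d k) * (K * C)) (by positivity) hs (fun n => ?_) fun x => ?_
  · have := (h n).mul (cut_sm n) hG hb
    simpa using this
  · filter_upwards [cut_one x] with n hn
    filter_upwards [hn] with y hy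
    simp [hy]

lemma osc_indep {M M' k k' : ℕ} (hk : M + 2 ≤ k) (hk' : M' + 2 ≤ k') {C C' : ℝ} (hC : 0 ≤ C)
    (hC' : 0 ≤ C') {G : Q d × Q d → ℂ} (hG : Sm G) 
    (hb : Bd (D2 d) (fun x => jb x.2 ^ M) (NN d k) C G)
    (hb' : Bd (D2 d) (fun x => jb x.2 ^ M') (NN d k') C' G) : Osc d k G = Osc d k' G :=
  tendsto_nhds_unique (osc_cut hk hC hG hb) (osc_cut hk' hC' hG hb')

/-- scaling -/
def sc (d : ℕ) (l : ℝ) : (Q d × Q d) →L[ℝ] (Q d × Q d) :=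
  ((ContinuousLinearMap.id ℝ ℝ).prodMap (l⁻¹ • ContinuousLinearMap.id ℝ (Fin d → ℝ))).prodMap
  ((ContinuousLinearMap.id ℝ ℝ).prodMap (l • ContinuousLinearMap.id ℝ (Fin d → ℝ)))

lemma sc_apply (l : ℝ) (x : Q d × Q d) :
    sc d l x = ((x.1.1, l⁻¹ • x.1.2), (x.2.1, l • x.2.2)) := rfl

lemma ee_sc {l : ℝ} (hl : 0 < l) (x : Q d × Q d) : ee (sc d l x) = ee x := by
  have : qdot (sc d l x).2 (sc d l x).1 = qdot x.2 x.1 := by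
    simp only [sc_apply, qdot, Pi.smul_apply, smul_eq_mul]
    congr 1
    refine sum_congr rfl fun i _ => ?_
    field_simp
  simp only [ee, this]

lemma sc_mp {l : ℝ} (hl : 0 < l) : MeasurePreserving (sc d l) := by
  refine ⟨(sc d l).continuous.measurable, ?_⟩
  have hdet : LinearMap.det ((sc d l : (Q d × Q d) →L[ℝ] (Q d × Q d)) : (Q d × Q d) →ₗ[ℝ] (Q d × Q d)) = 1 := by
    have : ((sc d l : (Q d × Q d) →L[ℝ] (Q d × Q d)) : (Q d × Q d) →ₗ[ℝ] (Q d × Q d)) =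
      (LinearMap.prodMap (LinearMap.prodMap LinearMap.id (l⁻¹ • LinearMap.id))
        (LinearMap.prodMap LinearMap.id (l • LinearMap.id))) := rfl
    rw [this, LinearMap.det_prodMap, LinearMap.det_prodMap, LinearMap.det_prodMap]
    simp only [LinearMap.det_id, LinearMap.det_smul, one_mul, mul_one]
    rw [← mul_pow, inv_mul_cancel₀ hl.ne', one_pow]
  have := Measure.map_linearMap_addHaar_eq_smul_addHaar (μ := (volume : Measure (Q d × Q d)))
    (f := ((sc d l : (Q d × Q d) →L[ℝ] (Q d × Q d)) : (Q d × Q d) →ₗ[ℝ] (Q d × Q d))) (by rw [hdet]; exact one_ne_zero)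
  rw [hdet] at this
  simpa using this

lemma sc_inv {l : ℝ} (hl : 0 < l) (x : Q d × Q d) : sc d l (sc d l⁻¹ x) = x := by
  simp [sc_apply, smul_smul, hl.ne']

/-- scaling homeomorphism -/
def scH (d : ℕ) {l : ℝ} (hl : 0 < l) : (Q d × Q d) ≃ₜ (Q d × Q d) where
  toFun := sc d l
  invFun := sc d l⁻¹
  left_inv x := by have := sc_inv (d := d) (inv_pos.2 hl) x; rwa [inv_inv] at this
  right_inv x := sc_inv hl x
  continuous_toFun := (sc d l).continuous
  continuous_invFun := (sc d l⁻¹).continuous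

lemma integral_sc {l : ℝ} (hl : 0 < l) (g : Q d × Q d → ℂ) :
    ∫ x, g (sc d l x) = ∫ x, g x :=
  (sc_mp hl).integral_comp (scH d hl).measurableEmbedding g

/-- scaling coefficients -/
def scm (d : ℕ) (l : ℝ) : Option (Fin d) ⊕ Option (Fin d) → ℝ
  | .inl none => 1
  | .inl (some _) => l⁻¹
  | .inr none => 1
  | .inr (some _) => l

lemma sc_D2 (l : ℝ) (j) : sc d l (D2 d j) = scm d l j • D2 d j := by
  rcases j with (_ | i) | (_ | i) <;> simp [sc_apply, scm, D2, ev, eR, eTh]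

lemma osc_sc {M M' k k' : ℕ} (hk : M + 2 ≤ k) (hk' : M' + 2 ≤ k') {C C' : ℝ} (hC : 0 ≤ C)
    (hC' : 0 ≤ C') {l : ℝ} (hl : 0 < l) {G : Q d × Q d → ℂ} (hG : Sm G) 
    (hb : Bd (D2 d) (fun x => jb x.2 ^ M) (NN d k) C G)
    (hb' : Bd (D2 d) (fun x => jb x.2 ^ M') (NN d k') C' (fun x => G (sc d l x))) :
    Osc d k G = Osc d k' (fun x => G (sc d l x)) := by
  refine tendsto_nhds_unique (osc_cut hk hC hG hb) ?_
  obtain ⟨K, h0, h⟩ := cut_unif (D2 d) (NN d k')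
  have hGs : Sm (fun x => G (sc d l x)) := by
    have := hG.comp_aff (sc d l) 0; simpa using this
  have hcs : ∀ n, Sm (fun x => (cut n (sc d l x) : ℂ)) := fun n => by
    have := (cut_sm n).comp_aff (sc d l) 0; simpa using this
  have hs : ∀ n, Sm ((fun x => cut n (sc d l x)) * (fun x => G (sc d l x))) := fun n => 
    (hcs n).mul' hGs
  have : ∀ n, ∫ x : Q d × Q d, ee x * ((cut n : Q d × Q d → ℂ) * G) x = Osc d k' ((fun x => cut n (sc d l x)) * (fun x => G (sc d l x))) := by
    intro n
    rw [← integral_sc hl]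
    simp_rw [ee_sc hl]
    exact lk_ibp k' (hs n) (((cut_cs n).comp_homeomorph (scH d hl)).mul_right)
  simp_rw [this]
  obtain ⟨A, hA1, hA⟩ : ∃ A : ℝ, 1 ≤ A ∧ ∀ j, |scm d l j| ≤ A := by
    refine ⟨1 + |l| + |l⁻¹|, by linarith [abs_nonneg l, abs_nonneg l⁻¹], fun j => ?_⟩
    rcases j with (_ | i) | (_ | i) <;> simp only [scm, abs_one] <;> linarith [abs_nonneg l, abs_nonneg l⁻¹]
  have hcb : ∀ n, Bd (D2 d) (fun _ => 1) (NN d k') (A ^ (NN d k') * K) (fun x => (cut n (sc d l x) : ℂ)) := by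
    intro n
    classical
    have := Bd.comp (D := D2 d) (D' := D2 d) (sc d l) 0 (fun i j => if i = j then scm d l i else 0)
      (by intro j; rw [sc_D2]; simp) A hA1
      (by intro j; simpa [apply_ite abs] using hA j) (cut_sm n) (h n)
    simpa using this
  refine osc_lim hk' (C := 2 ^ (NN d k') * (A ^ (NN d k') * K * C')) (by positivity) hs (fun n => ?_) fun x => ?_
  · have := (hcb n).mul (hcs n) hGs hb'
    simpa using this
  · filter_upwards [cut_one (sc d l x)] with n hn
    have := (sc d l).continuous.continuousAt.eventually hn
    filter_upwards [this] with y hy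
    simp [hy]

end osc

section weak
variable {d : ℕ}

/-- index set of directions -/
abbrev J3 (d : ℕ) : Type := Option (Fin d) ⊕ Option (Fin d) ⊕ Option (Fin d)

/-- directions in triple space -/
def D3 (d : ℕ) : J3 d → Q d × Q d × Q d
  | .inl j => (ev d j, 0, 0)
  | .inr (.inl j) => (0, ev d j, 0)
  | .inr (.inr j) => (0, 0, ev d j)

/-- embedding of phase space indices -/
def em3 (d : ℕ) : Option (Fin d) ⊕ Option (Fin d) → J3 d
  | .inl j => .inl j
  | .inr j => .inr (.inl j)

/-- slice variables indices -/
def sl (d : ℕ) : Option (Fin d) ⊕ Option (Fin d) → J3 d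
  | .inl j => .inr (.inr j)
  | .inr j => .inr (.inl j)

/-- the slice map in the fibre variables -/
def Ls (d : ℕ) (h : ℝ) : (Q d × Q d) →L[ℝ] (Q d × Q d × Q d) :=
  (0 : (Q d × Q d) →L[ℝ] Q d).prod ((h • ContinuousLinearMap.snd ℝ (Q d) (Q d)).prod
    (ContinuousLinearMap.fst ℝ (Q d) (Q d)))

/-- base embedding -/
def Lb (d : ℕ) : (Q d × Q d) →L[ℝ] (Q d × Q d × Q d) :=
  (ContinuousLinearMap.fst ℝ (Q d) (Q d)).prod ((ContinuousLinearMap.snd ℝ (Q d) (Q d)).prod 0)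

/-- joint map -/
def Lh (d : ℕ) (h : ℝ) : ((Q d × Q d) × (Q d × Q d)) →L[ℝ] (Q d × Q d × Q d) :=
  (Lb d).comp (ContinuousLinearMap.fst ℝ _ _) + (Ls d h).comp (ContinuousLinearMap.snd ℝ _ _)

lemma Lh_eq (h : ℝ) (x y : Q d × Q d) : Lh d h (x, y) = Lb d x + Ls d h y := rfl
lemma Lh_apply (h : ℝ) (x y : Q d × Q d) : Lh d h (x, y) = (x.1, x.2 + h • y.2, y.1) := by
  simp [Lh, Lb, Ls]
lemma Lb_apply (x : Q d × Q d) : Lb d x = (x.1, x.2, 0) := rfl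
lemma Ls_apply (h : ℝ) (y : Q d × Q d) : Ls d h y = (0, h • y.2, y.1) := rfl

lemma Lb_D2 (j) : Lb d (D2 d j) = D3 d (em3 d j) := by
  cases j <;> rfl

/-- weights -/
def lsm (d : ℕ) (h : ℝ) : Option (Fin d) ⊕ Option (Fin d) → ℝ
  | .inl _ => 1
  | .inr _ => h

lemma Ls_D2 (h : ℝ) (j) : Ls d h (D2 d j) = lsm d h j • D3 d (sl d j) := by
  cases j <;> simp [Ls_apply, D2, lsm, sl, D3]

lemma lsm_abs {h : ℝ} (hh : h ∈ Set.Ioc (0 : ℝ) 1) (j) : |lsm d h j| ≤ 1 := by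
  cases j
  · simp [lsm]
  · simp only [lsm]; rw [abs_of_pos hh.1]; exact hh.2

/-- Peetre constant -/
def PK (d : ℕ) : ℝ := 2 ^ (d + 1)

lemma PK_one : 1 ≤ PK d := one_le_pow₀ one_le_two

lemma jb_peetre {h : ℝ} (hh : h ∈ Set.Ioc (0 : ℝ) 1) (p z : Q d) :
    jb (p + h • z) ≤ PK d * jb p * jb z := by
  have : PK d = ∏ _j : Option (Fin d), (2 : ℝ) := by simp [PK]
  rw [this, jb, jb, jb, ← prod_mul_distrib, ← prod_mul_distrib]
  refine prod_le_prod (fun _ _ => norm_nonneg _) fun j _ => ?_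
  rw [map_add, map_smul, smul_eq_mul]
  have h1 := one_le_norm (co d j p)
  have h2 := one_le_norm (co d j z)
  have h3 : |co d j z| ≤ ‖(1 + Complex.I * (co d j z : ℂ))‖ := by
    rw [norm_one_add]; exact Real.abs_le_sqrt (by linarith)
  have h4 : ‖(1 + Complex.I * ((co d j p + h * co d j z : ℝ) : ℂ))‖ ≤
      ‖(1 + Complex.I * (co d j p : ℂ))‖ + |co d j z| := by
    have e : (1 + Complex.I * ((co d j p + h * co d j z : ℝ) : ℂ)) =
      (1 + Complex.I * (co d j p : ℂ)) + Complex.I * ((h * co d j z : ℝ) : ℂ) := by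
      push_cast; ring
    rw [e]
    refine (norm_add_le _ _).trans (add_le_add_right ?_ _)
    rw [norm_mul, Complex.norm_I, one_mul, Complex.norm_real, Real.norm_eq_abs, abs_mul,
      abs_of_pos hh.1]
    exact mul_le_of_le_one_left (abs_nonneg _) hh.2
  nlinarith

lemma Sm.sl {g : Q d × Q d × Q d → ℂ} (hg : Sm g) (h : ℝ) (x : Q d × Q d) :
    Sm (fun y => g (Lh d h (x, y))) := hg.comp_aff (Ls d h) (Lb d x)

lemma slice_bd {h : ℝ} (hh : h ∈ Set.Ioc (0 : ℝ) 1) {g : Q d × Q d × Q d → ℂ} (hg : Sm g)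
    {φ : Q d → ℝ} (hφ : ∀ w, 0 ≤ φ w) {M N : ℕ} {C : ℝ} (hC : 0 ≤ C)
    (hb : Bd (D3 d) (fun x => φ x.1 * jb x.2.1 ^ M) N C g) (x : Q d × Q d) :
    Bd (D2 d) (fun y => jb y.2 ^ M) N (C * (φ x.1 * (PK d * jb x.2) ^ M))
      (fun y => g (Lh d h (x, y))) := by
  classical
  have := Bd.comp (D := D2 d) (D' := D3 d) (Ls d h) (Lb d x)
    (fun i j => if sl d i = j then lsm d h i else 0)
      (by intro j; rw [Ls_D2]; simp) 1 le_rfl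
      (by intro j; simpa [apply_ite abs] using lsm_abs hh j) hg hb
  refine this.mono fun y => ?_
  rw [← Lh_eq, Lh_apply]
  simp only [one_pow, one_mul]
  have h1 := jb_peetre hh x.2 y.2
  have h2 := jb_pos (x.2 + h • y.2)
  have := hφ x.1
  calc C * (φ x.1 * jb (x.2 + h • y.2) ^ M) ≤ C * (φ x.1 * (PK d * jb x.2 * jb y.2) ^ M) := by gcongr
    _ = _ := by rw [mul_pow (PK d * jb x.2)]; ring

/-- weak amplitudes -/
def W (d M : ℕ) (g : Q d × Q d × Q d → ℂ) : Prop :=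
  Sm g ∧ ∀ N, ∃ φ : Q d → ℝ, Continuous φ ∧ (∀ w, 0 ≤ φ w) ∧
    Bd (D3 d) (fun x => φ x.1 * jb x.2.1 ^ M) N 1 g

lemma W.dir {M : ℕ} {g : Q d × Q d × Q d → ℂ} (hg : W d M g) (j) : W d M (dirD (D3 d j) g) := by
  refine ⟨hg.1.dirD _, fun N => ?_⟩
  obtain ⟨φ, h1, h2, h3⟩ := hg.2 (N + 1)
  exact ⟨φ, h1, h2, h3.2 j⟩

lemma W.add {M : ℕ} {g g' : Q d × Q d × Q d → ℂ} (hg : W d M g) (hg' : W d M g') : W d M (g + g') := by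
  refine ⟨hg.1.add' hg'.1, fun N => ?_⟩
  obtain ⟨φ, h1, h2, h3⟩ := hg.2 N
  obtain ⟨φ', h1', h2', h3'⟩ := hg'.2 N
  refine ⟨fun w => 2 * (φ w + φ' w), by fun_prop, fun w => by have := h2 w; have := h2' w; positivity, ?_⟩
  have k1 : Bd (D3 d) (fun x => (φ x.1 + φ' x.1) * jb x.2.1 ^ M) N 1 g := h3.mono fun x => by
    have := jb_pos x.2.1; have := h2' x.1; gcongr; linarith
  have k2 : Bd (D3 d) (fun x => (φ x.1 + φ' x.1) * jb x.2.1 ^ M) N 1 g' := h3'.mono fun x => by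
    have := jb_pos x.2.1; have := h2 x.1; gcongr; linarith
  exact (k1.add hg.1 hg'.1 k2).mono fun x => by apply le_of_eq; ring

lemma W.smul {M : ℕ} {g : Q d × Q d × Q d → ℂ} (hg : W d M g) (c : ℂ) : W d M (c • g) := by
  refine ⟨hg.1.smul' c, fun N => ?_⟩
  obtain ⟨φ, h1, h2, h3⟩ := hg.2 N
  refine ⟨fun w => ‖c‖ * φ w, by fun_prop, fun w => by have := h2 w; positivity, ?_⟩
  exact (h3.smul c hg.1).mono fun x => by apply le_of_eq; ring

lemma W.sum {M : ℕ} {K : Type*} (s : Finset K) {g : K → Q d × Q d × Q d → ℂ} (hg : ∀ k, W d M (g k)) :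
    W d M (∑ k ∈ s, g k) := by
  classical
  induction s using Finset.induction_on with
  | empty =>
    simp only [Finset.sum_empty]
    exact ⟨contDiff_const, fun N => ⟨fun _ => 0, continuous_const, fun _ => le_rfl,
      Bd.zero_fun (by simp)⟩⟩
  | insert a s ha ih => rw [sum_insert ha]; exact (hg a).add ih

/-- the constant -/
def c0 (d : ℕ) : ℂ := (((2 * Real.pi) ^ (d + 1) : ℝ) : ℂ)⁻¹

/-- the symbol -/
def bb (d k : ℕ) (h : ℝ) (g : Q d × Q d × Q d → ℂ) (x : Q d × Q d) : ℂ :=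
  c0 d * Osc d k (fun y => g (Lh d h (x, y)))

lemma W.sl_bd {M : ℕ} {g : Q d × Q d × Q d → ℂ} (hg : W d M g) {h : ℝ} (hh : h ∈ Set.Ioc (0 : ℝ) 1)
    (N : ℕ) (x : Q d × Q d) : ∃ C, 0 ≤ C ∧ Bd (D2 d) (fun y => jb y.2 ^ M) N C (fun y => g (Lh d h (x, y))) := by
  obtain ⟨φ, h1, h2, h3⟩ := hg.2 N
  refine ⟨_, ?_, slice_bd hh hg.1 h2 zero_le_one h3 x⟩
  have := h2 x.1; have := jb_pos x.2; have := PK_one (d := d); positivity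

lemma W.int {M k : ℕ} (hk : M + 2 ≤ k) {g : Q d × Q d × Q d → ℂ} (hg : W d M g) {h : ℝ}
    (hh : h ∈ Set.Ioc (0 : ℝ) 1) (x : Q d × Q d) :
    Integrable fun y => ee y * Pop (lk d k) (fun y => g (Lh d h (x, y))) y := by
  obtain ⟨C, hC, hb⟩ := hg.sl_bd hh (NN d k) x
  exact osc_integrable hk hC (hg.1.sl h x) hb

lemma bb_add {M k : ℕ} (hk : M + 2 ≤ k) {g g' : Q d × Q d × Q d → ℂ} (hg : W d M g) (hg' : W d M g') {h : ℝ}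
    (hh : h ∈ Set.Ioc (0 : ℝ) 1) : bb d k h (g + g') = bb d k h g + bb d k h g' := by
  funext x
  have e : (fun y => (g + g') (Lh d h (x, y))) = (fun y => g (Lh d h (x, y))) + (fun y => g' (Lh d h (x, y))) := rfl
  simp only [bb, Osc]
  rw [e]
  simp only [Pi.add_apply, bb, Osc, ← mul_add]
  rw [Pop_add (lk_sm k) (hg.1.sl h x) (hg'.1.sl h x), ← integral_add (hg.int hk hh x) (hg'.int hk hh x)]
  simp only [Pi.add_apply, mul_add]

lemma bb_smul {k : ℕ} {g : Q d × Q d × Q d → ℂ} (hg : Sm g) (h : ℝ) (c : ℂ) :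
    bb d k h (c • g) = c • bb d k h g := by
  funext x
  have e : (fun y => (c • g) (Lh d h (x, y))) = c • (fun y => g (Lh d h (x, y))) := rfl
  simp only [bb, Osc]
  rw [e]
  simp only [Pi.smul_apply, bb, Osc]
  rw [Pop_smul (lk_sm k) c (hg.sl h x)]
  simp only [Pi.smul_apply, smul_eq_mul, mul_left_comm _ c, integral_const_mul]

lemma bb_sum {M k : ℕ} (hk : M + 2 ≤ k) {K : Type*} (s : Finset K) {g : K → Q d × Q d × Q d → ℂ}
    (hg : ∀ k, W d M (g k)) {h : ℝ}
    (hh : h ∈ Set.Ioc (0 : ℝ) 1) : bb d k h (∑ i ∈ s, g i) = ∑ i ∈ s, bb d k h (g i) := by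
  classical
  induction s using Finset.induction_on with
  | empty =>
    have := bb_smul (k := k) (contDiff_const : Sm (0 : Q d × Q d × Q d → ℂ)) h 0
    simpa using this
  | insert a s ha ih => rw [sum_insert ha, sum_insert ha, bb_add hk (hg a) (W.sum s hg) hh, ih]

lemma clm_norm_le (T : (Q d × Q d) →L[ℝ] ℂ) : ‖T‖ ≤ ∑ j, ‖T (D2 d j)‖ := by
  refine T.opNorm_le_bound (sum_nonneg fun _ _ => norm_nonneg _) fun x => ?_
  have hco : ∀ j (q : Q d), |co d j q| ≤ ‖q‖ := by
    intro j q
    cases j with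
    | none => exact norm_fst_le q
    | some i => exact (norm_le_pi_norm q.2 i).trans (norm_snd_le q)
  have hx : x = ∑ j, co d j x.1 • D2 d (.inl j) + ∑ j, co d j x.2 • D2 d (.inr j) := by
    ext1
    · simp only [D2, Prod.smul_mk, smul_zero, Prod.fst_add, Prod.fst_sum, sum_const_zero, add_zero]
      exact q_repr x.1
    · simp only [D2, Prod.smul_mk, smul_zero, Prod.snd_add, Prod.snd_sum, sum_const_zero, zero_add]
      exact q_repr x.2
  have : T x = ∑ j, co d j x.1 • T (D2 d (.inl j)) + ∑ j, co d j x.2 • T (D2 d (.inr j)) := by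
    conv_lhs => rw [hx]
    simp only [map_add, map_sum, map_smul]
  rw [this, Fintype.sum_sum_type, add_mul]
  refine (norm_add_le _ _).trans (add_le_add ?_ ?_)
  · refine (norm_sum_le _ _).trans ?_
    rw [sum_mul]
    refine sum_le_sum fun j _ => ?_
    rw [norm_smul, mul_comm]
    exact mul_le_mul_of_nonneg_left ((hco j _).trans (norm_fst_le x)) (norm_nonneg _)
  · refine (norm_sum_le _ _).trans ?_
    rw [sum_mul]
    refine sum_le_sum fun j _ => ?_
    rw [norm_smul, mul_comm]
    exact mul_le_mul_of_nonneg_left ((hco j _).trans (norm_snd_le x)) (norm_nonneg _)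

lemma bb_hasFDeriv {M k : ℕ} (hk : M + 2 ≤ k) {g : Q d × Q d × Q d → ℂ} (hg : W d M g) {h : ℝ}
    (hh : h ∈ Set.Ioc (0 : ℝ) 1) (x : Q d × Q d) :
    DifferentiableAt ℝ (bb d k h g) x ∧ ∀ v, fderiv ℝ (bb d k h g) x v = bb d k h (dirD (Lb d v) g) x := by
  set G : (Q d × Q d) × (Q d × Q d) → ℂ := fun z => g (Lh d h z) with hGdef
  have hG : Sm G := by simpa using hg.1.comp_aff (Lh d h) 0
  set P := Pop (liftl (Q d × Q d) (lk d k)) G with hP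
  have hPs : Sm P := Pop_sm (liftl_sm (lk_sm k)) hG
  have hPd : ∀ v x y, dirD (v, (0 : Q d × Q d)) P (x, y) =
      Pop (lk d k) (fun y => dirD (Lb d v) g (Lh d h (x, y))) y := by
    intro v x y
    rw [hP, Pop_dirD (liftl_sm (lk_sm k)) _ _ hG]
    · have e : dirD (v, (0 : Q d × Q d)) G = fun z => dirD (Lb d v) g (Lh d h z) := by
        have := dirD_comp hg.1 (Lh d h) 0 (v, 0)
        simp only [zero_add] at this
        rw [hGdef, this]
        have e2 : Lh d h (v, 0) = Lb d v := by rw [Lh_eq, map_zero, add_zero]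
        rw [e2]
      have hs : Sm (fun z => dirD (Lb d v) g (Lh d h z)) := by
        simpa using (hg.1.dirD (Lb d v)).comp_aff (Lh d h) 0
      rw [e]
      exact (congrFun (Pop_slice (lk_sm k) hs x) y).symm
    · intro c hc
      obtain ⟨c', hc', rfl⟩ := List.mem_map.1 hc
      funext z
      have hs : Sm (fun z : (Q d × Q d) × (Q d × Q d) => c'.1 z.2) :=
        ContDiff.comp (g := c'.1) (lk_sm k c' hc') contDiff_snd
      have := dirD_slice_left hs z.1 v z.2
      rw [← this]
      simp [dirD]
  obtain ⟨φ, p1, p2, p3⟩ := hg.2 (NN d k + 1)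
  obtain ⟨K, hK, hKb⟩ := Pop_gw0 (d := d) M k hk
  have hPb : ∀ j x y, ‖dirD (D2 d j, (0 : Q d × Q d)) P (x, y)‖ ≤
      K * (1 * (φ x.1 * (PK d * jb x.2) ^ M)) * gw y := by
    intro j x y
    rw [hPd]
    refine hKb _ _ ?_ ((hg.1.dirD _).sl h x) ?_ y
    · have := p2 x.1; have := jb_pos x.2; have := PK_one (d := d); positivity
    · rw [Lb_D2]
      exact slice_bd hh (hg.1.dirD _) p2 zero_le_one (p3.2 _) x
  set ψ : Q d × Q d → ℝ := fun x => K * (1 * (φ x.1 * (PK d * jb x.2) ^ M)) with hψ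
  have hψc : Continuous ψ := by
    have := jb_cont (d := d); rw [hψ]; fun_prop
  set F : Q d × Q d → Q d × Q d → ℂ := fun x y => ee y * P (x, y) with hF
  set F' : Q d × Q d → Q d × Q d → ((Q d × Q d) →L[ℝ] ℂ) := fun x y =>
    ee y • (fderiv ℝ P (x, y)).comp (ContinuousLinearMap.inl ℝ (Q d × Q d) (Q d × Q d)) with hF'
  have hFO : ∀ x, bb d k h g x = c0 d * ∫ y, F x y := by
    intro x
    rw [bb, Osc, Pop_slice (lk_sm k) hG x]
  have hF'a : ∀ x y v, F' x y v = ee y * Pop (lk d k) (fun y => dirD (Lb d v) g (Lh d h (x, y))) y := by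
    intro x y v
    rw [← hPd]
    simp [hF', dirD]
  have hfd : ContDiff ℝ (⊤ : ℕ∞) (fderiv ℝ P) := ContDiff.fderiv_right hPs (by simp)
  have hmeas : AEStronglyMeasurable (F' x) volume := by
    refine Continuous.aestronglyMeasurable ?_
    refine ee_sm.continuous.smul ?_
    have h1 : Continuous fun y => fderiv ℝ P (x, y) := hfd.continuous.comp (by fun_prop)
    exact h1.clm_comp continuous_const
  have hbd : ∀ y, ∀ x' ∈ {x' | ψ x' < ψ x + 1}, ‖F' x' y‖ ≤
      (Fintype.card (Option (Fin d) ⊕ Option (Fin d)) : ℝ) * ((ψ x + 1) * gw y) := by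
    intro y x' hx'
    refine (clm_norm_le _).trans ?_
    rw [← nsmul_eq_mul, ← Finset.card_univ, ← Finset.sum_const]
    refine sum_le_sum fun j _ => ?_
    have : ‖F' x' y (D2 d j)‖ = ‖dirD (D2 d j, (0 : Q d × Q d)) P (x', y)‖ := by
      simp [hF', dirD, ee_norm]
    rw [this]
    refine (hPb j x' y).trans ?_
    exact mul_le_mul_of_nonneg_right (le_of_lt hx') (gw_nonneg y)
  have main := hasFDerivAt_integral_of_dominated_of_fderiv_le (μ := (volume : Measure (Q d × Q d)))
    (F := F) (F' := F') (x₀ := x) (s := {x' | ψ x' < ψ x + 1})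
    (bound := fun y => (Fintype.card (Option (Fin d) ⊕ Option (Fin d)) : ℝ) * ((ψ x + 1) * gw y))
    ((isOpen_lt hψc continuous_const).mem_nhds (by simp))
    (Filter.Eventually.of_forall fun x' => by
      have := (hPs.slice x').continuous
      exact (ee_sm.continuous.mul this).aestronglyMeasurable)
    (by
      have := hg.int hk hh x
      have e := Pop_slice (lk_sm (d := d) k) hG x
      simp only [hGdef] at e
      rw [e] at this
      exact this)
    hmeas
    (Filter.Eventually.of_forall hbd)
    ((gw_int.const_mul _).const_mul _)
    (Filter.Eventually.of_forall fun y x' hx' => by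
      have h1 : HasFDerivAt (fun x' : Q d × Q d => P (x', y)) _ x' :=
        ((hPs.diff (x', y)).hasFDerivAt).comp x' (hasFDerivAt_prodMk_left x' y)
      exact h1.const_mul (ee y))
  have hint : Integrable (F' x) :=
    ((gw_int.const_mul _).const_mul _).mono' hmeas (Filter.Eventually.of_forall fun y => hbd y x (by simp))
  have main2 := main.const_mul (c0 d)
  have e0 : (fun x => c0 d * ∫ y, F x y) = bb d k h g := (funext hFO).symm
  rw [e0] at main2
  refine ⟨main2.differentiableAt, fun v => ?_⟩
  rw [main2.fderiv, _root_.smul_apply, ContinuousLinearMap.integral_apply hint, smul_eq_mul, bb, Osc]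
  simp only [hF'a]

lemma W.dirLb {M : ℕ} {g : Q d × Q d × Q d → ℂ} (hg : W d M g) (v : Q d × Q d) :
    W d M (dirD (Lb d v) g) := by
  have hx : v = ∑ j, co d j v.1 • D2 d (.inl j) + ∑ j, co d j v.2 • D2 d (.inr j) := by
    ext1
    · simp only [D2, Prod.smul_mk, smul_zero, Prod.fst_add, Prod.fst_sum, sum_const_zero, add_zero]
      exact q_repr v.1
    · simp only [D2, Prod.smul_mk, smul_zero, Prod.snd_add, Prod.snd_sum, sum_const_zero, zero_add]
      exact q_repr v.2
  rw [hx, map_add, map_sum, map_sum, dirD_add_vec]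
  simp only [map_smul, Lb_D2, dirD_sum_vec]
  exact (W.sum _ fun k => (hg.dir _).smul _).add (W.sum _ fun k => (hg.dir _).smul _)

lemma bb_sm {M k : ℕ} (hk : M + 2 ≤ k) {h : ℝ} (hh : h ∈ Set.Ioc (0 : ℝ) 1)
    {g : Q d × Q d × Q d → ℂ} (hg : W d M g) : Sm (bb d k h g) := by
  have : ∀ n : ℕ, ∀ g : Q d × Q d × Q d → ℂ, W d M g → ContDiff ℝ n (bb d k h g) := by
    intro n
    induction n with
    | zero =>
      intro g hg
      exact contDiff_zero.2 (continuous_iff_continuousAt.2 fun x => (bb_hasFDeriv hk hg hh x).1.continuousAt)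
    | succ n ih =>
      intro g hg
      push_cast
      rw [contDiff_succ_iff_fderiv]
      refine ⟨fun x => (bb_hasFDeriv hk hg hh x).1, by simp, ?_⟩
      rw [contDiff_clm_apply_iff]
      intro v
      have : (fun x => fderiv ℝ (bb d k h g) x v) = bb d k h (dirD (Lb d v) g) := by
        funext x; exact (bb_hasFDeriv hk hg hh x).2 v
      rw [this]
      exact ih _ (hg.dirLb v)
  exact contDiff_infty.2 fun n => this n g hg

lemma bb_dir {M k : ℕ} (hk : M + 2 ≤ k) {h : ℝ} (hh : h ∈ Set.Ioc (0 : ℝ) 1)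
    {g : Q d × Q d × Q d → ℂ} (hg : W d M g) (j) :
    dirD (D2 d j) (bb d k h g) = bb d k h (dirD (D3 d (em3 d j)) g) := by
  funext x
  rw [dirD, (bb_hasFDeriv hk hg hh x).2, Lb_D2]

/-- weak bounds for the symbol -/
lemma bb_wbd {M k : ℕ} (hk : M + 2 ≤ k) {h : ℝ} (hh : h ∈ Set.Ioc (0 : ℝ) 1) :
    ∃ K, 0 ≤ K ∧ ∀ (N : ℕ) (φ : Q d → ℝ) (C : ℝ) (g : Q d × Q d × Q d → ℂ), (∀ w, 0 ≤ φ w) → 0 ≤ C →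
      W d M g → Bd (D3 d) (fun x => φ x.1 * jb x.2.1 ^ M) (N + NN d k) C g →
      Bd (D2 d) (fun x => φ x.1 * jb x.2 ^ M) N (K * C) (bb d k h g) := by
  obtain ⟨K, hK, hb⟩ := osc_bound (d := d) M k hk
  refine ⟨‖c0 d‖ * K * PK d ^ M, by have := PK_one (d := d); positivity, fun N => ?_⟩
  have base : ∀ (φ : Q d → ℝ) (C : ℝ) (g : Q d × Q d × Q d → ℂ), (∀ w, 0 ≤ φ w) → 0 ≤ C →
      W d M g → Bd (D3 d) (fun x => φ x.1 * jb x.2.1 ^ M) (NN d k) C g →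
      ∀ x : Q d × Q d, ‖bb d k h g x‖ ≤ ‖c0 d‖ * K * PK d ^ M * C * (φ x.1 * jb x.2 ^ M) := by
    intro φ C g hφ hC hg h1 x
    have := hb _ _ ?_ (hg.1.sl h x) (slice_bd hh hg.1 hφ hC h1 x)
    · rw [bb, norm_mul]
      calc _ ≤ ‖c0 d‖ * (K * (C * (φ x.1 * (PK d * jb x.2) ^ M))) := by gcongr
        _ = _ := by rw [mul_pow]; ring
    · have := hφ x.1; have := jb_pos x.2; have := PK_one (d := d); positivity
  induction N with
  | zero =>
    intro φ C g hφ hC hg h1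
    exact base φ C g hφ hC hg (by simpa using h1)
  | succ N ih =>
    intro φ C g hφ hC hg h1
    refine ⟨base φ C g hφ hC hg (h1.mono_N (by omega)), fun j => ?_⟩
    rw [bb_dir hk hh hg]
    refine ih φ C _ hφ hC (hg.dir _) ?_
    have e : N + 1 + NN d k = (N + NN d k) + 1 := by omega
    rw [e] at h1
    exact h1.2 _

end weak

section words
variable {E : Type*} [NormedAddCommGroup E] [NormedSpace ℝ E] {J : Type*} {d : ℕ}

/-- derivative along a word -/
def dw (D : J → E) (l : List J) (g : E → ℂ) : E → ℂ := l.foldr (fun j h => dirD (D j) h) g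

lemma dw_sm (D : J → E) (l : List J) {g : E → ℂ} (hg : Sm g) : Sm (dw D l g) := by
  induction l with
  | nil => exact hg
  | cons j l ih => exact ih.dirD _

lemma dw_append (D : J → E) (l l' : List J) (g : E → ℂ) : dw D (l ++ l') g = dw D l (dw D l' g) := by
  simp [dw, List.foldr_append]

lemma dw_perm (D : J → E) {l l' : List J} (h : l.Perm l') {g : E → ℂ} (hg : Sm g) :
    dw D l g = dw D l' g := by
  induction h with
  | nil => rfl
  | cons x _ ih => exact congrArg (dirD (D x)) ih
  | swap x y l => exact dirD_comm (dw_sm D l hg) _ _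
  | trans _ _ h1 h2 => exact h1.trans h2

/-- word of a multiindex -/
def wd (c : Option (Fin d) → J) (α : MIdx d) : List J :=
  List.replicate α.1 (c none) ++ (List.finRange d).flatMap fun i => List.replicate (α.2 i) (c (some i))

lemma dw_replicate (D : J → E) (n : ℕ) (j : J) (g : E → ℂ) :
    dw D (List.replicate n j) g = (dirD (D j))^[n] g := by
  induction n with
  | zero => rfl
  | succ n ih => rw [Function.iterate_succ_apply', ← ih]; rfl

lemma dw_wd (D : J → E) (c : Option (Fin d) → J) (α : MIdx d) (g : E → ℂ) :
    dw D (wd c α) g = (dirD (D (c none)))^[α.1]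
      ((List.finRange d).foldr (fun i h => (dirD (D (c (some i))))^[α.2 i] h) g) := by
  rw [wd, dw_append, dw_replicate]
  congr 1
  induction (List.finRange d) with
  | nil => rfl
  | cons i l ih => rw [List.flatMap_cons, dw_append, dw_replicate, ih]; rfl

lemma wd_sum (c : Option (Fin d) → J) (α : MIdx d) (w : J → ℝ) :
    ((wd c α).map w).sum = α.1 * w (c none) + ∑ i, α.2 i * w (c (some i)) := by
  rw [wd, List.map_append, List.sum_append, List.map_replicate, List.sum_replicate, nsmul_eq_mul,
    Fin.sum_univ_def]
  congr 1
  induction (List.finRange d) with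
  | nil => rfl
  | cons i l ih => 
    rw [List.flatMap_cons, List.map_append, List.sum_append, List.map_replicate, List.sum_replicate,
      nsmul_eq_mul, ih]; simp

lemma wd_length (c : Option (Fin d) → J) (α : MIdx d) : (wd c α).length = deg α := by
  rw [wd, List.length_append, List.length_replicate, deg, Fin.sum_univ_def, List.length_flatMap]
  simp

lemma wd_count [DecidableEq J] (c : Option (Fin d) → J) (hc : Function.Injective c) (α : MIdx d) (j : Option (Fin d)) :
    (wd c α).count (c j) = j.elim α.1 α.2 := by
  rw [wd, List.count_append, List.count_flatMap]
  have e : ((List.finRange d).map (List.count (c j) ∘ fun i => List.replicate (α.2 i) (c (some i)))).sum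
      = ∑ i, if some i = j then α.2 i else 0 := by
    rw [Fin.sum_univ_def]
    congr 1
    refine List.map_congr_left fun i _ => ?_
    simp [List.count_replicate, hc.eq_iff]
  rw [e, List.count_replicate]
  cases j with
  | none => simp
  | some i => simp [hc.eq_iff]

lemma wd_count0 [DecidableEq J] (c : Option (Fin d) → J) (α : MIdx d) (k : J) (hk : ∀ j, c j ≠ k) :
    (wd c α).count k = 0 := by
  rw [List.count_eq_zero]
  intro h
  simp only [wd, List.mem_append, List.mem_flatMap, List.mem_replicate] at h
  rcases h with ⟨_, h⟩ | ⟨i, _, _, h⟩ <;> exact hk _ h.symm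

/-- normal form of a word -/
def nf (α β γ : MIdx d) : List (J3 d) :=
  wd .inl α ++ (wd (fun j => .inr (.inl j)) β ++ wd (fun j => .inr (.inr j)) γ)

lemma nf_perm_aux [DecidableEq J] (c1 c2 c3 : Option (Fin d) → J) (h1 : Function.Injective c1)
    (h2 : Function.Injective c2) (h3 : Function.Injective c3) (h12 : ∀ i j, c1 i ≠ c2 j)
    (h13 : ∀ i j, c1 i ≠ c3 j) (h23 : ∀ i j, c2 i ≠ c3 j)
    (hs : ∀ k, (∃ j, k = c1 j) ∨ (∃ j, k = c2 j) ∨ (∃ j, k = c3 j)) (l : List J) :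
    ∃ α β γ : MIdx d, l.Perm (wd c1 α ++ (wd c2 β ++ wd c3 γ)) := by
  refine ⟨(l.count (c1 none), fun i => l.count (c1 (some i))),
    (l.count (c2 none), fun i => l.count (c2 (some i))),
    (l.count (c3 none), fun i => l.count (c3 (some i))), ?_⟩
  rw [List.perm_iff_count]
  intro k
  rw [List.count_append, List.count_append]
  rcases hs k with ⟨j, rfl⟩ | ⟨j, rfl⟩ | ⟨j, rfl⟩
  · rw [wd_count _ h1, wd_count0 c2 _ _ (fun i => (h12 j i).symm), wd_count0 c3 _ _ (fun i => (h13 j i).symm)]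
    cases j <;> simp
  · rw [wd_count0 c1 _ _ (fun i => h12 i j), wd_count _ h2, wd_count0 c3 _ _ (fun i => (h23 j i).symm)]
    cases j <;> simp
  · rw [wd_count0 c1 _ _ (fun i => h13 i j), wd_count0 c2 _ _ (fun i => h23 i j), wd_count _ h3]
    cases j <;> simp

lemma nf_perm (l : List (J3 d)) : ∃ α β γ : MIdx d, l.Perm (nf α β γ) := by
  classical
  refine nf_perm_aux (J := J3 d) (d := d) Sum.inl (fun j => .inr (.inl j)) (fun j => .inr (.inr j)) Sum.inl_injective
    (Sum.inr_injective.comp Sum.inl_injective) (Sum.inr_injective.comp Sum.inr_injective)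
    (fun _ _ => by simp) (fun _ _ => by simp) (fun _ _ => by simp) (fun k => ?_) l
  rcases k with j | j | j
  · exact Or.inl ⟨j, rfl⟩
  · exact Or.inr (Or.inl ⟨j, rfl⟩)
  · exact Or.inr (Or.inr ⟨j, rfl⟩)

lemma mderiv3_eq (α β γ : MIdx d) (g : Q d × Q d × Q d → ℂ) :
    mderiv3 α β γ g = dw (D3 d) (nf α β γ) g := by
  rw [nf, dw_append, dw_append, dw_wd, dw_wd, dw_wd]; rfl

lemma mderiv2_eq (α β : MIdx d) (g : Q d × Q d → ℂ) :
    mderiv2 α β g = dw (D2 d) (wd .inl α ++ wd .inr β) g := by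
  rw [dw_append, dw_wd, dw_wd]; rfl

/-- angular weight -/
def wt (d : ℕ) : J3 d → ℝ
  | .inl none => 0
  | .inl (some _) => 1
  | .inr (.inl none) => 0
  | .inr (.inl (some _)) => -1
  | .inr (.inr none) => 0
  | .inr (.inr (some _)) => 1

/-- momentum weight -/
def wp (d : ℕ) : J3 d → ℝ
  | .inl _ => 0
  | .inr (.inl _) => 1
  | .inr (.inr _) => 0

lemma nf_wt (α β γ : MIdx d) : ((nf α β γ).map (wt d)).sum = (degA α : ℝ) - degA β + degA γ := by
  rw [nf, List.map_append, List.map_append, List.sum_append, List.sum_append, wd_sum, wd_sum, wd_sum]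
  simp [wt, degA]; ring

lemma nf_wp (α β γ : MIdx d) : ((nf α β γ).map (wp d)).sum = (deg β : ℝ) := by
  rw [nf, List.map_append, List.map_append, List.sum_append, List.sum_append, wd_sum, wd_sum, wd_sum]
  simp [wp, deg]

lemma nf_length (α β γ : MIdx d) : (nf α β γ).length = deg α + deg β + deg γ := by
  rw [nf, List.length_append, List.length_append, wd_length, wd_length, wd_length, add_assoc]

end words

section abd
variable {d : ℕ}

/-- weighted bounds -/
def ABd (F B : Q d × Q d × Q d → ℝ) (e : J3 d → ℝ) : ℕ → ℝ → ℝ → ℝ → (Q d × Q d × Q d → ℂ) → Prop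
  | 0, s, μ, C, g => ∀ x, ‖g x‖ ≤ C * (F x ^ s * B x ^ μ)
  | (N+1), s, μ, C, g => (∀ x, ‖g x‖ ≤ C * (F x ^ s * B x ^ μ)) ∧
      ∀ j, ABd F B e N (s + wt d j) (μ - e j) C (dirD (D3 d j) g)

variable {F B : Q d × Q d × Q d → ℝ} {e : J3 d → ℝ}

lemma ABd.pt {N : ℕ} {s μ C : ℝ} {g : Q d × Q d × Q d → ℂ} (h : ABd F B e N s μ C g) (x) :
    ‖g x‖ ≤ C * (F x ^ s * B x ^ μ) := by
  cases N with
  | zero => exact h x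
  | succ N => exact h.1 x

lemma ABd.pred {N : ℕ} : ∀ {s μ C : ℝ} {g : Q d × Q d × Q d → ℂ}, ABd F B e (N+1) s μ C g → ABd F B e N s μ C g := by
  induction N with
  | zero => intro s μ C g h; exact h.1
  | succ N ih => intro s μ C g h; exact ⟨h.1, fun j => ih (h.2 j)⟩

lemma ABd.mono_N {N M : ℕ} {s μ C : ℝ} {g : Q d × Q d × Q d → ℂ} (h : ABd F B e N s μ C g) (hM : M ≤ N) :
    ABd F B e M s μ C g := by
  induction N, hM using Nat.le_induction with
  | base => exact h
  | succ n hn ih => exact ih h.pred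

lemma ABd.of_words {N : ℕ} : ∀ {s μ C : ℝ} {g : Q d × Q d × Q d → ℂ},
    (∀ l : List (J3 d), l.length ≤ N → ∀ x, ‖dw (D3 d) l g x‖ ≤
      C * (F x ^ (s + (l.map (wt d)).sum) * B x ^ (μ - (l.map e).sum))) → ABd F B e N s μ C g := by
  have base : ∀ {N : ℕ} {s μ C : ℝ} {g : Q d × Q d × Q d → ℂ},
    (∀ l : List (J3 d), l.length ≤ N → ∀ x, ‖dw (D3 d) l g x‖ ≤
      C * (F x ^ (s + (l.map (wt d)).sum) * B x ^ (μ - (l.map e).sum))) → 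
      ∀ x, ‖g x‖ ≤ C * (F x ^ s * B x ^ μ) := by
    intro N s μ C g h x
    simpa [dw] using h [] (by simp) x
  induction N with
  | zero => intro s μ C g h; exact base h
  | succ N ih =>
    intro s μ C g h
    refine ⟨base h, fun j => ih fun l hl x => ?_⟩
    have := h (l ++ [j]) (by simpa using hl) x
    rw [dw_append] at this
    refine this.trans (le_of_eq ?_)
    simp only [List.map_append, List.sum_append, List.map_cons, List.map_nil, List.sum_singleton]
    congr 3 <;> ring

lemma ABd.word (l : List (J3 d)) : ∀ {N : ℕ} {s μ C : ℝ} {g : Q d × Q d × Q d → ℂ},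
    ABd F B e (N + l.length) s μ C g → ABd F B e N (s + (l.map (wt d)).sum) (μ - (l.map e).sum) C (dw (D3 d) l g) := by
  induction l using List.reverseRecOn with
  | nil => intro N s μ C g h; simpa [dw] using h
  | append_singleton l j ih =>
    intro N s μ C g h
    rw [dw_append]
    rw [List.length_append, ← add_assoc] at h
    have := ih (h.2 j)
    simp only [List.map_append, List.sum_append, List.map_cons, List.map_nil, List.sum_singleton]
    rw [add_comm (List.map (wt d) l).sum, ← add_assoc, add_comm (List.map e l).sum, ← sub_sub]
    exact this

lemma ABd.lin {N : ℕ} (c1 c2 : ℝ) (h1 : |c1| ≤ 1) (h2 : |c2| ≤ 1) :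
    ∀ {s μ C : ℝ} {g g' : Q d × Q d × Q d → ℂ}, Sm g → Sm g' → 0 ≤ C →
    ABd F B e N s μ C g → ABd F B e N s μ C g' → ABd F B e N s μ (2 * C) ((c1 : ℂ) • g + (c2 : ℂ) • g') := by
  have base : ∀ {s μ C : ℝ} {g g' : Q d × Q d × Q d → ℂ}, 
      0 ≤ C → (∀ x, ‖g x‖ ≤ C * (F x ^ s * B x ^ μ)) → (∀ x, ‖g' x‖ ≤ C * (F x ^ s * B x ^ μ)) →
      ∀ x, ‖((c1 : ℂ) • g + (c2 : ℂ) • g') x‖ ≤ 2 * C * (F x ^ s * B x ^ μ) := by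
    intro s μ C g g' hC k1 k2 x
    simp only [Pi.add_apply, Pi.smul_apply]
    refine (norm_add_le _ _).trans ?_
    rw [norm_smul, norm_smul, Complex.norm_real, Complex.norm_real, Real.norm_eq_abs, Real.norm_eq_abs]
    have := mul_le_mul h1 (k1 x) (norm_nonneg _) zero_le_one
    have := mul_le_mul h2 (k2 x) (norm_nonneg _) zero_le_one
    linarith
  induction N with
  | zero => intro s μ C g g' _ _ hC k1 k2; exact base hC k1 k2
  | succ N ih =>
    intro s μ C g g' hg hg' hC k1 k2
    refine ⟨base hC k1.1 k2.1, fun j => ?_⟩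
    rw [dirD_add_fun (hg.smul' _) (hg'.smul' _), dirD_smul_fun hg, dirD_smul_fun hg']
    exact ih (hg.dirD _) (hg'.dirD _) hC (k1.2 j) (k2.2 j)

/-- change of variables -/
def Psi (d : ℕ) (t : ℝ) : (Q d × Q d × Q d) →L[ℝ] (Q d × Q d × Q d) :=
  (ContinuousLinearMap.fst ℝ (Q d) (Q d × Q d) + (1 - t) • (ContinuousLinearMap.snd ℝ (Q d) (Q d)).comp (ContinuousLinearMap.snd ℝ (Q d) (Q d × Q d))).prod
  (((ContinuousLinearMap.fst ℝ (Q d) (Q d)).comp (ContinuousLinearMap.snd ℝ (Q d) (Q d × Q d))).prod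
  (ContinuousLinearMap.fst ℝ (Q d) (Q d × Q d) - t • (ContinuousLinearMap.snd ℝ (Q d) (Q d)).comp (ContinuousLinearMap.snd ℝ (Q d) (Q d × Q d))))

lemma Psi_apply (t : ℝ) (x : Q d × Q d × Q d) :
    Psi d t x = (x.1 + (1 - t) • x.2.2, x.2.1, x.1 - t • x.2.2) := rfl

lemma Psi_D3 {t : ℝ} (ht : t ∈ Set.Icc (0 : ℝ) 1) (j : J3 d) : ∃ k1 k2 : J3 d, ∃ c1 c2 : ℝ, |c1| ≤ 1 ∧ |c2| ≤ 1 ∧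
    wt d k1 = wt d j ∧ wt d k2 = wt d j ∧ wp d k1 = wp d j ∧ wp d k2 = wp d j ∧ 
    Psi d t (D3 d j) = c1 • D3 d k1 + c2 • D3 d k2 := by
  rcases j with j | j | j
  · refine ⟨.inl j, .inr (.inr j), 1, 1, by simp, by simp, rfl, ?_, rfl, rfl, ?_⟩
    · cases j <;> rfl
    · simp [Psi_apply, D3]
  · refine ⟨.inr (.inl j), .inr (.inl j), 1, 0, by simp, by simp, rfl, rfl, rfl, rfl, ?_⟩
    simp [Psi_apply, D3]
  · refine ⟨.inl j, .inr (.inr j), 1 - t, -t, ?_, ?_, ?_, rfl, rfl, rfl, ?_⟩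
    · rw [abs_le]; constructor <;> linarith [ht.1, ht.2]
    · rw [abs_le]; constructor <;> linarith [ht.1, ht.2]
    · cases j <;> rfl
    · simp [Psi_apply, D3]

lemma ABd.psi {t : ℝ} (ht : t ∈ Set.Icc (0 : ℝ) 1) (hF : ∀ x, 0 < F x) (hB : ∀ x, 0 < B x) {N : ℕ} :
    ∀ {s μ C : ℝ} {g : Q d × Q d × Q d → ℂ}, Sm g → 0 ≤ C → ABd F B (wp d) N s μ C g →
    ABd (fun x => F (Psi d t x)) (fun x => B (Psi d t x)) (wp d) N s μ (2 ^ N * C) (fun x => g (Psi d t x)) := by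
  induction N with
  | zero => intro s μ C g hg hC h x; simpa using h (Psi d t x)
  | succ N ih =>
    intro s μ C g hg hC h
    refine ⟨fun x => (h.1 _).trans ?_, fun j => ?_⟩
    · have := Real.rpow_nonneg (hF (Psi d t x)).le s
      have := Real.rpow_nonneg (hB (Psi d t x)).le μ
      have : (1 : ℝ) ≤ 2 ^ (N + 1) := one_le_pow₀ one_le_two
      gcongr
      nlinarith
    · obtain ⟨k1, k2, c1, c2, b1, b2, w1, w2, p1, p2, e⟩ := Psi_D3 (d := d) ht j
      have e1 := dirD_comp hg (Psi d t) 0 (D3 d j)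
      simp only [zero_add] at e1
      rw [e1, e, dirD_add_vec, dirD_smul_vec, dirD_smul_vec]
      have q1 := h.2 k1
      have q2 := h.2 k2
      rw [w1, p1] at q1
      rw [w2, p2] at q2
      have := ih (((hg.dirD _).smul' _).add' ((hg.dirD _).smul' _)) (by positivity) 
        (ABd.lin c1 c2 b1 b2 (hg.dirD _) (hg.dirD _) hC q1 q2)
      rwa [← mul_assoc, ← pow_succ] at this

lemma ABd.drop (hF : ∀ x, 0 < F x) (hB : ∀ x, 1 ≤ B x) (he : ∀ j, 0 ≤ e j) {N : ℕ} :
    ∀ {s μ μ' C : ℝ} {g : Q d × Q d × Q d → ℂ}, 0 ≤ C → μ ≤ μ' → ABd F B e N s μ C g →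
    ABd F B 0 N s μ' C g := by
  have base : ∀ {s μ μ' C : ℝ} {g : Q d × Q d × Q d → ℂ}, 0 ≤ C → μ ≤ μ' →
      (∀ x, ‖g x‖ ≤ C * (F x ^ s * B x ^ μ)) → ∀ x, ‖g x‖ ≤ C * (F x ^ s * B x ^ μ') := by
    intro s μ μ' C g hC hm h x
    refine (h x).trans ?_
    have := Real.rpow_nonneg (hF x).le s
    have := Real.rpow_le_rpow_of_exponent_le (hB x) hm
    gcongr
  induction N with
  | zero => intro s μ μ' C g hC hm h; exact base hC hm h
  | succ N ih =>
    intro s μ μ' C g hC hm h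
    refine ⟨base hC hm h.1, fun j => ih hC ?_ (h.2 j)⟩
    have := he j
    simp only [Pi.zero_apply]; linarith

end abd

section pee
variable {d : ℕ}

lemma one_le_brP (p : Q d) : 1 ≤ brP p := by
  rw [brP]; apply Real.one_le_sqrt.2
  have := Finset.sum_nonneg (s := univ) (f := fun i => (p.2 i) ^ 2) (fun i _ => sq_nonneg _)
  nlinarith [sq_nonneg p.1]

lemma prod_one_add_ge {ι : Type*} (s : Finset ι) (c : ι → ℝ) (hc : ∀ i, 0 ≤ c i) :
    1 + ∑ i ∈ s, c i ≤ ∏ i ∈ s, (1 + c i) := by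
  classical
  induction s using Finset.induction_on with
  | empty => simp
  | insert i s hi ih =>
    rw [Finset.sum_insert hi, Finset.prod_insert hi]
    have h1 := hc i
    have h2 : 0 ≤ ∑ i ∈ s, c i := Finset.sum_nonneg fun i _ => hc i
    nlinarith

lemma jb_sq (p : Q d) : jb p ^ 2 = ∏ j, (1 + (co d j p) ^ 2) := by
  rw [jb, ← Finset.prod_pow]
  refine Finset.prod_congr rfl fun j _ => ?_
  rw [norm_one_add, Real.sq_sqrt (by positivity)]

lemma brP_le_jb (p : Q d) : brP p ≤ jb p := by
  rw [brP]
  apply Real.sqrt_le_iff.2 ⟨(jb_pos p).le, ?_⟩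
  rw [jb_sq]
  have := prod_one_add_ge (univ : Finset (Option (Fin d))) (fun j => (co d j p) ^ 2) (fun j => sq_nonneg _)
  rw [Fintype.sum_option] at this
  simp only [co_none, co_some] at this
  linarith

lemma brP_peetre {h : ℝ} (hh : |h| ≤ 1) (p z : Q d) : brP (p + h • z) ≤ 2 * jb z * brP p := by
  have h1 : brP (p + h • z) ≤ 2 * brP z * brP p := by
    have n1 := one_le_brP p
    have n2 := one_le_brP z
    apply Real.sqrt_le_iff.2 ⟨by positivity, ?_⟩
    rw [mul_pow, mul_pow, brP, brP, Real.sq_sqrt (by positivity), Real.sq_sqrt (by positivity)]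
    have hh2 : h ^ 2 ≤ 1 := by rw [← sq_abs]; exact pow_le_one₀ (abs_nonneg _) hh
    have e : ∀ a b : ℝ, (a + h * b) ^ 2 ≤ 2 * a ^ 2 + 2 * b ^ 2 := by
      intro a b
      nlinarith [sq_nonneg (a - h * b), mul_le_mul_of_nonneg_right hh2 (sq_nonneg b)]
    have e2 : ∑ i, (p.2 i + h * z.2 i) ^ 2 ≤ 2 * ∑ i, (p.2 i) ^ 2 + 2 * ∑ i, (z.2 i) ^ 2 := by
      rw [Finset.mul_sum, Finset.mul_sum, ← Finset.sum_add_distrib]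
      exact Finset.sum_le_sum fun i _ => e _ _
    have e1 := e p.1 z.1
    have p1 : 0 ≤ ∑ i, (p.2 i) ^ 2 := Finset.sum_nonneg fun i _ => sq_nonneg _
    have p2 : 0 ≤ ∑ i, (z.2 i) ^ 2 := Finset.sum_nonneg fun i _ => sq_nonneg _
    simp only [Prod.fst_add, Prod.snd_add, Prod.smul_fst, Prod.smul_snd, Pi.add_apply, Pi.smul_apply, smul_eq_mul]
    have q1 := sq_nonneg p.1
    have q2 := sq_nonneg z.1
    have : 0 ≤ (p.1 ^ 2 + ∑ i, (p.2 i) ^ 2) * (z.1 ^ 2 + ∑ i, (z.2 i) ^ 2) := by positivity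
    nlinarith
  have := brP_le_jb z
  have n1 := one_le_brP p
  exact h1.trans (by gcongr)

lemma rpow_peetre {a b c μ : ℝ} (ha : 0 < a) (hb : 0 < b) (hc : 1 ≤ c) (h1 : a ≤ c * b) (h2 : b ≤ c * a)
    {M : ℕ} (hM : |μ| ≤ M) : a ^ μ ≤ c ^ M * b ^ μ := by
  have hc0 : 0 < c := by linarith
  rcases le_total 0 μ with h | h
  · calc a ^ μ ≤ (c * b) ^ μ := Real.rpow_le_rpow ha.le h1 h
      _ = c ^ μ * b ^ μ := Real.mul_rpow hc0.le hb.le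
      _ ≤ c ^ M * b ^ μ := by
        have : c ^ μ ≤ c ^ (M : ℝ) := Real.rpow_le_rpow_of_exponent_le hc ((le_abs_self _).trans hM)
        rw [Real.rpow_natCast] at this
        have := Real.rpow_nonneg hb.le μ
        gcongr
  · have h3 : (c * a) ^ μ ≤ b ^ μ := Real.rpow_le_rpow_of_nonpos hb h2 h
    rw [Real.mul_rpow hc0.le ha.le] at h3
    have e : c ^ (-μ) * c ^ μ = 1 := by rw [← Real.rpow_add hc0]; simp
    calc a ^ μ = c ^ (-μ) * (c ^ μ * a ^ μ) := by rw [← mul_assoc, e, one_mul]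
      _ ≤ c ^ (-μ) * b ^ μ := by have := Real.rpow_nonneg hc0.le (-μ); gcongr
      _ ≤ c ^ M * b ^ μ := by
        have : c ^ (-μ) ≤ c ^ (M : ℝ) := Real.rpow_le_rpow_of_exponent_le hc ((neg_le_abs _).trans hM)
        rw [Real.rpow_natCast] at this
        have := Real.rpow_nonneg hb.le μ
        gcongr

lemma brF_eq (f : ℝ → ℝ) (x : Q d × Q d) : brF f x = brP ((x.2.1, (f x.1.1)⁻¹ • x.2.2) : Q d) := by
  simp [brF, brP, div_eq_inv_mul]

lemma one_le_brF (f : ℝ → ℝ) (x : Q d × Q d) : 1 ≤ brF f x := by rw [brF_eq]; exact one_le_brP _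

lemma brF_le_jb {f : ℝ → ℝ} (hf : ∀ r, 1 ≤ f r) (x : Q d × Q d) : brF f x ≤ jb x.2 := by
  refine le_trans ?_ (brP_le_jb _)
  rw [brF, brP]
  apply Real.sqrt_le_sqrt
  refine add_le_add le_rfl (Finset.sum_le_sum fun i _ => ?_)
  rw [div_pow]
  exact div_le_self (sq_nonneg _) (one_le_pow₀ (hf _))

lemma brF_sc {f : ℝ → ℝ} (hf : ∀ r, 1 ≤ f r) {h : ℝ} (hh : h ∈ Set.Ioc (0 : ℝ) 1) (x y : Q d × Q d) {μ : ℝ} {M : ℕ}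
    (hM : |μ| ≤ M) : brF f (x.1, x.2 + h • (sc d (f x.1.1) y).2) ^ μ ≤ (2 * jb y.2) ^ M * brF f x ^ μ := by
  have h0 : f x.1.1 ≠ 0 := by have := hf x.1.1; positivity
  set P : Q d := (x.2.1, (f x.1.1)⁻¹ • x.2.2)
  have e : brF f (x.1, x.2 + h • (sc d (f x.1.1) y).2) = brP (P + h • y.2) := by
    rw [brF_eq]; congr 1
    ext i
    · simp [P, sc_apply]
    · simp [P, sc_apply, mul_add]; field_simp
  rw [e, brF_eq]
  have hh1 : |h| ≤ 1 := by rw [abs_of_pos hh.1]; exact hh.2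
  have j1 := one_le_jb y.2
  refine rpow_peetre (by linarith [one_le_brP (P + h • y.2)]) (by linarith [one_le_brP P]) (by linarith)
    (brP_peetre hh1 _ _) ?_ hM
  have := brP_peetre (h := -h) (by rwa [abs_neg]) (P + h • y.2) y.2
  simpa [add_assoc] using this

end pee

section est
variable {d : ℕ} {f : ℝ → ℝ}

/-- weight functions -/
def FF (d : ℕ) (f : ℝ → ℝ) (x : Q d × Q d × Q d) : ℝ := f x.1.1
/-- weight functions -/
def BB (d : ℕ) (f : ℝ → ℝ) (x : Q d × Q d × Q d) : ℝ := brF f (x.1, x.2.1)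

lemma scm_wt {l : ℝ} (hl : 0 < l) (j) : scm d l j = l ^ (- wt d (sl d j)) := by
  rcases j with (_ | i) | (_ | i) <;> simp [scm, sl, wt, Real.rpow_neg_one]

lemma scaled_bd (hf : ∀ r, 1 ≤ f r) {h : ℝ} (hh : h ∈ Set.Ioc (0 : ℝ) 1) (x : Q d × Q d) {μ : ℝ} {M : ℕ}
    (hM : |μ| ≤ M) {N : ℕ} : ∀ {s C : ℝ} {g : Q d × Q d × Q d → ℂ}, 0 ≤ C → Sm g →
    ABd (FF d f) (BB d f) 0 N s μ C g →
    Bd (D2 d) (fun y => jb y.2 ^ M) N (C * (2 ^ M * (f x.1.1 ^ s * brF f x ^ μ)))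
      (fun y => g (Lb d x + ((Ls d h).comp (sc d (f x.1.1))) y)) := by
  have hl : 0 < f x.1.1 := by linarith [hf x.1.1]
  have base : ∀ {s C : ℝ} {g : Q d × Q d × Q d → ℂ}, 0 ≤ C → 
      (∀ x, ‖g x‖ ≤ C * (FF d f x ^ s * BB d f x ^ μ)) → 
      ∀ y : Q d × Q d, ‖g (Lb d x + ((Ls d h).comp (sc d (f x.1.1))) y)‖ ≤ (C * (2 ^ M * (f x.1.1 ^ s * brF f x ^ μ))) * jb y.2 ^ M := by
    intro s C g hC hb y
    refine (hb _).trans ?_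
    rw [ContinuousLinearMap.comp_apply, ← Lh_eq, Lh_apply, FF, BB]
    have := brF_sc hf hh x y hM
    have k := Real.rpow_nonneg hl.le s
    calc _ ≤ C * (f x.1.1 ^ s * ((2 * jb y.2) ^ M * brF f x ^ μ)) := by gcongr
      _ = _ := by rw [mul_pow]; ring
  induction N with
  | zero => intro s C g hC hg hb; exact base hC hb
  | succ N ih =>
    intro s C g hC hg hb
    refine ⟨base hC hb.1, fun j => ?_⟩
    rw [dirD_comp hg, ContinuousLinearMap.comp_apply, sc_D2, map_smul, Ls_D2, smul_smul, dirD_smul_vec]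
    have := (ih hC (hg.dirD _) (by simpa using hb.2 (sl d j))).smul ((scm d (f x.1.1) j * lsm d h j : ℝ) : ℂ)
      ((hg.dirD _).comp_aff _ _)
    refine Bd.mono this fun y => ?_
    rw [Complex.norm_real, Real.norm_eq_abs, abs_mul]
    have q1 := lsm_abs hh j
    have q2 : 0 ≤ scm d (f x.1.1) j := by rw [scm_wt hl]; positivity
    have q3 := jb_pos y.2
    have q4 := one_le_brF f x
    refine mul_le_mul_of_nonneg_right ?_ (by positivity)
    rw [abs_of_nonneg q2]
    calc scm d (f x.1.1) j * |lsm d h j| * (C * (2 ^ M * (f x.1.1 ^ (s + wt d (sl d j)) * brF f x ^ μ)))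
        ≤ scm d (f x.1.1) j * 1 * (C * (2 ^ M * (f x.1.1 ^ (s + wt d (sl d j)) * brF f x ^ μ))) := by gcongr
      _ = C * (2 ^ M * ((f x.1.1 ^ (s + wt d (sl d j)) * scm d (f x.1.1) j) * brF f x ^ μ)) := by ring
      _ = _ := by rw [scm_wt hl, ← Real.rpow_add hl, add_neg_cancel_right]

lemma bb_est (d : ℕ) (μ : ℝ) : ∃ K, 0 ≤ K ∧ ∃ N0 : ℕ, ∀ {f : ℝ → ℝ}, (∀ r, 1 ≤ f r) → 
    ∀ {h : ℝ}, h ∈ Set.Ioc (0 : ℝ) 1 → ∀ {M0 k0 : ℕ}, M0 + 2 ≤ k0 → ∀ {g : Q d × Q d × Q d → ℂ}, W d M0 g →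
    ∀ {s C : ℝ}, 0 ≤ C → ABd (FF d f) (BB d f) 0 N0 s μ C g → ∀ x,
    ‖bb d k0 h g x‖ ≤ K * C * (f x.1.1 ^ s * brF f x ^ μ) := by
  obtain ⟨K, hK, ho⟩ := osc_bound (d := d) ⌈|μ|⌉₊ (⌈|μ|⌉₊ + 2) le_rfl
  refine ⟨‖c0 d‖ * K * 2 ^ ⌈|μ|⌉₊, by positivity, NN d (⌈|μ|⌉₊ + 2), ?_⟩
  intro f hf h hh M0 k0 hk g hg s C hC hb x
  have hl : 0 < f x.1.1 := by linarith [hf x.1.1]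
  have hs := scaled_bd hf hh x (Nat.le_ceil |μ|) hC hg.1 hb
  have hs0 := (hg.1).comp_aff ((Ls d h).comp (sc d (f x.1.1))) (Lb d x)
  obtain ⟨C1, hC1, hb1⟩ := hg.sl_bd hh (NN d k0) x
  have q4 := one_le_brF f x
  have hC2 : 0 ≤ C * (2 ^ ⌈|μ|⌉₊ * (f x.1.1 ^ s * brF f x ^ μ)) := by positivity
  have := osc_sc hk le_rfl hC1 hC2 hl (hg.1.sl h x) hb1 hs
  rw [bb, this, norm_mul]
  have := ho _ _ hC2 hs0 hs
  calc _ ≤ ‖c0 d‖ * (K * (C * (2 ^ ⌈|μ|⌉₊ * (f x.1.1 ^ s * brF f x ^ μ)))) := by gcongr; exact this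
    _ = _ := by ring

end est

section amp
variable {d : ℕ} {f : ℝ → ℝ} {m t : ℝ}

/-- weights of amplitudes -/
def FA (d : ℕ) (f : ℝ → ℝ) (t : ℝ) (x : Q d × Q d × Q d) : ℝ := f (t * x.1.1 + (1 - t) * x.2.2.1)

lemma one_le_brFA (f : ℝ → ℝ) (t : ℝ) (x : Q d × Q d × Q d) : 1 ≤ brFA f t x := by
  rw [brFA]; apply Real.one_le_sqrt.2
  have := Finset.sum_nonneg (s := univ) (f := fun i => (x.2.1.2 i / f (t * x.1.1 + (1 - t) * x.2.2.1)) ^ 2) (fun i _ => sq_nonneg _)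
  nlinarith [sq_nonneg x.2.1.1]

lemma mem_idx {α : MIdx d} {N : ℕ} : α ∈ idxSet d N ↔ deg α ≤ N := by
  rw [idxSet, Finset.mem_filter, and_iff_right_iff_imp]
  intro h
  rw [deg] at h
  simp only [Finset.mem_product, Finset.mem_range, Fintype.mem_piFinset]
  refine ⟨by omega, fun i => ?_⟩
  have := Finset.single_le_sum (f := α.2) (fun i _ => Nat.zero_le _) (Finset.mem_univ i)
  omega

/-- term of the seminorm -/
def ampT (f : ℝ → ℝ) (m t : ℝ) (N : ℕ) (a : Q d × Q d × Q d → ℂ) (α β γ : MIdx d) : ℝ :=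
    if deg α + deg β + deg γ ≤ N then
      ⨆ x : Q d × Q d × Q d,
        f (t * x.1.1 + (1 - t) * x.2.2.1) ^ (-(degA α : ℝ) + (degA β : ℝ) - (degA γ : ℝ)) *
          brFA f t x ^ (-m + (deg β : ℝ)) * ‖mderiv3 α β γ a x‖
    else 0

lemma ampT_nonneg (hf : ∀ r, 1 ≤ f r) (N : ℕ) (a : Q d × Q d × Q d → ℂ) (α β γ : MIdx d) :
    0 ≤ ampT f m t N a α β γ := by
  rw [ampT]
  split_ifs
  · refine Real.iSup_nonneg fun x => ?_
    have := hf (t * x.1.1 + (1 - t) * x.2.2.1)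
    have := one_le_brFA f t x
    positivity
  · exact le_rfl

lemma ampNorm_nonneg (hf : ∀ r, 1 ≤ f r) (N : ℕ) (a : Q d × Q d × Q d → ℂ) : 0 ≤ ampNorm f m t N a :=
  Finset.sum_nonneg fun _ _ => Finset.sum_nonneg fun _ _ => Finset.sum_nonneg fun _ _ => ampT_nonneg hf _ _ _ _ _

lemma ampT_le (hf : ∀ r, 1 ≤ f r) (N : ℕ) (a : Q d × Q d × Q d → ℂ) (α β γ : MIdx d) (h : deg α + deg β + deg γ ≤ N) :
    ampT f m t N a α β γ ≤ ampNorm f m t N a := by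
  have h1 : ampT f m t N a α β γ ≤ ∑ γ ∈ idxSet d N, ampT f m t N a α β γ :=
    Finset.single_le_sum (f := fun γ => ampT f m t N a α β γ) (fun _ _ => ampT_nonneg hf _ _ _ _ _) (mem_idx.2 (by omega))
  have h2 : ∑ γ ∈ idxSet d N, ampT f m t N a α β γ ≤ ∑ β ∈ idxSet d N, ∑ γ ∈ idxSet d N, ampT f m t N a α β γ :=
    Finset.single_le_sum (f := fun β => ∑ γ ∈ idxSet d N, ampT f m t N a α β γ)
      (fun _ _ => Finset.sum_nonneg fun _ _ => ampT_nonneg hf _ _ _ _ _) (mem_idx.2 (by omega))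
  have h3 : ∑ β ∈ idxSet d N, ∑ γ ∈ idxSet d N, ampT f m t N a α β γ ≤ ampNorm f m t N a :=
    Finset.single_le_sum (f := fun α => ∑ β ∈ idxSet d N, ∑ γ ∈ idxSet d N, ampT f m t N a α β γ)
      (fun _ _ => Finset.sum_nonneg fun _ _ => Finset.sum_nonneg fun _ _ => ampT_nonneg hf _ _ _ _ _) (mem_idx.2 (by omega))
  exact h1.trans (h2.trans h3)

lemma amp_pt (hf : ∀ r, 1 ≤ f r) {a : Q d × Q d × Q d → ℂ} (ha : IsAmp f m t a) (N : ℕ) (α β γ : MIdx d)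
    (h : deg α + deg β + deg γ ≤ N) (x) : ‖mderiv3 α β γ a x‖ ≤ ampNorm f m t N a *
      (FA d f t x ^ ((degA α : ℝ) - degA β + degA γ) * brFA f t x ^ (m - (deg β : ℝ))) := by
  have F0 : ∀ x, 0 < FA d f t x := fun x => zero_lt_one.trans_le (hf _)
  have B0 : ∀ x : Q d × Q d × Q d, 0 < brFA f t x := fun x => zero_lt_one.trans_le (one_le_brFA _ _ _)
  have cancel : ∀ x : Q d × Q d × Q d, (FA d f t x ^ (-(degA α : ℝ) + (degA β : ℝ) - (degA γ : ℝ)) *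
          brFA f t x ^ (-m + (deg β : ℝ))) * (FA d f t x ^ ((degA α : ℝ) - degA β + degA γ) * brFA f t x ^ (m - (deg β : ℝ))) = 1 := by
    intro x
    rw [mul_mul_mul_comm, ← Real.rpow_add (F0 x), ← Real.rpow_add (B0 x)]
    ring_nf; simp
  have key := ampT_le (m := m) (t := t) hf N a α β γ h
  rw [ampT, if_pos h] at key
  have bdd : BddAbove (Set.range fun x : Q d × Q d × Q d => 
        f (t * x.1.1 + (1 - t) * x.2.2.1) ^ (-(degA α : ℝ) + (degA β : ℝ) - (degA γ : ℝ)) *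
          brFA f t x ^ (-m + (deg β : ℝ)) * ‖mderiv3 α β γ a x‖) := by
    obtain ⟨C, hC⟩ := ha.2 α β γ
    refine ⟨C, ?_⟩
    rintro _ ⟨x, rfl⟩
    have h1 := hC x
    have h2 := cancel x
    have h3 := Real.rpow_pos_of_pos (F0 x) (-(degA α : ℝ) + (degA β : ℝ) - (degA γ : ℝ))
    have h4 := Real.rpow_pos_of_pos (B0 x) (-m + (deg β : ℝ))
    change FA d f t x ^ (-(degA α : ℝ) + (degA β : ℝ) - (degA γ : ℝ)) *
          brFA f t x ^ (-m + (deg β : ℝ)) * ‖mderiv3 α β γ a x‖ ≤ C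
    change _ ≤ C * FA d f t x ^ _ * _ at h1
    calc _ ≤ FA d f t x ^ (-(degA α : ℝ) + (degA β : ℝ) - (degA γ : ℝ)) *
          brFA f t x ^ (-m + (deg β : ℝ)) * (C * FA d f t x ^ ((degA α : ℝ) - degA β + degA γ) * brFA f t x ^ (m - (deg β : ℝ))) := by gcongr
      _ = C * ((FA d f t x ^ (-(degA α : ℝ) + (degA β : ℝ) - (degA γ : ℝ)) *
          brFA f t x ^ (-m + (deg β : ℝ))) * (FA d f t x ^ ((degA α : ℝ) - degA β + degA γ) * brFA f t x ^ (m - (deg β : ℝ)))) := by ring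
      _ = C := by rw [h2, mul_one]
  have k2 := (le_ciSup bdd x).trans key
  have k3 : 0 ≤ (FA d f t x ^ ((degA α : ℝ) - degA β + degA γ) * brFA f t x ^ (m - (deg β : ℝ))) := by
    have := F0 x; have := B0 x; positivity
  calc ‖mderiv3 α β γ a x‖ = (FA d f t x ^ (-(degA α : ℝ) + (degA β : ℝ) - (degA γ : ℝ)) *
          brFA f t x ^ (-m + (deg β : ℝ)) * ‖mderiv3 α β γ a x‖) * (FA d f t x ^ ((degA α : ℝ) - degA β + degA γ) * brFA f t x ^ (m - (deg β : ℝ))) := by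
        rw [mul_right_comm, cancel, one_mul]
    _ ≤ _ := mul_le_mul_of_nonneg_right k2 k3

lemma amp_abd (hf : ∀ r, 1 ≤ f r) {a : Q d × Q d × Q d → ℂ} (ha : IsAmp f m t a) (N : ℕ) :
    ABd (FA d f t) (brFA f t) (wp d) N 0 m (ampNorm f m t N a) a := by
  refine ABd.of_words fun l hl x => ?_
  obtain ⟨α, β, γ, hp⟩ := nf_perm l
  rw [dw_perm _ hp ha.1, ← mderiv3_eq, (hp.map _).sum_eq, nf_wt, (hp.map _).sum_eq, nf_wp, zero_add]
  rw [hp.length_eq, nf_length] at hl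
  exact amp_pt hf ha N α β γ hl x

/-- amplitude in the new coordinates -/
def tl (t : ℝ) (a : Q d × Q d × Q d → ℂ) : Q d × Q d × Q d → ℂ := fun x => a (Psi d t x)

lemma tl_sm {a : Q d × Q d × Q d → ℂ} (ha : Sm a) : Sm (tl t a) := by
  have := ha.comp_aff (Psi d t) 0
  simp only [zero_add] at this
  exact this

lemma tl_abd (hf : ∀ r, 1 ≤ f r) (ht : t ∈ Set.Icc (0 : ℝ) 1) {a : Q d × Q d × Q d → ℂ} (ha : IsAmp f m t a) (N : ℕ) :
    ABd (FF d f) (BB d f) (wp d) N 0 m (2 ^ N * ampNorm f m t N a) (tl t a) := by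
  have := ABd.psi (F := FA d f t) (B := brFA f t) ht (fun x => zero_lt_one.trans_le (hf _)) (fun x => zero_lt_one.trans_le (one_le_brFA _ _ _)) ha.1
    (ampNorm_nonneg hf N a) (amp_abd hf ha N)
  have e : ∀ x : Q d × Q d × Q d, t * (Psi d t x).1.1 + (1 - t) * (Psi d t x).2.2.1 = x.1.1 := by
    intro x; simp [Psi_apply]; ring
  have e1 : (fun x => FA d f t (Psi d t x)) = FF d f := by
    funext x; rw [FA, e, FF]
  have e2 : (fun x => brFA f t (Psi d t x)) = BB d f := by
    funext x; rw [brFA, e, BB, brF]; rfl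
  rw [e1, e2] at this
  exact this

lemma wt_le (j) : wt d j ≤ 1 := by rcases j with (_ | i) | (_ | i) | (_ | i) <;> simp [wt]
lemma wp_nonneg (j) : 0 ≤ wp d j := by rcases j with (_ | i) | (_ | i) | (_ | i) <;> simp [wp]

lemma ABd.toBd (hf : ∀ r, 1 ≤ f r) {M : ℕ} {S : ℝ} {N : ℕ} : ∀ {s μ C : ℝ} {g : Q d × Q d × Q d → ℂ}, 0 ≤ C →
    s + N ≤ S → μ ≤ M → ABd (FF d f) (BB d f) (wp d) N s μ C g →
    Bd (D3 d) (fun x => f x.1.1 ^ S * jb x.2.1 ^ M) N C g := by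
  have base : ∀ {s μ C : ℝ} {g : Q d × Q d × Q d → ℂ}, 0 ≤ C →
    s ≤ S → μ ≤ M → (∀ x, ‖g x‖ ≤ C * (FF d f x ^ s * BB d f x ^ μ)) → 
    ∀ x, ‖g x‖ ≤ C * (f x.1.1 ^ S * jb x.2.1 ^ M) := by
    intro s μ C g hC hs hm hb x
    refine (hb x).trans ?_
    have h1 := hf x.1.1
    have h2 := one_le_brF f (x.1, x.2.1)
    have h3 := brF_le_jb hf (x.1, x.2.1)
    have h4 := Real.rpow_le_rpow_of_exponent_le h1 hs
    have h5 : brF f (x.1, x.2.1) ^ μ ≤ jb x.2.1 ^ M := by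
      refine (Real.rpow_le_rpow_of_exponent_le h2 hm).trans ?_
      rw [Real.rpow_natCast]
      gcongr
    rw [FF, BB]
    gcongr
  induction N with
  | zero => intro s μ C g hC hs hm hb; exact base hC (by simpa using hs) hm hb
  | succ N ih =>
    intro s μ C g hC hs hm hb
    push_cast at hs
    refine ⟨base hC (by linarith [(Nat.cast_nonneg N : (0:ℝ) ≤ N)]) hm hb.1, fun j => ?_⟩
    exact ih hC (by linarith [wt_le j]) (by linarith [wp_nonneg j]) (hb.2 j)

lemma tl_W (hf : GoodF f) (ht : t ∈ Set.Icc (0 : ℝ) 1) {a : Q d × Q d × Q d → ℂ} (ha : IsAmp f m t a) :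
    W d ⌈|m|⌉₊ (tl t a) := by
  refine ⟨tl_sm ha.1, fun N => ?_⟩
  have h0 : 0 ≤ 2 ^ N * ampNorm f m t N a := mul_nonneg (by positivity) (ampNorm_nonneg hf.2.1 N a)
  have := ABd.toBd hf.2.1 (M := ⌈|m|⌉₊) (S := N) h0 (by simp) ((le_abs_self _).trans (Nat.le_ceil _)) (tl_abd hf.2.1 ht ha N)
  refine ⟨fun w => (2 ^ N * ampNorm f m t N a) * f w.1 ^ (N : ℝ), ?_, fun w => ?_, ?_⟩
  · have := hf.1.continuous
    refine continuous_const.mul (Continuous.rpow_const (by fun_prop) fun w => Or.inl ?_)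
    linarith [hf.2.1 w.1]
  · have := hf.2.1 w.1
    positivity
  · exact this.mono fun x => by apply le_of_eq; ring

lemma W.dw {M : ℕ} {g : Q d × Q d × Q d → ℂ} (hg : W d M g) (l) : W d M (dw (D3 d) l g) := by
  induction l with
  | nil => exact hg
  | cons j l ih => exact ih.dir j

lemma bb_dw {M k : ℕ} (hk : M + 2 ≤ k) {h : ℝ} (hh : h ∈ Set.Ioc (0 : ℝ) 1)
    {g : Q d × Q d × Q d → ℂ} (hg : W d M g) (l) :
    dw (D2 d) l (bb d k h g) = bb d k h (dw (D3 d) (l.map (em3 d)) g) := by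
  induction l with
  | nil => rfl
  | cons j l ih =>
    change dirD (D2 d j) (dw (D2 d) l (bb d k h g)) = _
    rw [ih, bb_dir hk hh (hg.dw _)]; rfl

lemma em3_map (α β : MIdx d) : (wd (Sum.inl : _ → Option (Fin d) ⊕ Option (Fin d)) α ++ wd (Sum.inr : _ → Option (Fin d) ⊕ Option (Fin d)) β).map (em3 d) = nf α β 0 := by
  have h : ∀ {J J' : Type} (φ : J → J') (c : Option (Fin d) → J) (α : MIdx d), (wd c α).map φ = wd (φ ∘ c) α := by
    intro J J' φ c α
    simp [wd, List.map_flatMap]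
  rw [List.map_append, h, h, nf]
  have : wd (fun j => (.inr (.inr j) : J3 d)) (0 : MIdx d) = [] := by simp [wd]
  rw [this, List.append_nil]; rfl

lemma mderiv2_bb {M k : ℕ} (hk : M + 2 ≤ k) {h : ℝ} (hh : h ∈ Set.Ioc (0 : ℝ) 1)
    {g : Q d × Q d × Q d → ℂ} (hg : W d M g) (α β : MIdx d) :
    mderiv2 α β (bb d k h g) = bb d k h (dw (D3 d) (nf α β 0) g) := by
  rw [mderiv2_eq, bb_dw hk hh hg, em3_map]

/-- the symbol -/
def TT (d : ℕ) (m t h : ℝ) (a : Q d × Q d × Q d → ℂ) : Q d × Q d → ℂ := bb d (⌈|m|⌉₊ + 2) h (tl t a)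

lemma TT_est (d : ℕ) (m : ℝ) (j : ℕ) : ∃ K, 0 ≤ K ∧ ∃ N0 : ℕ, ∀ {f : ℝ → ℝ}, GoodF f → ∀ {t : ℝ}, t ∈ Set.Icc (0:ℝ) 1 →
    ∀ {h : ℝ}, h ∈ Set.Ioc (0 : ℝ) 1 → ∀ {a : Q d × Q d × Q d → ℂ}, IsAmp f m t a → ∀ (α β : MIdx d), deg β = j → ∀ N, 
    N0 + (deg α + deg β) ≤ N → ∀ x, ‖mderiv2 α β (TT d m t h a) x‖ ≤ K * (2 ^ N * ampNorm f m t N a) *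
      (f x.1.1 ^ ((degA α : ℝ) - degA β) * brF f x ^ (m - (deg β : ℝ))) := by
  obtain ⟨K, hK, N0, H⟩ := bb_est d (m - j)
  refine ⟨K, hK, N0, ?_⟩
  intro f hf t ht h hh a ha α β hj N hN x
  have h0 : 0 ≤ 2 ^ N * ampNorm f m t N a := mul_nonneg (by positivity) (ampNorm_nonneg hf.2.1 N a)
  rw [TT, mderiv2_bb le_rfl hh (tl_W hf ht ha)]
  have h1 := ((tl_abd hf.2.1 ht ha N).mono_N hN)
  have h2 : (nf α β 0).length = deg α + deg β := by rw [nf_length]; simp [deg]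
  rw [← h2] at h1
  have h3 := ABd.drop (fun x => zero_lt_one.trans_le (hf.2.1 _)) (fun x => one_le_brF f _) wp_nonneg h0 le_rfl (ABd.word _ h1)
  rw [nf_wp, nf_wt, zero_add, hj] at h3
  have := H hf.2.1 hh le_rfl ((tl_W hf ht ha).dw (nf α β 0)) h0 h3 x
  rw [hj]
  simpa [degA] using this

lemma TT_symbol (hf : GoodF f) (ht : t ∈ Set.Icc (0 : ℝ) 1) {h : ℝ} (hh : h ∈ Set.Ioc (0 : ℝ) 1)
    {a : Q d × Q d × Q d → ℂ} (ha : IsAmp f m t a) : IsSymbol f m (TT d m t h a) := by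
  refine ⟨bb_sm le_rfl hh (tl_W hf ht ha), fun α β => ?_⟩
  obtain ⟨K, _, N0, H⟩ := TT_est d m (deg β)
  refine ⟨K * (2 ^ (N0 + (deg α + deg β)) * ampNorm f m t (N0 + (deg α + deg β)) a), fun x => (H hf ht hh ha α β rfl _ le_rfl x).trans (le_of_eq ?_)⟩
  rw [← mul_assoc]

lemma TT_norm (hf : GoodF f) (ht : t ∈ Set.Icc (0 : ℝ) 1) (N : ℕ) : ∃ C > (0 : ℝ), ∃ N' : ℕ, ∀ h ∈ Set.Ioc (0 : ℝ) 1,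
    ∀ a : Q d × Q d × Q d → ℂ, IsAmp f m t a → symNorm f m N (TT d m t h a) ≤ C * ampNorm f m t N' a := by
  choose K hK N0 H using TT_est d m
  set N1 := (∑ j ∈ range (N + 1), N0 j) + N with hN1
  refine ⟨1 + ∑ α ∈ idxSet d N, ∑ β ∈ idxSet d N, K (deg β) * 2 ^ N1, ?_, N1, fun h hh a ha => ?_⟩
  · have : 0 ≤ ∑ α ∈ idxSet d N, ∑ β ∈ idxSet d N, K (deg β) * 2 ^ N1 :=
      Finset.sum_nonneg fun _ _ => Finset.sum_nonneg fun β _ => mul_nonneg (hK _) (by positivity)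
    linarith
  have hA := ampNorm_nonneg (m := m) (t := t) hf.2.1 N1 a
  suffices h : symNorm f m N (TT d m t h a) ≤ (∑ α ∈ idxSet d N, ∑ β ∈ idxSet d N, K (deg β) * 2 ^ N1) * ampNorm f m t N1 a by
    linarith
  rw [symNorm, Finset.sum_mul]
  refine Finset.sum_le_sum fun α hα => ?_
  rw [Finset.sum_mul]
  refine Finset.sum_le_sum fun β hβ => ?_
  have hc : 0 ≤ K (deg β) * 2 ^ N1 * ampNorm f m t N1 a := mul_nonneg (mul_nonneg (hK _) (by positivity)) hA
  split_ifs with hd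
  · refine ciSup_le fun x => ?_
    have h1 : N0 (deg β) ≤ ∑ j ∈ range (N + 1), N0 j :=
      Finset.single_le_sum (f := N0) (fun _ _ => Nat.zero_le _) (Finset.mem_range.2 (by omega))
    have h2 := H (deg β) hf ht hh ha α β rfl N1 (by omega) x
    have F0 : 0 < f x.1.1 := by linarith [hf.2.1 x.1.1]
    have B0 : 0 < brF f x := by linarith [one_le_brF f x]
    have cancel : (f x.1.1 ^ (-(degA α : ℝ) + (degA β : ℝ)) * brF f x ^ (-m + (deg β : ℝ))) *
        (f x.1.1 ^ ((degA α : ℝ) - degA β) * brF f x ^ (m - (deg β : ℝ))) = 1 := by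
      rw [mul_mul_mul_comm, ← Real.rpow_add F0, ← Real.rpow_add B0]
      ring_nf; simp
    calc _ ≤ (f x.1.1 ^ (-(degA α : ℝ) + (degA β : ℝ)) * brF f x ^ (-m + (deg β : ℝ))) * (K (deg β) * (2 ^ N1 * ampNorm f m t N1 a) *
      (f x.1.1 ^ ((degA α : ℝ) - degA β) * brF f x ^ (m - (deg β : ℝ)))) := by gcongr
      _ = (K (deg β) * 2 ^ N1 * ampNorm f m t N1 a) * ((f x.1.1 ^ (-(degA α : ℝ) + (degA β : ℝ)) * brF f x ^ (-m + (deg β : ℝ))) *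
        (f x.1.1 ^ ((degA α : ℝ) - degA β) * brF f x ^ (m - (deg β : ℝ)))) := by ring
      _ = _ := by rw [cancel, mul_one]
  · exact hc

end amp

section inner
variable {d : ℕ}

lemma Pop_const_bd {E : Type*} [NormedAddCommGroup E] [NormedSpace ℝ E] {J : Type*} {D : J → E} {ω : E → ℝ}
    (l : List ((E → ℂ) × E)) (hl : ∀ c ∈ l, (∃ z : ℂ, c.1 = fun _ => z) ∧ ∃ j, c.2 = D j) :
    ∀ {N : ℕ} {C : ℝ} {G : E → ℂ}, Sm G → Bd D ω (N + l.length) C G →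
      Bd D ω N ((l.map fun c => ‖c.1 0‖).prod * (2 ^ l.length * C)) (Pop l G) := by
  induction l with
  | nil => intro N C G hG h; simpa using h
  | cons c l ih =>
    intro N C G hG h
    have hl' : ∀ c ∈ l, (∃ z : ℂ, c.1 = fun _ => z) ∧ ∃ j, c.2 = D j := fun c hc => hl c (by simp [hc])
    obtain ⟨⟨z, hz⟩, j, hj⟩ := hl c (by simp)
    have hs : ∀ c ∈ l, Sm c.1 := fun c hc => by
      obtain ⟨⟨z, hz⟩, _⟩ := hl' c hc
      rw [hz]; exact contDiff_const
    have h1 : Bd D ω (N + 1) _ (Pop l G) := ih hl' hG (by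
      rw [List.length_cons] at h; rwa [add_assoc, add_comm 1])
    have hp := Pop_sm hs hG
    have h2 := (h1.pred.sub hp (hp.dirD _) (h1.2 j)).smul z (hp.sub' (hp.dirD _))
    have e : Pop (c :: l) G = z • (Pop l G - dirD (D j) (Pop l G)) := by
      rw [Pop_cons, Lop, hz, hj]; rfl
    rw [e]
    refine h2.mono fun x => le_of_eq ?_
    rw [List.map_cons, List.prod_cons, List.length_cons, hz]; ring

/-- qdot as a linear map -/
def qL (p : Q d) : Q d →L[ℝ] ℝ := ∑ j, co d j p • co d j

lemma qL_apply (p q : Q d) : qL p q = qdot p q := by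
  rw [qdot_eq]; simp [qL, _root_.sum_apply]

lemma qL_ev (p : Q d) (j) : qL p (ev d j) = co d j p := by
  rw [qL_apply, qdot_eq]; simp [co_ev]

lemma ephase_eq (h : ℝ) (p v : Q d) : ephase h p v = Complex.exp (Complex.I / (h : ℂ) * (qL p v : ℂ)) := by
  rw [ephase, qL_apply]; congr 1; ring

lemma ephase_norm (h : ℝ) (p v : Q d) : ‖ephase h p v‖ = 1 := by
  rw [ephase]
  have : Complex.I * Complex.ofReal (qdot p v) / Complex.ofReal h = ((qdot p v / h : ℝ) : ℂ) * Complex.I := by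
    push_cast; ring
  rw [this]; exact Complex.norm_exp_ofReal_mul_I _

lemma ephase_cont (h : ℝ) : Continuous fun x : Q d × Q d => ephase h x.1 x.2 := by
  unfold ephase qdot; fun_prop

lemma ephase_sm (h : ℝ) (p q : Q d) : Sm (fun x => ephase h p (q - x)) := by
  simp only [ephase_eq]
  have h1 : ContDiff ℝ (⊤ : ℕ∞) (fun x : Q d => ((qL p (q - x) : ℝ) : ℂ)) :=
    Complex.ofRealCLM.contDiff.comp ((qL p).contDiff.comp (contDiff_const.sub contDiff_id))
  exact (contDiff_const.mul h1).cexp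

lemma ephase_dir (h : ℝ) (p q : Q d) (j) : dirD (ev d j) (fun x => ephase h p (q - x)) =
    fun x => -(Complex.I / (h : ℂ) * (co d j p : ℂ)) * ephase h p (q - x) := by
  funext x
  simp only [ephase_eq]
  have h0 : HasFDerivAt (fun x : Q d => q - x) (-ContinuousLinearMap.id ℝ (Q d)) x := (hasFDerivAt_id x).const_sub q
  have h1 := Complex.ofRealCLM.hasFDerivAt.comp x ((qL p).hasFDerivAt.comp x h0)
  have h2 := ((h1.const_mul (Complex.I / (h : ℂ))).cexp)
  rw [dirD]
  have h3 := h2.fderiv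
  change fderiv ℝ (fun x => Complex.exp (Complex.I / (h : ℂ) * (qL p (q - x) : ℂ))) x = _ at h3
  rw [h3]
  simp [qL_ev]
  ring

/-- list for the inner integrations by parts -/
def lq (h : ℝ) (k : ℕ) (p : Q d) : List ((Q d → ℂ) × Q d) :=
  (univ : Finset (Option (Fin d))).toList.flatMap fun j =>
    List.replicate k ((fun _ => (1 - Complex.I / (h : ℂ) * (co d j p : ℂ))⁻¹), ev d j)

lemma lq_mem {h : ℝ} {k : ℕ} {p : Q d} {c} (hc : c ∈ lq h k p) :
    ∃ j, c = ((fun _ => (1 - Complex.I / (h : ℂ) * (co d j p : ℂ))⁻¹), ev d j) := by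
  simp only [lq, List.mem_flatMap, List.mem_replicate] at hc
  obtain ⟨j, _, _, h⟩ := hc
  exact ⟨j, h⟩

/-- length of that list -/
def NI (d k : ℕ) : ℕ := (d + 1) * k

lemma lq_length (h : ℝ) (k : ℕ) (p : Q d) : (lq h k p).length = NI d k := by
  simp [lq, List.length_flatMap, NI]

lemma den_ne (h : ℝ) (s : ℝ) : (1 - Complex.I / (h : ℂ) * (s : ℂ)) ≠ 0 := by
  intro h0
  have := congrArg Complex.re h0
  have e : Complex.I / (h : ℂ) * (s : ℂ) = ((s / h : ℝ) : ℂ) * Complex.I := by push_cast; ring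
  rw [e] at this
  simp at this

lemma den_norm {h : ℝ} (hh : h ∈ Set.Ioc (0 : ℝ) 1) (s : ℝ) :
    ‖(1 + Complex.I * (s : ℂ))‖ ≤ ‖(1 - Complex.I / (h : ℂ) * (s : ℂ))‖ := by
  have e : (1 - Complex.I / (h : ℂ) * (s : ℂ)) = 1 + Complex.I * ((-(s / h) : ℝ) : ℂ) := by push_cast; ring
  rw [e, norm_one_add, norm_one_add]
  apply Real.sqrt_le_sqrt
  have : s ^ 2 ≤ (-(s / h)) ^ 2 := by
    rw [neg_sq, div_pow]
    rw [le_div_iff₀ (pow_pos hh.1 2)]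
    have : h ^ 2 ≤ 1 := pow_le_one₀ hh.1.le hh.2
    nlinarith [sq_nonneg s]
  linarith

lemma lq_prod {h : ℝ} (hh : h ∈ Set.Ioc (0 : ℝ) 1) (k : ℕ) (p : Q d) :
    ((lq h k p).map fun c => ‖c.1 0‖).prod ≤ (jb p ^ k)⁻¹ := by
  have e : ((lq h k p).map fun c => ‖c.1 0‖).prod = ∏ j, (‖(1 - Complex.I / (h : ℂ) * (co d j p : ℂ))‖⁻¹) ^ k := by
    rw [lq, ← Finset.prod_map_toList]
    induction (univ : Finset (Option (Fin d))).toList with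
    | nil => rfl
    | cons j l ih =>
      rw [List.flatMap_cons, List.map_append, List.prod_append, ih, List.map_cons, List.prod_cons]
      simp [List.map_replicate, List.prod_replicate, norm_inv]
  rw [e, jb, ← Finset.prod_pow, ← Finset.prod_inv_distrib]
  refine Finset.prod_le_prod (fun j _ => by positivity) fun j _ => ?_
  rw [← inv_pow]
  have := den_norm hh (co d j p)
  have := one_le_norm (co d j p)
  gcongr

lemma lq_ibp (h : ℝ) (k : ℕ) (p q : Q d) {G : Q d → ℂ} (hG : Sm G) (hs : HasCompactSupport G) :
    ∫ x, ephase h p (q - x) * G x = ∫ x, ephase h p (q - x) * Pop (lq h k p) G x := by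
  refine Pop_ibp ?_ (ephase_sm h p q) ?_ ?_ hG hs
  · intro c hc; obtain ⟨j, rfl⟩ := lq_mem hc; exact contDiff_const
  · intro c hc; obtain ⟨j, rfl⟩ := lq_mem hc; funext x; simp [dirD]
  · intro c hc; obtain ⟨j, rfl⟩ := lq_mem hc
    rw [ephase_dir]
    funext x
    have := den_ne h (co d j p)
    simp only [Pi.mul_apply, Pi.add_apply]
    linear_combination (ephase h p (q - x)) * mul_inv_cancel₀ this

/-- inclusion of the integration variable -/
def LI (d : ℕ) (t : ℝ) : Q d →L[ℝ] (Q d × Q d × Q d) :=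
  ((1 - t) • ContinuousLinearMap.id ℝ (Q d)).prod ((0 : Q d →L[ℝ] Q d).prod (-ContinuousLinearMap.id ℝ (Q d)))

lemma LI_apply (t : ℝ) (p q x : Q d) : ((t • q, p, q) : Q d × Q d × Q d) + LI d t x = (t • q + (1 - t) • x, p, q - x) := by
  simp [LI, sub_eq_add_neg]

lemma LI_bd {t : ℝ} (ht : t ∈ Set.Icc (0 : ℝ) 1) {c : Q d × Q d × Q d → ℂ} (hc : Sm c) {ω : Q d × Q d × Q d → ℝ} {N : ℕ} {C : ℝ}
    (hb : Bd (D3 d) ω N C c) (p q : Q d) :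
    Bd (ev d) (fun x => ω (t • q + (1 - t) • x, p, q - x)) N (2 ^ N * C) (fun x => c (t • q + (1 - t) • x, p, q - x)) := by
  classical
  have := Bd.comp (D := ev d) (D' := D3 d) (LI d t) (t • q, p, q)
    (fun i j => if j = .inl i then (1 - t) else if j = .inr (.inr i) then -1 else 0) ?_ 2 one_le_two ?_ hc hb
  · simp only [LI_apply] at this; exact this
  · intro j
    simp [Fintype.sum_sum_type, D3, LI]
  · intro j
    simp [Fintype.sum_sum_type, apply_ite abs]
    rw [abs_of_nonneg] <;> linarith [ht.1, ht.2]

lemma cs_bd : ∀ (N : ℕ) {u : Q d → ℂ}, Sm u → ∀ {S : Set (Q d)}, IsCompact S → tsupport u ⊆ S →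
    ∃ K, 0 ≤ K ∧ Bd (ev d) (S.indicator 1) N K u := by
  have base : ∀ {u : Q d → ℂ}, Sm u → ∀ {S : Set (Q d)}, IsCompact S → tsupport u ⊆ S →
    ∃ K, 0 ≤ K ∧ ∀ x, ‖u x‖ ≤ K * S.indicator 1 x := by
    intro u hu S hS hs
    obtain ⟨K, hK⟩ := hS.exists_bound_of_continuousOn hu.continuous.continuousOn
    refine ⟨max K 0, le_max_right _ _, fun x => ?_⟩
    by_cases hx : x ∈ S
    · rw [Set.indicator_of_mem hx]; simpa using Or.inl (hK x hx)
    · rw [Set.indicator_of_notMem hx, image_eq_zero_of_notMem_tsupport (fun h => hx (hs h))]; simp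
  intro N
  induction N with
  | zero => intro u hu S hS hs; exact base hu hS hs
  | succ N ih =>
    intro u hu S hS hs
    obtain ⟨K, hK, h⟩ := base hu hS hs
    choose Ks hKs hsn using fun j => ih (hu.dirD (ev d j)) hS ((dirD_tsupport u _).trans hs)
    refine ⟨K + ∑ j, Ks j, add_nonneg hK (Finset.sum_nonneg fun j _ => hKs j), ?_, fun j => ?_⟩
    · intro x
      refine (h x).trans ?_
      have : 0 ≤ S.indicator (1 : Q d → ℝ) x := Set.indicator_nonneg (fun _ _ => zero_le_one) x
      have : 0 ≤ ∑ j, Ks j := Finset.sum_nonneg fun j _ => hKs j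
      gcongr
      linarith
    · refine (hsn j).mono fun x => ?_
      have : 0 ≤ S.indicator (1 : Q d → ℝ) x := Set.indicator_nonneg (fun _ _ => zero_le_one) x
      have := Finset.single_le_sum (f := Ks) (fun j _ => hKs j) (Finset.mem_univ j)
      gcongr
      linarith

/-- inner integral -/
def In (t h : ℝ) (u : Q d → ℂ) (q : Q d) (c : Q d × Q d × Q d → ℂ) (p : Q d) : ℂ :=
  ∫ x : Q d, c (t • q + (1 - t) • x, p, q - x) * ephase h p (q - x) * u x

lemma inner_bd {t h : ℝ} (ht : t ∈ Set.Icc (0 : ℝ) 1) (hh : h ∈ Set.Ioc (0 : ℝ) 1) {u : Q d → ℂ} (hu : IsCc u) (q : Q d) (M : ℕ)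
    {φ : Q d → ℝ} (hφ : Continuous φ) (hφ0 : ∀ w, 0 ≤ φ w) : ∃ K, 0 ≤ K ∧ ∀ (C : ℝ) (c : Q d × Q d × Q d → ℂ), 0 ≤ C → Sm c → 
    Bd (D3 d) (fun x => φ x.1 * jb x.2.1 ^ M) (NI d (M + 2)) C c → ∀ p, ‖In t h u q c p‖ ≤ K * C * (jb p ^ 2)⁻¹ := by
  set N := NI d (M + 2) with hN
  obtain ⟨Ku, hKu, hbu⟩ := cs_bd N hu.1 hu.2.isCompact subset_rfl
  obtain ⟨Φ, hΦ⟩ := hu.2.isCompact.exists_bound_of_continuousOn (f := fun x => φ (t • q + (1 - t) • x)) (by fun_prop)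
  set S := tsupport u with hS
  have hSc : IsCompact S := hu.2.isCompact
  refine ⟨2 ^ N * (2 ^ N * (2 ^ N * Ku)) * |Φ| * volume.real S, by positivity, fun C c hC hc hb p => ?_⟩
  have hcm : Sm (fun x => c (t • q + (1 - t) • x, p, q - x)) := by
    have := hc.comp_aff (LI d t) (t • q, p, q)
    simp only [LI_apply] at this; exact this
  have h1 := (LI_bd ht hc hb p q).mul hcm hu.1 hbu
  have hGs := hcm.mul' hu.1
  set G : Q d → ℂ := (fun x => c (t • q + (1 - t) • x, p, q - x)) * u with hG
  have hcs : HasCompactSupport G := hu.2.mul_left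
  have h2 := Pop_const_bd (D := ev d) (lq h (M + 2) p) (fun c hc => by
    obtain ⟨j, rfl⟩ := lq_mem hc; exact ⟨⟨_, rfl⟩, j, rfl⟩) (N := 0) hGs (by rw [lq_length, zero_add]; exact h1)
  have e : In t h u q c p = ∫ x, ephase h p (q - x) * Pop (lq h (M + 2) p) G x := by
    rw [← lq_ibp h (M + 2) p q hGs hcs, In]
    congr 1; funext x; simp only [hG, Pi.mul_apply]; ring
  rw [e]
  have hpr := lq_prod hh (M + 2) p
  have hj := jb_pos p
  have hfin : ∀ x, ‖ephase h p (q - x) * Pop (lq h (M + 2) p) G x‖ ≤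
      S.indicator (fun _ => 2 ^ N * (2 ^ N * (2 ^ N * Ku)) * |Φ| * C * (jb p ^ 2)⁻¹) x := by
    intro x
    rw [norm_mul, ephase_norm, one_mul]
    refine (h2 x).trans ?_
    rw [lq_length]
    dsimp only
    by_cases hx : x ∈ S
    · rw [Set.indicator_of_mem hx, Set.indicator_of_mem hx]
      have k1 : φ (t • q + (1 - t) • x) ≤ |Φ| := (le_abs_self _).trans ((hΦ x hx).trans (le_abs_self _))
      have k0 := hφ0 (t • q + (1 - t) • x)
      calc _ ≤ (jb p ^ (M + 2))⁻¹ * (2 ^ N * (2 ^ N * (2 ^ N * C * Ku))) * (|Φ| * jb p ^ M * 1) := by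
            rw [Pi.one_apply]; gcongr
        _ = 2 ^ N * (2 ^ N * (2 ^ N * Ku)) * |Φ| * C * (jb p ^ 2)⁻¹ := by
            rw [pow_add]; field_simp
    · rw [Set.indicator_of_notMem hx, Set.indicator_of_notMem hx]; simp
  have hint : Integrable (S.indicator (fun _ => 2 ^ N * (2 ^ N * (2 ^ N * Ku)) * |Φ| * C * (jb p ^ 2)⁻¹)) (volume : Measure (Q d)) :=
    (integrable_indicator_iff hSc.measurableSet).2 (integrableOn_const hSc.measure_lt_top.ne)
  refine (norm_integral_le_of_norm_le hint (Filter.Eventually.of_forall hfin)).trans (le_of_eq ?_)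
  rw [integral_indicator hSc.measurableSet, setIntegral_const, smul_eq_mul]
  ring

end inner

section lim
variable {d : ℕ}

lemma In_cont_integrand (t h : ℝ) {u : Q d → ℂ} (hu : Continuous u) (q : Q d) {c : Q d × Q d × Q d → ℂ} (hc : Continuous c) :
    Continuous fun z : Q d × Q d => c (t • q + (1 - t) • z.2, z.1, q - z.2) * ephase h z.1 (q - z.2) * u z.2 := by
  have h1 : Continuous fun z : Q d × Q d => ephase h z.1 (q - z.2) :=
    (ephase_cont h).comp (f := fun z : Q d × Q d => (z.1, q - z.2)) (by fun_prop)
  fun_prop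

lemma In_meas (t h : ℝ) {u : Q d → ℂ} (hu : Continuous u) (q : Q d) {c : Q d × Q d × Q d → ℂ} (hc : Continuous c) :
    AEStronglyMeasurable (fun p => In t h u q c p) (volume : Measure (Q d)) :=
  ((In_cont_integrand t h hu q hc).aestronglyMeasurable (μ := (volume : Measure (Q d)).prod volume)).integral_prod_right'

lemma In_integrable {t h : ℝ} (ht : t ∈ Set.Icc (0 : ℝ) 1) (hh : h ∈ Set.Ioc (0 : ℝ) 1) {u : Q d → ℂ} (hu : IsCc u) (q : Q d) (M : ℕ)
    {φ : Q d → ℝ} (hφ : Continuous φ) (hφ0 : ∀ w, 0 ≤ φ w) {C : ℝ} (hC : 0 ≤ C) {c : Q d × Q d × Q d → ℂ} (hc : Sm c)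
    (hb : Bd (D3 d) (fun x => φ x.1 * jb x.2.1 ^ M) (NI d (M + 2)) C c) : Integrable (fun p => In t h u q c p) := by
  obtain ⟨K, hK, hKb⟩ := inner_bd ht hh hu q M hφ hφ0
  exact (jb_int.const_mul (K * C)).mono' (In_meas t h hu.1.continuous q hc.continuous)
    (Filter.Eventually.of_forall fun p => hKb C c hC hc hb p)

lemma J_lim {t h : ℝ} (ht : t ∈ Set.Icc (0 : ℝ) 1) (hh : h ∈ Set.Ioc (0 : ℝ) 1) {u : Q d → ℂ} (hu : IsCc u) (q : Q d) (M : ℕ)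
    {φ : Q d → ℝ} (hφ : Continuous φ) (hφ0 : ∀ w, 0 ≤ φ w) {C : ℝ} (hC : 0 ≤ C) {cs : ℕ → Q d × Q d × Q d → ℂ} {c : Q d × Q d × Q d → ℂ}
    (hcs : ∀ n, Sm (cs n))
    (hb : ∀ n, Bd (D3 d) (fun x => φ x.1 * jb x.2.1 ^ M) (NI d (M + 2)) C (cs n))
    (hl : ∀ x, Filter.Tendsto (fun n => cs n x) Filter.atTop (nhds (c x))) :
    Filter.Tendsto (fun n => ∫ p, In t h u q (cs n) p) Filter.atTop (nhds (∫ p, In t h u q c p)) := by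
  obtain ⟨K, hK, hKb⟩ := inner_bd ht hh hu q M hφ hφ0
  refine tendsto_integral_of_dominated_convergence (fun p => K * C * (jb p ^ 2)⁻¹)
    (fun n => In_meas t h hu.1.continuous q (hcs n).continuous) (jb_int.const_mul _)
    (fun n => Filter.Eventually.of_forall fun p => hKb C _ hC (hcs n) (hb n) p)
    (Filter.Eventually.of_forall fun p => ?_)
  refine tendsto_integral_of_dominated_convergence
    (fun x => C * (φ (t • q + (1 - t) • x) * jb p ^ M) * ‖u x‖) (fun n => ?_) ?_ (fun n => Filter.Eventually.of_forall fun x => ?_)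
    (Filter.Eventually.of_forall fun x => ?_)
  · exact ((In_cont_integrand t h hu.1.continuous q (hcs n).continuous).comp (Continuous.prodMk_right p)).aestronglyMeasurable
  · refine Continuous.integrable_of_hasCompactSupport ?_ ?_
    · have := hu.1.continuous; fun_prop
    · exact (hu.2.norm).mul_left
  · rw [norm_mul, norm_mul, ephase_norm, mul_one]
    gcongr
    exact (hb n).pt _
  · exact ((hl _).mul_const _).mul_const _
end lim

section inv
variable {d : ℕ}

/-- euclidean model -/
abbrev VQ (d : ℕ) : Type := WithLp 2 (ℝ × EuclideanSpace ℝ (Fin d))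

/-- identification with the product model -/
def eV (d : ℕ) : VQ d → Q d := fun x => (x.fst, WithLp.ofLp x.snd)

lemma eV_mp (d : ℕ) : MeasurePreserving (eV d) volume volume := by
  have h1 := WithLp.volume_preserving_ofLp ℝ (EuclideanSpace ℝ (Fin d))
  have h2 := (MeasurePreserving.id (volume : Measure ℝ)).prod (PiLp.volume_preserving_ofLp (Fin d))
  exact h2.comp h1

/-- homeomorphism version -/
def eH (d : ℕ) : VQ d ≃ₜ Q d where
  toFun := eV d
  invFun := fun q => WithLp.toLp 2 (q.1, WithLp.toLp 2 q.2)
  left_inv := fun x => rfl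
  right_inv := fun x => rfl
  continuous_toFun := by unfold eV; fun_prop
  continuous_invFun := by fun_prop

lemma eV_emb (d : ℕ) : MeasurableEmbedding (eV d) := (eH d).measurableEmbedding

lemma eV_inner (v w : VQ d) : inner ℝ v w = qdot (eV d v) (eV d w) := by
  simp [qdot, eV, PiLp.inner_apply, mul_comm]

lemma eV_zero : eV d 0 = 0 := rfl

lemma finrank_Q : Module.finrank ℝ (Q d) = d + 1 := by simp [add_comm]

lemma ephase_smul {h : ℝ} (hh : h ≠ 0) (p y : Q d) :
    ephase h ((-(2 * Real.pi * h)) • p) y = Complex.exp (((-2 * Real.pi * qdot y p : ℝ) : ℂ) * Complex.I) := by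
  rw [ephase]
  congr 1
  have : qdot ((-(2 * Real.pi * h)) • p) y = -(2 * Real.pi * h) * qdot y p := by
    simp only [qdot, Prod.smul_fst, Prod.smul_snd, Pi.smul_apply, smul_eq_mul, mul_add, Finset.mul_sum]
    congr 1
    · ring
    · refine Finset.sum_congr rfl fun i _ => by ring
  rw [this]
  have : (h : ℂ) ≠ 0 := by exact_mod_cast hh
  push_cast
  field_simp

open scoped FourierTransform in
lemma inversion {h : ℝ} (hh : 0 < h) {H : Q d → ℂ} (hc : Continuous H) (hi : Integrable H)
    (hi' : Integrable fun p : Q d => ∫ y, ephase h p y * H y) :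
    ∫ p : Q d, ∫ y, ephase h p y * H y = ((2 * Real.pi * h) ^ (d + 1) : ℝ) * H 0 := by
  set F : Q d → ℂ := fun p : Q d => ∫ y, ephase h p y * H y with hF
  set f : VQ d → ℂ := H ∘ eV d with hf
  have h0 : -(2 * Real.pi * h) ≠ 0 := by have := Real.pi_pos; exact neg_ne_zero.2 (by positivity)
  have e1 : (𝓕 f : VQ d → ℂ) = fun w => F ((-(2 * Real.pi * h)) • eV d w) := by
    funext w
    rw [Real.fourier_eq']
    simp only [hF]
    rw [← (eV_mp d).integral_comp (eV_emb d)]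
    congr 1; funext v
    rw [ephase_smul hh.ne', eV_inner]; rfl
  have hfi : Integrable f := ((eV_mp d).integrable_comp_emb (eV_emb d)).2 hi
  have hFi : Integrable (𝓕 f : VQ d → ℂ) := by
    rw [e1]
    exact ((eV_mp d).integrable_comp_emb (eV_emb d)).2 ((integrable_comp_smul_iff volume F h0).2 hi')
  have hfc : Continuous f := hc.comp (eH d).continuous
  have key := hfi.fourierInv_fourier_eq hFi (v := 0) hfc.continuousAt
  rw [Real.fourierInv_eq'] at key
  simp only [inner_zero_right, mul_zero, Complex.ofReal_zero, zero_mul, Complex.exp_zero, one_smul] at key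
  rw [e1] at key
  rw [(eV_mp d).integral_comp (eV_emb d) (fun p => F ((-(2 * Real.pi * h)) • p)), Measure.integral_comp_smul, finrank_Q] at key
  have e2 : |((-(2 * Real.pi * h)) ^ (d + 1))⁻¹| = ((2 * Real.pi * h) ^ (d + 1))⁻¹ := by
    rw [abs_inv, abs_pow, abs_neg, abs_of_nonneg (by have := Real.pi_pos; positivity)]
  rw [e2] at key
  have hne : ((2 * Real.pi * h) ^ (d + 1) : ℝ) ≠ 0 := by have := Real.pi_pos; positivity
  have : H 0 = f 0 := rfl
  rw [this, ← key, Complex.real_smul, ← mul_assoc, ← Complex.ofReal_mul, mul_inv_cancel₀ hne]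
  simp
end inv

section comp
variable {d : ℕ}

lemma pint_cont {X : Type*} [TopologicalSpace X] [FirstCountableTopology X] [LocallyCompactSpace X]
    {f : X → Q d → ℂ} (hf : Continuous f.uncurry) {K : Set (Q d)} (hK : IsCompact K) (h0 : ∀ x y, y ∉ K → f x y = 0) :
    Continuous fun x => ∫ y, f x y := by
  have := continuous_parametric_integral_of_continuous (μ := (volume : Measure (Q d))) hf hK
  convert this using 2 with x
  exact (setIntegral_eq_integral_of_forall_compl_eq_zero fun y hy => h0 x y hy).symm

lemma swap_cs {f : Q d → Q d → ℂ} (hf : Continuous f.uncurry) {K K' : Set (Q d)} (hK : IsCompact K) (hK' : IsCompact K')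
    (h0 : ∀ x y, x ∉ K → f x y = 0) (h0' : ∀ x y, y ∉ K' → f x y = 0) :
    ∫ x, ∫ y, f x y = ∫ y, ∫ x, f x y := by
  refine integral_integral_swap_of_hasCompactSupport hf (HasCompactSupport.intro (hK.prod hK') ?_)
  rintro ⟨x, y⟩ hxy
  rw [Set.mem_prod, not_and_or] at hxy
  rcases hxy with h | h
  · exact h0 x y h
  · exact h0' x y h

lemma ephase_split (h : ℝ) (p ζ v : Q d) (hh : h ≠ 0) :
    ee (v, ζ) = ephase h (p + h • ζ) v * ephase h p (-v) := by
  have h' : (h : ℂ) ≠ 0 := by exact_mod_cast hh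
  rw [ee, ephase, ephase, ← Complex.exp_add]
  congr 1
  have : qdot ζ v = (qdot (p + h • ζ) v + qdot p (-v)) / h := by
    simp only [qdot, Prod.fst_add, Prod.snd_add, Prod.smul_fst, Prod.smul_snd, Pi.add_apply, Pi.smul_apply,
      smul_eq_mul, Prod.fst_neg, Prod.snd_neg, Pi.neg_apply, add_mul, Finset.sum_add_distrib, mul_neg, Finset.sum_neg_distrib,
      mul_assoc, ← Finset.mul_sum]
    field_simp
    ring
  simp only [this]
  push_cast
  field_simp

lemma ephase_mul (h : ℝ) (p v w : Q d) : ephase h p v * ephase h p w = ephase h p (v + w) := by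
  rw [ephase, ephase, ephase, ← Complex.exp_add]
  congr 1
  have : qdot p (v + w) = qdot p v + qdot p w := by
    simp only [qdot, Prod.fst_add, Prod.snd_add, Pi.add_apply, mul_add, Finset.sum_add_distrib]; ring
  rw [this]; push_cast; ring

/-- partial integral -/
def GG (h : ℝ) (g : Q d × Q d × Q d → ℂ) (w v : Q d) : ℂ := ∫ ξ : Q d, ephase h ξ v * g (w, ξ, v)

lemma bb_compact {h : ℝ} (hh : 0 < h) (k : ℕ) {g : Q d × Q d × Q d → ℂ} (hg : Sm g) {A B : Set (Q d)} (hA : IsCompact A)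
    (hB : IsCompact B) (gA : ∀ w p v, v ∉ A → g (w, p, v) = 0) (gB : ∀ w p v, p ∉ B → g (w, p, v) = 0) (w p : Q d) :
    bb d k h g (w, p) = (((2 * Real.pi * h) ^ (d + 1) : ℝ) : ℂ)⁻¹ * ∫ v : Q d, ephase h p (-v) * GG h g w v := by
  have hs : HasCompactSupport (fun y : Q d × Q d => g (Lh d h ((w, p), y))) := by
    have hB' : IsCompact ((fun ξ : Q d => h⁻¹ • (ξ - p)) '' B) := hB.image (by fun_prop)
    refine HasCompactSupport.intro (hA.prod hB') ?_
    rintro ⟨v, ζ⟩ hx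
    rw [Lh_apply]
    rw [Set.mem_prod, not_and_or] at hx
    rcases hx with hx | hx
    · exact gA _ _ _ hx
    · refine gB _ _ _ fun hm => hx ⟨_, hm, ?_⟩
      simp [smul_smul, inv_mul_cancel₀ hh.ne']
  have hsm : Sm (fun y : Q d × Q d => g (Lh d h ((w, p), y))) := hg.sl h (w, p)
  rw [bb, Osc, ← lk_ibp k hsm hs]
  have hint : Integrable (fun y : Q d × Q d => ee y * g (Lh d h ((w, p), y))) ((volume : Measure (Q d)).prod volume) :=
    (Continuous.integrable_of_hasCompactSupport (ee_sm.continuous.mul hsm.continuous) hs.mul_left)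
  have e1 : ∫ y : Q d × Q d, ee y * g (Lh d h ((w, p), y)) = ∫ v : Q d, ((h ^ (d + 1))⁻¹ : ℝ) • (ephase h p (-v) * GG h g w v) := by
    refine (integral_prod _ hint).trans ?_
    congr 1; funext v
    have : (fun ζ : Q d => ee (v, ζ) * g (Lh d h ((w, p), (v, ζ)))) =
        fun ζ : Q d => (fun ξ : Q d => ephase h p (-v) * (ephase h (p + ξ) v * g (w, p + ξ, v))) (h • ζ) := by
      funext ζ
      rw [ephase_split h p ζ v hh.ne', Lh_apply]; ring
    rw [this, Measure.integral_comp_smul volume (fun ξ : Q d => ephase h p (-v) * (ephase h (p + ξ) v * g (w, p + ξ, v))) h,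
      finrank_Q, abs_of_nonneg (by positivity)]
    congr 1
    rw [integral_const_mul, GG, integral_add_left_eq_self (fun ξ : Q d => ephase h ξ v * g (w, ξ, v)) p]
  rw [e1, integral_smul, c0, Complex.real_smul, ← mul_assoc]
  congr 1
  push_cast
  rw [← mul_inv, ← mul_pow]

lemma J_compact {t h : ℝ} (ht : t ∈ Set.Icc (0 : ℝ) 1) (hh : h ∈ Set.Ioc (0 : ℝ) 1) {u : Q d → ℂ} (hu : IsCc u) (q : Q d) (k : ℕ)
    {g : Q d × Q d × Q d → ℂ} (hg : Sm g) {A B : Set (Q d)} (hA : IsCompact A)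
    (hB : IsCompact B) (gA : ∀ w p v, v ∉ A → g (w, p, v) = 0) (gB : ∀ w p v, p ∉ B → g (w, p, v) = 0)
    (hi : Integrable fun p => In t h u q (fun x => bb d k h g (x.1, x.2.1)) p) :
    ∫ p, In t h u q g p = ∫ p, In t h u q (fun x => bb d k h g (x.1, x.2.1)) p := by
  have hgc := hg.continuous
  have huc := hu.1.continuous
  have hec := ephase_cont (d := d) h
  have hpos : ((2 * Real.pi * h) ^ (d + 1) : ℝ) ≠ 0 := by have := Real.pi_pos; have := hh.1; positivity
  set S := tsupport u with hS
  have hSc : IsCompact S := hu.2.isCompact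
  have hu0 : ∀ x, x ∉ S → u x = 0 := fun x hx => image_eq_zero_of_notMem_tsupport hx
  have hGc : Continuous fun z : Q d × Q d => GG h g z.1 z.2 := by
    have h1 : Continuous fun z : (Q d × Q d) × Q d => ephase h z.2 z.1.2 :=
      hec.comp (f := fun z : (Q d × Q d) × Q d => (z.2, z.1.2)) (by fun_prop)
    have h2 : Continuous fun z : (Q d × Q d) × Q d => ephase h z.2 z.1.2 * g (z.1.1, z.2, z.1.2) := by fun_prop
    have h3 := pint_cont (f := fun (z : Q d × Q d) (ξ : Q d) => ephase h ξ z.2 * g (z.1, ξ, z.2)) h2 hB (by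
      intro z ξ hξ
      rw [gB _ _ _ hξ, mul_zero])
    exact h3
  have hG0 : ∀ w v, v ∉ A → GG h g w v = 0 := by
    intro w v hv
    rw [GG]
    simp [gA _ _ _ hv]
  obtain ⟨H, hH⟩ : ∃ H : Q d → ℂ, H = fun y => ∫ x : Q d, GG h g (t • q + (1 - t) • x) (q - x - y) * u x := ⟨_, rfl⟩
  have hcomp : ∀ {α β : Q d × Q d → Q d}, Continuous α → Continuous β → Continuous fun z => GG h g (α z) (β z) := by
    intro α β hα hβ
    exact Continuous.comp (g := fun z : Q d × Q d => GG h g z.1 z.2) (f := fun z => (α z, β z)) hGc (hα.prodMk hβ)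
  have hHc : Continuous H := by
    have h1 : Continuous fun z : Q d × Q d => GG h g (t • q + (1 - t) • z.2) (q - z.2 - z.1) :=
      hcomp (α := fun z : Q d × Q d => t • q + (1 - t) • z.2) (β := fun z : Q d × Q d => q - z.2 - z.1) (by fun_prop) (by fun_prop)
    have h2 : Continuous fun z : Q d × Q d => GG h g (t • q + (1 - t) • z.2) (q - z.2 - z.1) * u z.2 :=
      h1.mul (huc.comp continuous_snd)
    have h3 := pint_cont (f := fun (y : Q d) (x : Q d) => GG h g (t • q + (1 - t) • x) (q - x - y) * u x) h2 hSc (by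
      intro y x hx
      rw [hu0 x hx, mul_zero])
    rw [hH]
    exact h3
  obtain ⟨K, hK⟩ : ∃ K, K = ((fun z : Q d × Q d => q - z.1 - z.2) '' (S ×ˢ A)) := ⟨_, rfl⟩
  have hKc : IsCompact K := hK ▸ (hSc.prod hA).image (by fun_prop)
  have hK0 : ∀ x y, y ∉ K → GG h g (t • q + (1 - t) • x) (q - x - y) * u x = 0 := by
    intro x y hy
    by_cases hx : x ∈ S
    · rw [hG0, zero_mul]
      intro hv
      exact hy (hK ▸ ⟨(x, q - x - y), ⟨hx, hv⟩, by simp⟩)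
    · rw [hu0 x hx, mul_zero]
  have hHs : HasCompactSupport H := HasCompactSupport.intro hKc fun y hy => by
    simp only [hH, hK0 _ y hy, integral_zero]
  have hHi : Integrable H := hHc.integrable_of_hasCompactSupport hHs
  have e1 : ∀ p, In t h u q (fun x => bb d k h g (x.1, x.2.1)) p =
      (((2 * Real.pi * h) ^ (d + 1) : ℝ) : ℂ)⁻¹ * ∫ y : Q d, ephase h p y * H y := by
    intro p
    have e2 : ∀ x : Q d, bb d k h g (t • q + (1 - t) • x, p) * ephase h p (q - x) * u x =
        (((2 * Real.pi * h) ^ (d + 1) : ℝ) : ℂ)⁻¹ * ∫ y : Q d, ephase h p y * (GG h g (t • q + (1 - t) • x) (q - x - y) * u x) := by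
      intro x
      rw [bb_compact hh.1 k hg hA hB gA gB, ← integral_sub_left_eq_self _ volume (q - x), mul_assoc, mul_assoc, ← integral_mul_const]
      congr 2; funext y
      have : ephase h p y = ephase h p (-(q - x - y)) * ephase h p (q - x) := by
        rw [ephase_mul]; congr 1; abel
      rw [this]; ring
    rw [In]
    simp only [e2]
    rw [integral_const_mul]
    congr 1
    rw [swap_cs (K := S) (K' := K) ?_ hSc hKc (fun x y hx => by rw [hu0 x hx, mul_zero, mul_zero]) (fun x y hy => by rw [hK0 x y hy, mul_zero])]
    · congr 1; funext y; rw [integral_const_mul, hH]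
    · have h1 : Continuous fun z : Q d × Q d => GG h g (t • q + (1 - t) • z.1) (q - z.1 - z.2) * u z.1 :=
        (hcomp (α := fun z : Q d × Q d => t • q + (1 - t) • z.1) (β := fun z : Q d × Q d => q - z.1 - z.2) (by fun_prop)
          (by fun_prop)).mul (huc.comp continuous_fst)
      have h2 : Continuous fun z : Q d × Q d => ephase h p z.2 :=
        hec.comp (f := fun z : Q d × Q d => (p, z.2)) (by fun_prop)
      exact h2.mul h1
  have hcne : (((2 * Real.pi * h) ^ (d + 1) : ℝ) : ℂ) ≠ 0 := by exact_mod_cast hpos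
  simp only [e1] at hi ⊢
  have hi' : Integrable fun p : Q d => ∫ y, ephase h p y * H y := by
    have := hi.const_mul (((2 * Real.pi * h) ^ (d + 1) : ℝ) : ℂ)
    simp only [mul_inv_cancel_left₀ hcne] at this
    exact this
  rw [integral_const_mul, inversion hh.1 hHc hHi hi', inv_mul_cancel_left₀ hcne]
  have e3 : H 0 = ∫ x : Q d, ∫ ξ : Q d, g (t • q + (1 - t) • x, ξ, q - x) * ephase h ξ (q - x) * u x := by
    simp only [hH]
    congr 1; funext x
    rw [GG, ← integral_mul_const, sub_zero]
    congr 1; funext ξ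
    ring
  rw [e3, swap_cs (K := S) (K' := B) ?_ hSc hB (fun x y hx => by rw [hu0 x hx, mul_zero]) (fun x y hy => by rw [gB _ _ _ hy, zero_mul, zero_mul])]
  · rfl
  · exact (In_cont_integrand t h huc q hgc).comp continuous_swap
end comp

section fin
variable {d : ℕ}

lemma pr_bd (L : (Q d × Q d × Q d) →L[ℝ] Q d × Q d) (s : J3 d → Option (Option (Fin d) ⊕ Option (Fin d)))
    (hL : ∀ i, L (D3 d i) = (s i).elim 0 (D2 d)) {ω : Q d × Q d → ℝ} {N : ℕ} {C : ℝ} {H : Q d × Q d → ℂ} (hH : Sm H)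
    (hb : Bd (D2 d) ω N C H) : Bd (D3 d) (fun x => ω (L x)) N C (fun x => H (L x)) := by
  classical
  have := Bd.comp (D := D3 d) (D' := D2 d) L 0 (fun i j => if s i = some j then 1 else 0) ?_ 1 le_rfl ?_ hH hb
  · simpa only [zero_add, one_pow, one_mul] using this
  · intro i
    rw [hL]
    cases hs : s i with
    | none => simp
    | some j => simp [ite_smul]
  · intro i
    cases hs : s i with
    | none => simp
    | some j => simp [apply_ite abs]

/-- swap projection -/
def Lvp (d : ℕ) : (Q d × Q d × Q d) →L[ℝ] Q d × Q d :=
  ((ContinuousLinearMap.snd ℝ (Q d) (Q d)).comp (ContinuousLinearMap.snd ℝ (Q d) (Q d × Q d))).prod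
    ((ContinuousLinearMap.fst ℝ (Q d) (Q d)).comp (ContinuousLinearMap.snd ℝ (Q d) (Q d × Q d)))

/-- base projection -/
def Lwp (d : ℕ) : (Q d × Q d × Q d) →L[ℝ] Q d × Q d :=
  (ContinuousLinearMap.fst ℝ (Q d) (Q d × Q d)).prod
    ((ContinuousLinearMap.fst ℝ (Q d) (Q d)).comp (ContinuousLinearMap.snd ℝ (Q d) (Q d × Q d)))

lemma Lvp_apply (x : Q d × Q d × Q d) : Lvp d x = (x.2.2, x.2.1) := rfl
lemma Lwp_apply (x : Q d × Q d × Q d) : Lwp d x = (x.1, x.2.1) := rfl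

/-- index maps -/
def svp (d : ℕ) : J3 d → Option (Option (Fin d) ⊕ Option (Fin d))
  | .inl _ => none
  | .inr (.inl j) => some (.inr j)
  | .inr (.inr j) => some (.inl j)

/-- index maps -/
def swp (d : ℕ) : J3 d → Option (Option (Fin d) ⊕ Option (Fin d))
  | .inl j => some (.inl j)
  | .inr (.inl j) => some (.inr j)
  | .inr (.inr _) => none

lemma vp_bd {ω : Q d × Q d → ℝ} {N : ℕ} {C : ℝ} {H : Q d × Q d → ℂ} (hH : Sm H)
    (hb : Bd (D2 d) ω N C H) : Bd (D3 d) (fun x => ω (x.2.2, x.2.1)) N C (fun x => H (x.2.2, x.2.1)) :=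
  pr_bd (Lvp d) (svp d) (by rintro (j | j | j) <;> rfl) hH hb

lemma wp_bd {ω : Q d × Q d → ℝ} {N : ℕ} {C : ℝ} {H : Q d × Q d → ℂ} (hH : Sm H)
    (hb : Bd (D2 d) ω N C H) : Bd (D3 d) (fun x => ω (x.1, x.2.1)) N C (fun x => H (x.1, x.2.1)) :=
  pr_bd (Lwp d) (swp d) (by rintro (j | j | j) <;> rfl) hH hb

/-- cut-off amplitude -/
def gc (g : Q d × Q d × Q d → ℂ) (n : ℕ) : Q d × Q d × Q d → ℂ :=
  (fun x => (cut n : Q d × Q d → ℂ) (x.2.2, x.2.1)) * g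

lemma cutc_sm (n : ℕ) : Sm (fun x : Q d × Q d × Q d => (cut n : Q d × Q d → ℂ) (x.2.2, x.2.1)) :=
  ContDiff.comp (g := (cut n : Q d × Q d → ℂ)) (cut_sm n) (Lvp d).contDiff

lemma gc_sm {g : Q d × Q d × Q d → ℂ} (hg : Sm g) (n : ℕ) : Sm (gc g n) := (cutc_sm n).mul' hg

lemma gc_bd (d N : ℕ) : ∃ K, 0 ≤ K ∧ ∀ (n : ℕ) (ω : Q d × Q d × Q d → ℝ) (g : Q d × Q d × Q d → ℂ), Sm g → Bd (D3 d) ω N 1 g →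
    Bd (D3 d) ω N K (gc g n) := by
  obtain ⟨K, hK, h⟩ := cut_unif (E := Q d × Q d) (D2 d) N
  refine ⟨2 ^ N * (K * 1), by positivity, fun n ω g hg hb => ?_⟩
  have := (vp_bd (cut_sm n) (h n)).mul (cutc_sm n) hg hb
  simp only [one_mul] at this
  exact this

lemma gc_W {M : ℕ} {g : Q d × Q d × Q d → ℂ} (hg : W d M g) (n : ℕ) : W d M (gc g n) := by
  refine ⟨gc_sm hg.1 n, fun N => ?_⟩
  obtain ⟨φ, h1, h2, h3⟩ := hg.2 N
  obtain ⟨K, hK, h⟩ := gc_bd d N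
  refine ⟨fun w => K * φ w, by fun_prop, fun w => mul_nonneg hK (h2 w), (h n _ g hg.1 h3).mono fun x => le_of_eq ?_⟩
  ring

lemma gc_one (g : Q d × Q d × Q d → ℂ) (x : Q d × Q d × Q d) :
    ∀ᶠ n : ℕ in Filter.atTop, gc g n =ᶠ[nhds x] g := by
  filter_upwards [cut_one (E := Q d × Q d) (x.2.2, x.2.1)] with n hn
  have ht : Filter.Tendsto (fun y : Q d × Q d × Q d => (y.2.2, y.2.1)) (nhds x) (nhds (x.2.2, x.2.1)) :=
    (Lvp d).continuous.continuousAt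
  filter_upwards [ht.eventually hn] with y hy
  simp only [gc, Pi.mul_apply, hy, one_mul]

lemma bb_lim {M k : ℕ} (hk : M + 2 ≤ k) {h : ℝ} (hh : h ∈ Set.Ioc (0 : ℝ) 1) {g : Q d × Q d × Q d → ℂ} (hg : W d M g) (x : Q d × Q d) :
    Filter.Tendsto (fun n => bb d k h (gc g n) x) Filter.atTop (nhds (bb d k h g x)) := by
  obtain ⟨φ, h1, h2, h3⟩ := hg.2 (NN d k)
  obtain ⟨K, hK, hKb⟩ := gc_bd d (NN d k)
  have hC : 0 ≤ K * (φ x.1 * (PK d * jb x.2) ^ M) := by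
    have := PK_one (d := d); have := jb_pos x.2; have := h2 x.1; positivity
  refine Filter.Tendsto.const_mul _ (osc_lim hk hC (fun n => (gc_sm hg.1 n).sl h x)
    (fun n => slice_bd hh (gc_sm hg.1 n) h2 hK (hKb n _ g hg.1 h3) x) fun y => ?_)
  filter_upwards [gc_one g (Lh d h (x, y))] with n hn
  have ht : Filter.Tendsto (fun z : Q d × Q d => Lh d h (x, z)) (nhds y) (nhds (Lh d h (x, y))) := by
    refine Continuous.continuousAt ?_
    fun_prop
  exact ht.eventually hn

lemma J_eq {t h : ℝ} (ht : t ∈ Set.Icc (0 : ℝ) 1) (hh : h ∈ Set.Ioc (0 : ℝ) 1) {u : Q d → ℂ} (hu : IsCc u) (q : Q d) {M k : ℕ}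
    (hk : M + 2 ≤ k) {g : Q d × Q d × Q d → ℂ} (hg : W d M g) :
    ∫ p, In t h u q g p = ∫ p, In t h u q (fun x => bb d k h g (x.1, x.2.1)) p := by
  obtain ⟨φ, h1, h2, h3⟩ := hg.2 (NI d (M + 2) + NN d k)
  obtain ⟨K, hK, hKb⟩ := gc_bd d (NI d (M + 2) + NN d k)
  obtain ⟨Kb, hKb0, hbb⟩ := bb_wbd (d := d) hk hh
  have bn := fun n => hKb n _ g hg.1 h3
  have bbn : ∀ n, Bd (D3 d) (fun x => φ x.1 * jb x.2.1 ^ M) (NI d (M + 2)) (Kb * K) (fun x => bb d k h (gc g n) (x.1, x.2.1)) :=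
    fun n => wp_bd (bb_sm hk hh (gc_W hg n)) (hbb (NI d (M + 2)) φ K (gc g n) h2 hK (gc_W hg n) (bn n))
  have sbn : ∀ n, Sm (fun x : Q d × Q d × Q d => bb d k h (gc g n) (x.1, x.2.1)) :=
    fun n => ContDiff.comp (g := bb d k h (gc g n)) (bb_sm hk hh (gc_W hg n)) (Lwp d).contDiff
  have l1 := J_lim ht hh hu q M h1 h2 hK (cs := gc g) (c := g) (fun n => gc_sm hg.1 n)
    (fun n => (bn n).mono_N (Nat.le_add_right _ _)) (fun x => tendsto_const_nhds.congr' (by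
      filter_upwards [gc_one g x] with n hn using hn.eq_of_nhds.symm))
  have l2 := J_lim ht hh hu q M h1 h2 (mul_nonneg hKb0 hK) (cs := fun n x => bb d k h (gc g n) (x.1, x.2.1))
    (c := fun x => bb d k h g (x.1, x.2.1)) sbn bbn (fun x => bb_lim hk hh hg _)
  have e : ∀ n, ∫ p, In t h u q (gc g n) p = ∫ p, In t h u q (fun x => bb d k h (gc g n) (x.1, x.2.1)) p := by
    intro n
    have hcs : IsCompact (tsupport (cut n : Q d × Q d → ℂ)) := (cut_cs (E := Q d × Q d) n).isCompact
    refine J_compact ht hh hu q k (gc_sm hg.1 n) (hcs.image continuous_fst) (hcs.image continuous_snd) ?_ ?_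
      (In_integrable ht hh hu q M h1 h2 (mul_nonneg hKb0 hK) (sbn n) (bbn n))
    · intro w p v hv
      have : (v, p) ∉ tsupport (cut n : Q d × Q d → ℂ) := fun hm => hv ⟨_, hm, rfl⟩
      simp [gc, image_eq_zero_of_notMem_tsupport this]
    · intro w p v hv
      have : (v, p) ∉ tsupport (cut n : Q d × Q d → ℂ) := fun hm => hv ⟨_, hm, rfl⟩
      simp [gc, image_eq_zero_of_notMem_tsupport this]
  simp only [e] at l1
  exact tendsto_nhds_unique l1 l2

lemma TT_op {f : ℝ → ℝ} {m t : ℝ} (hf : GoodF f) (ht : t ∈ Set.Icc (0 : ℝ) 1) {h : ℝ} (hh : h ∈ Set.Ioc (0 : ℝ) 1)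
    {a : Q d × Q d × Q d → ℂ} (ha : IsAmp f m t a) {u : Q d → ℂ} (hu : IsCc u) (q : Q d) :
    OpAmp h a u q = Op h t (TT d m t h a) u q := by
  have := J_eq ht hh hu q le_rfl (tl_W hf ht ha)
  have e : ∀ p, In t h u q (tl t a) p = ∫ q' : Q d, a (q, p, q') * ephase h p (q - q') * u q' := by
    intro p
    rw [In]
    congr 1; funext x
    have : Psi d t (t • q + (1 - t) • x, p, q - x) = (q, p, x) := by
      rw [Psi_apply]
      simp only [Prod.mk.injEq, true_and]
      constructor
      · module
      · module
    rw [tl, this]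
  simp only [e] at this
  rw [OpAmp, Op, this]; rfl
end fin

/-- every amplitude can be quantized by a symbol, with a linear continuous
assignment `a ↦ b^t`, uniformly in `ℏ ∈ (0, 1]`. -/
theorem statement4 (d : ℕ) (f : ℝ → ℝ) (hf : GoodF f) (m t : ℝ)
    (ht : t ∈ Set.Icc (0 : ℝ) 1) :
    ∃ T : ℝ → (Q d × Q d × Q d → ℂ) → (Q d × Q d → ℂ),
      (∀ ℏ ∈ Set.Ioc (0 : ℝ) 1, ∀ a : Q d × Q d × Q d → ℂ, IsAmp f m t a →
        IsSymbol f m (T ℏ a) ∧ ∀ u : Q d → ℂ, IsCc u → ∀ q : Q d,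
          OpAmp ℏ a u q = Op ℏ t (T ℏ a) u q) ∧
      (∀ ℏ ∈ Set.Ioc (0 : ℝ) 1, ∀ a b : Q d × Q d × Q d → ℂ,
        IsAmp f m t a → IsAmp f m t b → T ℏ (a + b) = T ℏ a + T ℏ b) ∧
      (∀ ℏ ∈ Set.Ioc (0 : ℝ) 1, ∀ (c : ℂ) (a : Q d × Q d × Q d → ℂ),
        IsAmp f m t a → T ℏ (c • a) = c • T ℏ a) ∧
      (∀ N : ℕ, ∃ C > (0 : ℝ), ∃ N' : ℕ, ∀ ℏ ∈ Set.Ioc (0 : ℝ) 1,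
        ∀ a : Q d × Q d × Q d → ℂ, IsAmp f m t a →
          symNorm f m N (T ℏ a) ≤ C * ampNorm f m t N' a) := by
  refine ⟨fun h a => TT d m t h a, fun h hh a ha => ⟨TT_symbol hf ht hh ha, fun u hu q => TT_op hf ht hh ha hu q⟩,
    fun h hh a b ha hb => ?_, fun h hh c a ha => ?_, fun N => TT_norm hf ht N⟩
  · exact bb_add le_rfl (tl_W hf ht ha) (tl_W hf ht hb) hh
  · exact bb_smul (tl_W hf ht ha).1 h c

end
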